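/- There exists A such that for every odd integer a ≥ A the following holds, with r = ⌊a·exp(−√(log a))⌋: there exist real numbers ε_a, ε″_a, ω_a, φ_a with 0 < ε″_a < ε_a ≤ 2^{6(r+1)}/r^{2(a−6r)} < 1 and φ_a ≢ π/2 (mod π), and real sequences u_n → 0, v_n → 0, w_n → 0 (as n → ∞) such that for all sufficiently large n, |S_n| = ε_a^{n(1+u_n)} and |S″_n| = (ε″_a)^{n(1+v_n)} · |cos(nω_a + φ_a) + w_n|. -/

import Mathlib

open scoped BigOperators

/-- Real Pochhammer product: (x)_m = x(x+1)⋯(x+m−1). -/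
noncomputable def poch (x : ℝ) (m : ℕ) : ℝ := ∏ j ∈ Finset.range m, (x + j)

/-- The rational function of t appearing in the series defining S_n and S″_n. -/
noncomputable def Sfun (a r n : ℕ) : ℝ → ℝ := fun t =>
  (poch (t - ((2 * r + 1) * n : ℕ)) (2 * r * n)) ^ 3 *
    (poch (t + (n : ℕ) + 1) (2 * r * n)) ^ 3 /
      (poch (t - (n : ℕ)) (2 * n + 1)) ^ a

/-- S_n = (2n)!^{a−6r} Σ_{t=n+1}^∞ (t−(2r+1)n)_{2rn}³ (t+n+1)_{2rn}³ / (t−n)_{2n+1}^a. -/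
noncomputable def S (a r n : ℕ) : ℝ :=
  ((2 * n).factorial : ℝ) ^ (a - 6 * r) * ∑' m : ℕ, Sfun a r n ((n : ℝ) + 1 + m)

/-- S″_n = ½ (2n)!^{a−6r} Σ_{t=n+1}^∞ d²/dt² [ (t−(2r+1)n)_{2rn}³ (t+n+1)_{2rn}³ / (t−n)_{2n+1}^a ]. -/
noncomputable def Sder (a r n : ℕ) : ℝ :=
  (1 / 2) * ((2 * n).factorial : ℝ) ^ (a - 6 * r) *
    ∑' m : ℕ, deriv (deriv (Sfun a r n)) ((n : ℝ) + 1 + m)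

section SecPA
open Complex MeasureTheory Filter Topology Set

namespace Z18

lemma line_integrable {g : ℝ → ℂ} (hc : Continuous g) {C R : ℝ}
    (h : ∀ s, R ≤ |s| → ‖g s‖ ≤ C / s ^ 2) : Integrable g := by
  obtain ⟨B, hB⟩ := (isCompact_Icc (a := -(max R 1)) (b := max R 1)).exists_bound_of_continuousOn
    hc.continuousOn
  set M := max R 1 with hM
  have hM1 : 1 ≤ M := le_max_right _ _
  have hB0 : 0 ≤ B := (norm_nonneg _).trans (hB 0 (by constructor <;> linarith))
  have key : ∀ s, ‖g s‖ ≤ (2 * |C| + B * (1 + M ^ 2)) * (1 + s ^ 2)⁻¹ := by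
    intro s
    have hp : 0 < 1 + s ^ 2 := by positivity
    rw [← div_eq_mul_inv, le_div_iff₀ hp]
    by_cases hs : |s| ≤ M
    · have h1 := hB s (abs_le.1 hs)
      have h2 : s ^ 2 ≤ M ^ 2 := by rw [← sq_abs]; gcongr
      have : ‖g s‖ * (1 + s ^ 2) ≤ B * (1 + M ^ 2) := by gcongr
      nlinarith [abs_nonneg C]
    · push Not at hs
      have h1 := h s ((le_max_left R 1).trans hs.le)
      have hs1 : 1 ≤ s ^ 2 := by rw [← sq_abs]; nlinarith
      have h3 : ‖g s‖ ≤ |C| / s ^ 2 := h1.trans (by gcongr; exact le_abs_self C)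
      rw [le_div_iff₀ (by linarith)] at h3
      have : 0 ≤ B * (1 + M ^ 2) := by positivity
      nlinarith [norm_nonneg (g s)]
  exact (integrable_inv_one_add_sq.const_mul _).mono' hc.aestronglyMeasurable
    (Eventually.of_forall key)

lemma norm_ge_abs_im' (q s : ℝ) : |s| ≤ ‖(q : ℂ) + s * I‖ := by
  simpa using Complex.abs_im_le_norm ((q : ℂ) + s * I)

lemma line_zero {D : ℂ → ℂ} {q C R₀ : ℝ} (hD : ∀ t : ℂ, q ≤ t.re → DifferentiableAt ℂ D t)
    (hb : ∀ t : ℂ, q ≤ t.re → R₀ ≤ ‖t‖ → ‖D t‖ ≤ C / ‖t‖ ^ 2) :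
    Integrable (fun s : ℝ => D (q + s * I)) ∧ ∫ s : ℝ, D (q + s * I) = 0 := by
  have hcont : Continuous (fun s : ℝ => D (q + s * I)) := by
    rw [continuous_iff_continuousAt]
    intro s
    have := (hD (q + s * I) (by simp)).continuousAt
    exact ContinuousAt.comp (f := fun s : ℝ => (q : ℂ) + s * I) this (by fun_prop)
  have hint : Integrable (fun s : ℝ => D (q + s * I)) := by
    apply line_integrable hcont (C := |C|) (R := max R₀ 1)
    intro s hs
    have h1 := norm_ge_abs_im' q s
    have hs1 : 1 ≤ |s| := (le_max_right _ _).trans hs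
    refine (hb _ (by simp) ((le_max_left _ _).trans (hs.trans h1))).trans ?_
    have : s ^ 2 ≤ ‖(q : ℂ) + s * I‖ ^ 2 := by rw [← sq_abs]; gcongr
    have : 0 < s ^ 2 := by rw [← sq_abs]; positivity
    gcongr
    exact le_abs_self C
  refine ⟨hint, ?_⟩
  have hlim : Tendsto (fun R : ℝ => ∫ s in (-R)..R, D (q + s * I)) atTop
      (𝓝 (∫ s : ℝ, D (q + s * I))) :=
    intervalIntegral_tendsto_integral hint tendsto_neg_atTop_atBot tendsto_id
  refine tendsto_nhds_unique hlim ?_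
  rw [tendsto_zero_iff_norm_tendsto_zero]
  have hz : Tendsto (fun R : ℝ => |C| * (4 + |q| * 2) / R) atTop (𝓝 0) :=
    tendsto_const_nhds.div_atTop tendsto_id
  refine squeeze_zero' (Eventually.of_forall fun _ => norm_nonneg _) ?_ hz
  filter_upwards [eventually_ge_atTop (max R₀ 1), eventually_ge_atTop q] with R hR hqR
  have hR1 : 1 ≤ R := (le_max_right _ _).trans hR
  have hR0 : R₀ ≤ R := (le_max_left _ _).trans hR
  have hRp : 0 < R := by linarith
  have hrect := Complex.integral_boundary_rect_eq_zero_of_differentiableOn D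
    (⟨q, -R⟩ : ℂ) (⟨R, R⟩ : ℂ) (by
      intro t ht
      refine (hD t ?_).differentiableWithinAt
      have := ht.1
      simp only [mem_preimage, uIcc_of_le hqR] at this
      exact this.1)
  simp only [smul_eq_mul] at hrect
  have bd : ∀ t : ℂ, q ≤ t.re → R ≤ ‖t‖ → ‖D t‖ ≤ |C| / R ^ 2 := by
    intro t h1 h2
    refine (hb t h1 (hR0.trans h2)).trans ?_
    gcongr
    exact le_abs_self C
  have e1 : ‖∫ x : ℝ in q..R, D (x + (-R : ℝ) * I)‖ ≤ |C| / R ^ 2 * |R - q| := by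
    apply intervalIntegral.norm_integral_le_of_norm_le_const
    intro x hx
    rw [uIoc_of_le hqR] at hx
    apply bd
    · simpa using hx.1.le
    · have := norm_ge_abs_im' x (-R)
      rwa [abs_neg, abs_of_pos hRp] at this
  have e2 : ‖∫ x : ℝ in q..R, D (x + (R : ℝ) * I)‖ ≤ |C| / R ^ 2 * |R - q| := by
    apply intervalIntegral.norm_integral_le_of_norm_le_const
    intro x hx
    rw [uIoc_of_le hqR] at hx
    apply bd
    · simpa using hx.1.le
    · have := norm_ge_abs_im' x (R)
      rwa [abs_of_pos hRp] at this
  have e3 : ‖∫ x : ℝ in (-R)..R, D ((R : ℝ) + x * I)‖ ≤ |C| / R ^ 2 * |R - (-R)| := by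
    apply intervalIntegral.norm_integral_le_of_norm_le_const
    intro x hx
    apply bd
    · simpa using hqR
    · have := Complex.abs_re_le_norm ((R : ℂ) + x * I)
      simpa [abs_of_pos hRp] using this
  have e4 : I * ∫ x : ℝ in (-R)..R, D (q + x * I) =
      (∫ x : ℝ in q..R, D (x + (-R : ℝ) * I)) - (∫ x : ℝ in q..R, D (x + (R : ℝ) * I)) +
      I * ∫ x : ℝ in (-R)..R, D ((R : ℝ) + x * I) := by
    linear_combination -hrect
  have e5 : ‖∫ x : ℝ in (-R)..R, D (q + x * I)‖ = ‖I * ∫ x : ℝ in (-R)..R, D (q + x * I)‖ := by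
    simp
  rw [e5, e4]
  refine (norm_add_le _ _).trans ?_
  rw [norm_mul, norm_I, one_mul]
  have e6 := norm_sub_le (∫ x : ℝ in q..R, D (x + (-R : ℝ) * I)) (∫ x : ℝ in q..R, D (x + (R : ℝ) * I))
  have a1 : |R - q| ≤ R + |q| := by
    have := abs_sub R q; rwa [abs_of_pos hRp] at this
  have a2 : |R - -R| = 2 * R := by rw [abs_of_pos] <;> linarith
  rw [a2] at e3
  have hC : 0 ≤ |C| / R ^ 2 := by positivity
  have a3 : |C| / R ^ 2 * |R - q| ≤ |C| / R ^ 2 * (R + |q|) := by gcongr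
  have a4 : |C| * (4 + |q| * 2) / R = |C| / R ^ 2 * (4 * R + |q| * 2 * R) := by
    field_simp
  rw [a4]
  have : |C| / R ^ 2 * |q| ≤ |C| / R ^ 2 * (|q| * R) := by
    gcongr; nlinarith [abs_nonneg q]
  nlinarith

lemma int_lorentz {d : ℝ} (hd : 0 < d) : (∫ s : ℝ, (-1 : ℂ) / ((s : ℂ) ^ 2 + (d : ℂ) ^ 2)) = -((Real.pi / d : ℝ) : ℂ) := by
  have h1 : ∀ s : ℝ, ((-1 : ℂ) / ((s : ℂ) ^ 2 + (d : ℂ) ^ 2)) = ((-(d ^ 2)⁻¹ * (1 + (s / d) ^ 2)⁻¹ : ℝ) : ℂ) := by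
    intro s
    push_cast
    have : (d : ℂ) ≠ 0 := by exact_mod_cast hd.ne'
    have h2 : (s : ℂ) ^ 2 + d ^ 2 ≠ 0 := by
      have : (0 : ℝ) < s ^ 2 + d ^ 2 := by positivity
      exact_mod_cast this.ne'
    have h3 : 1 + ((s : ℂ) / d) ^ 2 = (s ^ 2 + d ^ 2) / d ^ 2 := by field_simp; ring
    rw [h3]
    field_simp
  simp_rw [h1]
  rw [integral_complex_ofReal, integral_const_mul,
    Measure.integral_comp_div (fun x : ℝ => (1 + x ^ 2)⁻¹) d, integral_univ_inv_one_add_sq]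
  rw [abs_of_pos hd]
  push_cast
  have : (d : ℂ) ≠ 0 := by exact_mod_cast hd.ne'
  simp only [smul_eq_mul]
  push_cast
  field_simp

/-- Cauchy formula on a half plane. -/
lemma cauchy_half {f : ℂ → ℂ} {q C R₀ w : ℝ} (hq : q < w)
    (hf : ∀ t : ℂ, q ≤ t.re → DifferentiableAt ℂ f t)
    (hb : ∀ t : ℂ, q ≤ t.re → R₀ ≤ ‖t‖ → ‖f t‖ ≤ C / ‖t‖ ^ 2) :
    ∫ s : ℝ, f (q + s * I) / (q + s * I - w) = -(2 * Real.pi) * f w := by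
  set d := w - q with hd
  have hdp : 0 < d := by linarith
  set w' : ℝ := q - d with hw'
  set F : ℂ → ℂ := fun t => (t - w') * f t with hF
  have hFd : ∀ t : ℂ, q ≤ t.re → DifferentiableAt ℂ F t := by
    intro t ht
    have := hf t ht
    fun_prop
  set D : ℂ → ℂ := fun t => dslope F w t / (t - w') with hDdef
  have hne' : ∀ t : ℂ, q ≤ t.re → t - w' ≠ 0 := by
    intro t ht h
    have := congrArg Complex.re h
    simp at this; linarith
  have hDd : ∀ t : ℂ, q ≤ t.re → DifferentiableAt ℂ D t := by
    intro t ht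
    have h1 : DifferentiableAt ℂ (dslope F w) t := by
      by_cases htw : t = w
      · subst htw
        have hopen : {t : ℂ | q < t.re} ∈ 𝓝 (w : ℂ) :=
          (isOpen_lt continuous_const Complex.continuous_re).mem_nhds (by simpa using hq)
        have := (Complex.differentiableOn_dslope hopen).2
          (fun t ht => (hFd t (le_of_lt ht)).differentiableWithinAt)
        exact this.differentiableAt hopen
      · exact (differentiableAt_dslope_of_ne htw).2 (hFd t ht)
    exact h1.div (by fun_prop) (hne' t ht)
  have hz := line_zero (D := D) (q := q) (C := 32 * |C| + 4 * ‖F w‖)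
    (R₀ := max (max R₀ 1) (2 * (|w| + |w'|))) hDd (by
    intro t ht hR
    have hR0 : R₀ ≤ ‖t‖ := (le_max_left _ _).trans ((le_max_left _ _).trans hR)
    have hR1 : 1 ≤ ‖t‖ := (le_max_right _ _).trans ((le_max_left _ _).trans hR)
    have hR2 : 2 * (|w| + |w'|) ≤ ‖t‖ := (le_max_right _ _).trans hR
    have b1 : ‖t‖ / 2 ≤ ‖t - w‖ := by
      have := norm_sub_norm_le t (w : ℂ)
      rw [Complex.norm_real, Real.norm_eq_abs] at this
      nlinarith [abs_nonneg w, abs_nonneg w']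
    have b2 : ‖t‖ / 2 ≤ ‖t - w'‖ := by
      have := norm_sub_norm_le t (w' : ℂ)
      rw [Complex.norm_real, Real.norm_eq_abs] at this
      nlinarith [abs_nonneg w, abs_nonneg w']
    have b3 : ‖t - w'‖ ≤ 2 * ‖t‖ := by
      have := norm_sub_le t (w' : ℂ)
      rw [Complex.norm_real, Real.norm_eq_abs] at this
      nlinarith [abs_nonneg w, abs_nonneg w']
    have htw : t ≠ w := by
      rintro rfl
      simp at b1; simp at hR1; 
      have : |w| ≤ 0 := by linarith
      linarith
    have hDt : D t = (F t - F w) / (t - w) / (t - w') := by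
      simp only [hDdef]
      rw [dslope_of_ne _ htw, slope_def_field]
    rw [hDt, norm_div, norm_div, div_div]
    have hFt : ‖F t‖ ≤ 8 * |C| := by
      simp only [hF, norm_mul]
      have h1 := hb t ht hR0
      have h2 : ‖f t‖ ≤ |C| / ‖t‖ ^ 2 := h1.trans (by gcongr; exact le_abs_self C)
      have h3 : ‖t - w'‖ * ‖f t‖ ≤ 2 * ‖t‖ * (|C| / ‖t‖ ^ 2) := by gcongr
      have h4 : 2 * ‖t‖ * (|C| / ‖t‖ ^ 2) = 2 * |C| / ‖t‖ := by
        have : ‖t‖ ≠ 0 := by linarith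
        field_simp
      have h5 : 2 * |C| / ‖t‖ ≤ 2 * |C| := div_le_self (by positivity) hR1
      linarith [abs_nonneg C]
    have h6 : ‖F t - F w‖ ≤ 8 * |C| + ‖F w‖ := (norm_sub_le _ _).trans (by linarith)
    have htp : 0 < ‖t‖ := by linarith
    calc ‖F t - F w‖ / (‖t - w‖ * ‖t - w'‖) ≤ (8 * |C| + ‖F w‖) / (‖t‖ / 2 * (‖t‖ / 2)) := by gcongr
      _ = (32 * |C| + 4 * ‖F w‖) / ‖t‖ ^ 2 := by field_simp; ring)
  have hpt : ∀ s : ℝ, f (q + s * I) / (q + s * I - w) =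
      D (q + s * I) + F w * (-1 / ((s : ℂ) ^ 2 + d ^ 2)) := by
    intro s
    have n1 : (q : ℂ) + s * I - w ≠ 0 := by
      intro h
      have := congrArg Complex.re h
      simp at this; linarith
    have n2 := hne' (q + s * I) (by simp)
    have htw : (q : ℂ) + s * I ≠ w := sub_ne_zero.1 n1
    have hDt : D (q + s * I) = (F (q + s * I) - F w) / (q + s * I - w) / (q + s * I - w') := by
      simp only [hDdef]
      rw [dslope_of_ne _ htw, slope_def_field]
    rw [hDt]
    have h3 : -1 / ((s : ℂ) ^ 2 + d ^ 2) = 1 / ((q + s * I - w) * (q + s * I - w')) := by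
      have : ((q : ℂ) + s * I - w) * (q + s * I - w') = -(s ^ 2 + d ^ 2) := by
        rw [hw', hd]; push_cast
        ring_nf
        simp; ring
      rw [this, div_neg, neg_div]
    rw [h3]
    have h4 : F (q + s * I) = (q + s * I - w') * f (q + s * I) := rfl
    rw [h4]
    field_simp
    ring
  simp_rw [hpt]
  rw [integral_add hz.1, hz.2, integral_const_mul, int_lorentz hdp]
  · have : F w = 2 * d * f w := by
      simp only [hF, hw', hd]; push_cast; ring
    rw [this]
    have : (d : ℂ) ≠ 0 := by exact_mod_cast hdp.ne'
    push_cast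
    field_simp
    ring
  · apply Integrable.const_mul
    apply line_integrable (C := 1) (R := 1)
    · apply Continuous.div (by fun_prop) (by fun_prop)
      intro s h
      have : (0 : ℝ) < s ^ 2 + d ^ 2 := by positivity
      exact this.ne' (by exact_mod_cast h)
    · intro s hs
      have h1 : ((s : ℂ) ^ 2 + d ^ 2) = ((s ^ 2 + d ^ 2 : ℝ) : ℂ) := by push_cast; ring
      rw [norm_div, h1, Complex.norm_real, Real.norm_of_nonneg (by positivity)]
      have : 0 < s ^ 2 := by rw [← sq_abs]; positivity
      simp only [norm_neg, norm_one]
      gcongr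
      nlinarith

end Z18
end SecPA

section SecPB
open Complex MeasureTheory Filter Topology Set

namespace Z18

lemma line_int {f : ℂ → ℂ} {q C R₀ : ℝ}
    (hf : ∀ t : ℂ, q ≤ t.re → DifferentiableAt ℂ f t)
    (hb : ∀ t : ℂ, q ≤ t.re → R₀ ≤ ‖t‖ → ‖f t‖ ≤ C / ‖t‖ ^ 2) :
    Continuous (fun s : ℝ => f (q + s * I)) ∧ Integrable (fun s : ℝ => f (q + s * I)) := by
  refine ⟨?_, (line_zero hf hb).1⟩
  rw [continuous_iff_continuousAt]
  intro s
  have := (hf (q + s * I) (by simp)).continuousAt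
  exact ContinuousAt.comp (f := fun s : ℝ => (q : ℂ) + s * I) this (by fun_prop)

lemma line_ne {q w s : ℝ} (h : q ≠ w) : (q : ℂ) + s * I - w ≠ 0 := by
  intro h'
  have := congrArg Complex.re h'
  simp at this
  exact h (by linarith)

lemma line_norm_ge (q w s : ℝ) : |q - w| ≤ ‖(q : ℂ) + s * I - w‖ := by
  simpa using Complex.abs_re_le_norm ((q : ℂ) + s * I - w)

lemma line_deriv {f : ℂ → ℂ} {q C R₀ w : ℝ} (hq : q < w) (k : ℕ)
    (hf : ∀ t : ℂ, q ≤ t.re → DifferentiableAt ℂ f t)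
    (hb : ∀ t : ℂ, q ≤ t.re → R₀ ≤ ‖t‖ → ‖f t‖ ≤ C / ‖t‖ ^ 2) :
    HasDerivAt (fun x : ℝ => ∫ s : ℝ, f (q + s * I) / (q + s * I - x) ^ (k + 1))
      ((k + 1 : ℂ) * ∫ s : ℝ, f (q + s * I) / (q + s * I - w) ^ (k + 2)) w := by
  obtain ⟨hc, hi⟩ := line_int hf hb
  rw [← integral_const_mul]
  set d := w - q with hd
  have hdp : 0 < d := by linarith
  have hcd : ∀ x : ℝ, q < x → ∀ j : ℕ,
      Continuous (fun s : ℝ => f (q + s * I) / (q + s * I - x) ^ j) := by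
    intro x hx j
    apply hc.div (by fun_prop)
    intro s
    exact pow_ne_zero _ (line_ne hx.ne)
  have hnb : ∀ x : ℝ, x ∈ Ioi (q + d / 2) → ∀ j : ℕ, ∀ s : ℝ,
      ‖f (q + s * I) / (q + s * I - x) ^ j‖ ≤ ((d / 2) ^ j)⁻¹ * ‖f (q + s * I)‖ := by
    intro x hx j s
    have hx' : q + d / 2 < x := hx
    rw [norm_div, norm_pow, div_eq_inv_mul]
    have : d / 2 ≤ ‖(q : ℂ) + s * I - x‖ := by
      refine le_trans ?_ (line_norm_ge q x s)
      rw [abs_sub_comm, abs_of_pos] <;> linarith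
    gcongr
  have hnhds : Ioi (q + d / 2) ∈ 𝓝 w := Ioi_mem_nhds (by linarith)
  have hw : w ∈ Ioi (q + d / 2) := mem_of_mem_nhds hnhds
  refine (hasDerivAt_integral_of_dominated_loc_of_deriv_le
    (F := fun (x : ℝ) (s : ℝ) => f (q + s * I) / ((q : ℂ) + s * I - x) ^ (k + 1))
    (F' := fun (x : ℝ) (s : ℝ) => (k + 1 : ℂ) * (f (q + s * I) / ((q : ℂ) + s * I - x) ^ (k + 2)))
    (bound := fun s : ℝ => (k + 1) * (((d / 2) ^ (k + 2))⁻¹ * ‖f (q + s * I)‖)) hnhds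
    ?_ ?_ ?_ ?_ ?_ ?_).2
  · filter_upwards [hnhds] with x hx
    exact (hcd x (by have : q + d / 2 < x := hx; linarith) _).aestronglyMeasurable
  · exact (hi.norm.const_mul _).mono' (hcd w hq _).aestronglyMeasurable
      (Eventually.of_forall (hnb w hw _))
  · exact (continuous_const.mul (hcd w hq _)).aestronglyMeasurable
  · refine Eventually.of_forall fun s x hx => ?_
    rw [norm_mul]
    have : ‖(k + 1 : ℂ)‖ = k + 1 := by
      have : (k + 1 : ℂ) = ((k + 1 : ℕ) : ℂ) := by push_cast; ring
      rw [this, Complex.norm_natCast]; push_cast; ring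
    rw [this]
    gcongr
    exact hnb x hx _ s
  · exact (hi.norm.const_mul _).const_mul _
  · refine Eventually.of_forall fun s x hx => ?_
    have hx' : q + d / 2 < x := hx
    have hne : (q : ℂ) + s * I - x ≠ 0 := line_ne (by linarith)
    have h1 : HasDerivAt (fun x : ℝ => (q : ℂ) + s * I - x) (-1) x := by
      simpa using (Complex.ofRealCLM.hasDerivAt (x := x)).const_sub ((q : ℂ) + s * I)
    have h2 := (h1.pow (k + 1)).inv (pow_ne_zero _ hne)
    have h3 := h2.const_mul (f (q + s * I))
    simp only [div_eq_mul_inv]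
    refine HasDerivAt.congr_deriv (h3 : HasDerivAt (fun x : ℝ => f (q + s * I) * (((q : ℂ) + s * I - x) ^ (k + 1))⁻¹) _ x) ?_
    simp only [Pi.pow_apply, Nat.add_sub_cancel]
    push_cast
    field_simp
    ring

lemma second_deriv {f : ℂ → ℂ} {g : ℝ → ℝ} {q C R₀ w : ℝ} (hq : q < w)
    (hf : ∀ t : ℂ, q ≤ t.re → DifferentiableAt ℂ f t)
    (hb : ∀ t : ℂ, q ≤ t.re → R₀ ≤ ‖t‖ → ‖f t‖ ≤ C / ‖t‖ ^ 2)
    (hg : ∀ x : ℝ, q < x → (g x : ℂ) = f x) :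
    deriv (deriv g) w = -(1 / Real.pi) * (∫ s : ℝ, f (q + s * I) / (q + s * I - w) ^ 3).re := by
  have hpi : (Real.pi : ℝ) ≠ 0 := Real.pi_ne_zero
  have hg1 : ∀ x : ℝ, q < x → g x = -(1 / (2 * Real.pi)) *
      (∫ s : ℝ, f (q + s * I) / (q + s * I - x) ^ (0 + 1)).re := by
    intro x hx
    simp only [zero_add, pow_one]
    rw [cauchy_half hx hf hb, ← hg x hx]
    have : (-(2 * (Real.pi : ℂ)) * (g x : ℂ)).re = -(2 * Real.pi) * g x := by
      simp
    rw [this]; field_simp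
  have hre : ∀ x : ℝ, q < x → ∀ k : ℕ, HasDerivAt (fun x : ℝ =>
      (∫ s : ℝ, f (q + s * I) / (q + s * I - x) ^ (k + 1)).re)
      ((k + 1) * (∫ s : ℝ, f (q + s * I) / (q + s * I - x) ^ (k + 2)).re) x := by
    intro x hx k
    have h := line_deriv hx k hf hb
    have h2 := Complex.reCLM.hasFDerivAt.comp_hasDerivAt x h
    have e : ((k + 1 : ℂ)) = ((k + 1 : ℝ) : ℂ) := by push_cast; ring
    rw [e] at h2
    rw [Complex.reCLM_apply, Complex.re_ofReal_mul] at h2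
    exact h2
  have hg2 : ∀ x : ℝ, q < x → deriv g x = -(1 / (2 * Real.pi)) *
      (∫ s : ℝ, f (q + s * I) / (q + s * I - x) ^ (1 + 1)).re := by
    intro x hx
    have h := ((hre x hx 0).const_mul (-(1 / (2 * Real.pi))))
    have heq : g =ᶠ[𝓝 x] fun x => -(1 / (2 * Real.pi)) *
      (∫ s : ℝ, f (q + s * I) / (q + s * I - x) ^ (0 + 1)).re := by
      filter_upwards [Ioi_mem_nhds hx] with y hy using hg1 y hy
    rw [heq.deriv_eq, h.deriv]
    simp
  have h := ((hre w hq 1).const_mul (-(1 / (2 * Real.pi))))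
  have heq : deriv g =ᶠ[𝓝 w] fun x => -(1 / (2 * Real.pi)) *
      (∫ s : ℝ, f (q + s * I) / (q + s * I - x) ^ (1 + 1)).re := by
    filter_upwards [Ioi_mem_nhds hq] with y hy using hg2 y hy
  rw [heq.deriv_eq, h.deriv]
  simp only [Nat.reduceAdd, Nat.cast_one]
  generalize (∫ s : ℝ, f (q + s * I) / (q + s * I - w) ^ 3).re = J
  field_simp
  norm_num

lemma left_zero {f : ℂ → ℂ} {q C R₀ w : ℝ} (hq : w + 1 / 2 ≤ q)
    (hf : ∀ t : ℂ, q ≤ t.re → DifferentiableAt ℂ f t)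
    (hb : ∀ t : ℂ, q ≤ t.re → R₀ ≤ ‖t‖ → ‖f t‖ ≤ C / ‖t‖ ^ 2) :
    ∫ s : ℝ, f (q + s * I) / (q + s * I - w) ^ 3 = 0 := by
  have hge : ∀ t : ℂ, q ≤ t.re → 1 / 2 ≤ ‖t - w‖ := by
    intro t ht
    have := Complex.re_le_norm (t - w)
    simp at this ⊢
    linarith
  refine (line_zero (D := fun t => f t / (t - w) ^ 3) (C := 8 * |C|) (R₀ := R₀) ?_ ?_).2
  · intro t ht
    apply (hf t ht).div (by fun_prop)
    apply pow_ne_zero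
    have := hge t ht
    intro h
    rw [h] at this; norm_num at this
  · intro t ht hR
    have h1 := hb t ht hR
    have h2 := hge t ht
    rw [norm_div, norm_pow]
    have h3 : ‖f t‖ ≤ |C| / ‖t‖ ^ 2 := h1.trans (by gcongr; exact le_abs_self C)
    calc ‖f t‖ / ‖t - w‖ ^ 3 ≤ (|C| / ‖t‖ ^ 2) / (1 / 2) ^ 3 := by gcongr
      _ = 8 * |C| / ‖t‖ ^ 2 := by ring

noncomputable def kap (t : ℂ) : ℂ := ∑' m : ℤ, 1 / (t + m) ^ 3

lemma summable_half (k : ℤ) : Summable (fun m : ℤ => 1 / |((k : ℝ) + 1 / 2) + m| ^ 3) := by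
  have h := Real.summable_one_div_int_add_rpow (k + 1 / 2 : ℝ) 3 |>.2 (by norm_num)
  refine h.congr fun m => ?_
  rw [add_comm]
  norm_cast

lemma half_ge (k m : ℤ) : 1 / 2 ≤ |((k : ℝ) + 1 / 2) + m| := by
  rcases le_or_gt 0 (k + m) with h | h
  · have : (0 : ℝ) ≤ k + m := by exact_mod_cast h
    rw [abs_of_pos] <;> linarith
  · have : (k + m : ℝ) ≤ -1 := by exact_mod_cast (by omega : k + m ≤ -1)
    rw [abs_of_neg] <;> linarith

lemma kap_term_le (k m : ℤ) (s : ℝ) :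
    ‖1 / ((((k : ℝ) + 1 / 2 : ℝ) : ℂ) + s * I + m) ^ 3‖ ≤ 1 / |((k : ℝ) + 1 / 2) + m| ^ 3 := by
  have h1 : |((k : ℝ) + 1 / 2) + m| ≤ ‖(((k : ℝ) + 1 / 2 : ℝ) : ℂ) + s * I + m‖ := by
    simpa using Complex.abs_re_le_norm ((((k : ℝ) + 1 / 2 : ℝ) : ℂ) + s * I + m)
  have h2 := half_ge k m
  rw [norm_div, norm_pow, norm_one]
  have : 0 < |((k : ℝ) + 1 / 2) + m| := by linarith
  gcongr

lemma kap_bound (k : ℤ) (s : ℝ) :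
    ‖kap ((((k : ℝ) + 1 / 2 : ℝ) : ℂ) + s * I)‖ ≤ ∑' m : ℤ, 1 / |((0 : ℝ) + 1 / 2) + m| ^ 3 := by
  have hs := summable_half k
  have h1 : ‖kap ((((k : ℝ) + 1 / 2 : ℝ) : ℂ) + s * I)‖ ≤
      ∑' m : ℤ, 1 / |((k : ℝ) + 1 / 2) + m| ^ 3 :=
    tsum_of_norm_bounded hs.hasSum (fun m => kap_term_le k m s)
  refine h1.trans (le_of_eq ?_)
  rw [← (Equiv.addLeft k).tsum_eq (fun m : ℤ => 1 / |((0 : ℝ) + 1 / 2) + m| ^ 3)]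
  refine tsum_congr fun m => ?_
  simp only [Equiv.coe_addLeft]
  push_cast
  ring_nf

lemma kap_meas (k : ℤ) : Continuous (fun s : ℝ => kap ((((k : ℝ) + 1 / 2 : ℝ) : ℂ) + s * I)) := by
  unfold kap
  refine continuous_tsum (u := fun m : ℤ => 1 / |((k : ℝ) + 1 / 2) + m| ^ 3) ?_ (summable_half k) ?_
  · intro m
    apply Continuous.div (by fun_prop) (by fun_prop)
    intro s
    apply pow_ne_zero
    intro h
    have h1 : |((k : ℝ) + 1 / 2) + m| ≤ ‖(((k : ℝ) + 1 / 2 : ℝ) : ℂ) + s * I + m‖ := by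
      simpa using Complex.abs_re_le_norm ((((k : ℝ) + 1 / 2 : ℝ) : ℂ) + s * I + m)
    have := half_ge k m
    rw [h, norm_zero] at h1
    linarith
  · intro m s
    exact kap_term_le k m s

lemma kap_conj (t : ℂ) : kap ((starRingEnd ℂ) t) = (starRingEnd ℂ) (kap t) := by
  unfold kap
  rw [Complex.conj_tsum]
  refine tsum_congr fun m => ?_
  simp

theorem sum_repr {f : ℂ → ℂ} {g : ℝ → ℝ} {q C R₀ : ℝ} (n k : ℕ) (hqk : q = (k : ℝ) + 1 / 2)
    (hnk : n ≤ k)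
    (hf : ∀ t : ℂ, q ≤ t.re → DifferentiableAt ℂ f t)
    (hb : ∀ t : ℂ, q ≤ t.re → R₀ ≤ ‖t‖ → ‖f t‖ ≤ C / ‖t‖ ^ 2)
    (hg : ∀ x : ℝ, q < x → (g x : ℂ) = f x)
    (hconj : ∀ t : ℂ, f ((starRingEnd ℂ) t) = (starRingEnd ℂ) (f t))
    (hz : ∀ m : ℕ, n + 1 + m ≤ k → deriv (deriv g) ((n : ℝ) + 1 + m) = 0) :
    ∑' m : ℕ, deriv (deriv g) ((n : ℝ) + 1 + m) =
      -(2 / Real.pi) * (∫ s in Ioi (0 : ℝ), f (q + s * I) * kap (q + s * I)).re := by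
  obtain ⟨hc, hi⟩ := line_int hf hb
  have hqk' : q = ((k : ℤ) : ℝ) + 1 / 2 := by rw [hqk]; norm_cast
  -- integrals of terms
  set F : ℤ → ℝ → ℂ := fun m s => f (q + s * I) * (1 / ((q : ℂ) + s * I + m) ^ 3) with hF
  have hFn : ∀ m s, ‖F m s‖ ≤ (1 / |((k : ℤ) : ℝ) + 1 / 2 + m| ^ 3) * ‖f (q + s * I)‖ := by
    intro m s
    rw [hF, norm_mul, mul_comm]
    gcongr
    rw [hqk']
    exact kap_term_le k m s
  have hFc : ∀ m, Continuous (F m) := by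
    intro m
    apply hc.mul
    apply Continuous.div (by fun_prop) (by fun_prop)
    intro s
    apply pow_ne_zero
    intro h
    have h1 : |((k : ℤ) : ℝ) + 1 / 2 + m| ≤ ‖(q : ℂ) + s * I + m‖ := by
      rw [hqk']
      simpa using Complex.abs_re_le_norm (((((k : ℤ) : ℝ) + 1 / 2 : ℝ) : ℂ) + s * I + m)
    have := half_ge k m
    rw [h, norm_zero] at h1
    linarith
  have hFi : ∀ m, Integrable (F m) := fun m =>
    (hi.norm.const_mul _).mono' (hFc m).aestronglyMeasurable (Eventually.of_forall (hFn m))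
  have hsum : Summable (fun m => ∫ s, ‖F m s‖) := by
    refine Summable.of_nonneg_of_le (fun m => integral_nonneg fun s => norm_nonneg _)
      (fun m => ?_) ((summable_half k).mul_right (∫ s : ℝ, ‖f (q + s * I)‖))
    rw [← integral_const_mul]
    exact integral_mono (hFi m).norm (hi.norm.const_mul _) (hFn m)
  have hHS := hasSum_integral_of_summable_integral_norm hFi hsum
  have hk : (fun s : ℝ => ∑' m, F m s) = fun s : ℝ => f (q + s * I) * kap (q + s * I) := by
    funext s
    rw [hF, tsum_mul_left, kap]
  rw [hk] at hHS
  have hHS2 : HasSum (fun m : ℤ => -(1 / Real.pi) * (∫ s, F (-m) s).re)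
      (-(1 / Real.pi) * (∫ s : ℝ, f (q + s * I) * kap (q + s * I)).re) := by
    apply HasSum.mul_left
    exact Complex.hasSum_re ((Equiv.neg ℤ).hasSum_iff.2 hHS)
  have hFm : ∀ m : ℤ, ∫ s, F (-m) s = ∫ s : ℝ, f (q + s * I) / (q + s * I - (m : ℝ)) ^ 3 := by
    intro m
    congr 1; funext s
    simp only [hF]; push_cast
    rw [mul_one_div]; ring_nf
  have hinj : Function.Injective (fun m : ℕ => (n : ℤ) + 1 + m) := by
    intro x y h; simpa using h
  have hL0 : ∀ m : ℤ, m ≤ k → (∫ s, F (-m) s).re = 0 := by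
    intro m hm
    rw [hFm, left_zero _ hf hb, zero_re]
    rw [hqk]
    have : (m : ℝ) ≤ k := by exact_mod_cast hm
    linarith
  have hterm : ∀ m : ℕ, deriv (deriv g) ((n : ℝ) + 1 + m) =
      -(1 / Real.pi) * (∫ s, F (-((n : ℤ) + 1 + m)) s).re := by
    intro m
    by_cases hm : n + 1 + m ≤ k
    · rw [hz m hm, hL0 _ (by exact_mod_cast hm), mul_zero]
    · rw [hFm]
      have : q < (n : ℝ) + 1 + m := by
        rw [hqk]
        have : (k : ℝ) + 1 ≤ n + 1 + m := by exact_mod_cast (by omega : k + 1 ≤ n + 1 + m)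
        linarith
      rw [second_deriv this hf hb hg]
      push_cast
      rfl
  have e1 : ∑' m : ℕ, deriv (deriv g) ((n : ℝ) + 1 + m) =
      ∑' m : ℤ, -(1 / Real.pi) * (∫ s, F (-m) s).re := by
    rw [← hinj.tsum_eq (f := fun m : ℤ => -(1 / Real.pi) * (∫ s, F (-m) s).re)]
    · exact tsum_congr hterm
    · intro m hm
      rw [Function.mem_support] at hm
      have : ¬ m ≤ k := fun h => hm (by rw [hL0 m h, mul_zero])
      refine ⟨(m - (n + 1)).toNat, ?_⟩
      simp only
      omega
  rw [e1, hHS2.tsum_eq]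
  have hfk : Integrable (fun s : ℝ => f (q + s * I) * kap (q + s * I)) := by
    have hkm : Continuous (fun s : ℝ => kap (q + s * I)) := by rw [hqk']; exact kap_meas k
    refine (hi.norm.mul_const (∑' m : ℤ, 1 / |((0 : ℝ) + 1 / 2) + m| ^ 3)).mono'
      (hc.mul hkm).aestronglyMeasurable (Eventually.of_forall fun s => ?_)
    rw [norm_mul]
    gcongr
    rw [hqk']
    exact kap_bound k s
  have r1 : (∫ s : ℝ, f (q + s * I) * kap (q + s * I)).re =
      ∫ s : ℝ, (f (q + s * I) * kap (q + s * I)).re :=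
    (integral_re hfk).symm
  have r2 : (∫ s in Ioi (0 : ℝ), f (q + s * I) * kap (q + s * I)).re =
      ∫ s in Ioi (0 : ℝ), (f (q + s * I) * kap (q + s * I)).re :=
    (integral_re hfk.integrableOn).symm
  have r3 : ∫ s : ℝ, (f (q + s * I) * kap (q + s * I)).re =
      2 * ∫ s in Ioi (0 : ℝ), (f (q + s * I) * kap (q + s * I)).re := by
    rw [← integral_comp_abs (f := fun s : ℝ => (f (q + s * I) * kap (q + s * I)).re)]
    congr 1; funext s
    rcases abs_choice s with h | h
    · rw [h]
    · rw [h]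
      have : (q : ℂ) + ((-s : ℝ) : ℂ) * I = (starRingEnd ℂ) (q + s * I) := by simp
      rw [this, hconj, kap_conj, ← map_mul, conj_re]
  rw [r1, r3, r2]
  ring

end Z18
end SecPB

section SecP2
namespace Z18
open Complex MeasureTheory Filter Topology Set

noncomputable def cpoch (w : ℂ) (m : ℕ) : ℂ := ∏ j ∈ Finset.range m, (w + j)

noncomputable def cf (a r n : ℕ) (t : ℂ) : ℂ :=
  (cpoch (t - ((2 * r + 1) * n : ℕ)) (2 * r * n)) ^ 3 *
    (cpoch (t + (n : ℕ) + 1) (2 * r * n)) ^ 3 /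
      (cpoch (t - (n : ℕ)) (2 * n + 1)) ^ a

lemma cpoch_ofReal (x : ℝ) (m : ℕ) : cpoch x m = (poch x m : ℂ) := by
  unfold cpoch poch; push_cast; rfl

lemma cf_ofReal (a r n : ℕ) (x : ℝ) : (Sfun a r n x : ℂ) = cf a r n x := by
  unfold cf Sfun
  have h1 := cpoch_ofReal (x - ((2 * r + 1) * n : ℕ)) (2 * r * n)
  have h2 := cpoch_ofReal (x + (n : ℕ) + 1) (2 * r * n)
  have h3 := cpoch_ofReal (x - (n : ℕ)) (2 * n + 1)
  push_cast at h1 h2 h3 ⊢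
  rw [h1, h2, h3]

lemma cpoch_conj (w : ℂ) (m : ℕ) :
    cpoch ((starRingEnd ℂ) w) m = (starRingEnd ℂ) (cpoch w m) := by
  unfold cpoch; simp [map_prod]

lemma cf_conj (a r n : ℕ) (t : ℂ) :
    cf a r n ((starRingEnd ℂ) t) = (starRingEnd ℂ) (cf a r n t) := by
  unfold cf
  have h1 := cpoch_conj (t - ((2 * r + 1) * n : ℕ)) (2 * r * n)
  have h2 := cpoch_conj (t + (n : ℕ) + 1) (2 * r * n)
  have h3 := cpoch_conj (t - (n : ℕ)) (2 * n + 1)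
  simp only [map_sub, map_add, map_natCast, map_one] at h1 h2 h3
  rw [h1, h2, h3]; simp

lemma cpoch_diff (b : ℂ) (m : ℕ) : Differentiable ℂ (fun t => cpoch (t + b) m) := by
  unfold cpoch; fun_prop

lemma cpoch_ne {w : ℂ} (m : ℕ) (h : ∀ j : ℕ, w + j ≠ 0) : cpoch w m ≠ 0 :=
  Finset.prod_ne_zero_iff.2 fun j _ => h j

lemma cf_diff (a r n : ℕ) (t : ℂ) (h : (n : ℝ) < t.re ∨ t.im ≠ 0) : DifferentiableAt ℂ (cf a r n) t := by
  unfold cf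
  have h1 := cpoch_diff (-(((2 * r + 1) * n : ℕ) : ℂ)) (2 * r * n) t
  have h2 := cpoch_diff ((n : ℕ) + 1) (2 * r * n) t
  have h3 := cpoch_diff (-(n : ℂ)) (2 * n + 1) t
  simp only [← sub_eq_add_neg, ← add_assoc] at h1 h2 h3
  refine ((h1.pow 3).mul (h2.pow 3)).div (h3.pow a) (pow_ne_zero _ (cpoch_ne _ ?_))
  intro j hj
  rcases h with h | h
  · have := congrArg Complex.re hj
    simp at this
    have : (0 : ℝ) ≤ j := by positivity
    linarith
  · have := congrArg Complex.im hj
    simp at this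
    exact h this

lemma cf_decay (a r n : ℕ) (ha : 6 * r + 2 ≤ a) : ∃ C R₀ : ℝ, ∀ t : ℂ, R₀ ≤ ‖t‖ → ‖cf a r n t‖ ≤ C / ‖t‖ ^ 2 := by
  set K : ℝ := ((2 * r + 1) * n : ℕ) + 2 * r * n + 3 * n + 2 with hK
  have hup : ∀ (b : ℝ) (m : ℕ) (t : ℂ), |b| + m ≤ K → 2 * K ≤ ‖t‖ → ‖cpoch (t + b) m‖ ≤ (2 * ‖t‖) ^ m := by
    intro b m t hb ht
    unfold cpoch
    rw [norm_prod]
    refine (Finset.prod_le_prod (g := fun _ => 2 * ‖t‖) (fun _ _ => norm_nonneg _) ?_).trans (by simp)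
    intro j hj
    have hj' : (j : ℝ) ≤ m := by exact_mod_cast (Finset.mem_range.1 hj).le
    have h1 := norm_add_le (t + b) (j : ℂ)
    have h2 := norm_add_le t (b : ℂ)
    rw [Complex.norm_natCast] at h1
    rw [Complex.norm_real, Real.norm_eq_abs] at h2
    have : 0 ≤ |b| := abs_nonneg _
    have : (0:ℝ) ≤ m := by positivity
    linarith
  have hlo : ∀ (b : ℝ) (m : ℕ) (t : ℂ), |b| + m ≤ K → 2 * K ≤ ‖t‖ → (‖t‖ / 2) ^ m ≤ ‖cpoch (t + b) m‖ := by
    intro b m t hb ht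
    unfold cpoch
    rw [norm_prod]
    refine le_trans (by simp [div_pow]) (Finset.prod_le_prod (f := fun _ => ‖t‖ / 2) (fun _ _ => by positivity) ?_)
    intro j hj
    have hj' : (j : ℝ) ≤ m := by exact_mod_cast (Finset.mem_range.1 hj).le
    have h1 := norm_sub_norm_le t (-(b + j : ℂ))
    rw [norm_neg, sub_neg_eq_add, ← add_assoc] at h1
    have h2 := norm_add_le (b : ℂ) (j : ℂ)
    rw [Complex.norm_natCast, Complex.norm_real, Real.norm_eq_abs] at h2
    linarith
  refine ⟨2 ^ (2 * r * n * 3 + 2 * r * n * 3 + (2 * n + 1) * a), 2 * K, fun t ht => ?_⟩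
  have hK1 : 1 ≤ 2 * K := by
    have : (0:ℝ) ≤ ((2 * r + 1) * n : ℕ) + 2 * r * n + 3 * n := by positivity
    linarith
  have ht1 : 1 ≤ ‖t‖ := hK1.trans ht
  have e1 := hup (-(((2 * r + 1) * n : ℕ) : ℝ)) (2 * r * n) t (by
    rw [abs_neg, abs_of_nonneg (by positivity)]; push_cast [hK]; nlinarith [(by positivity : (0:ℝ) ≤ n)]) ht
  have e2 := hup ((n : ℝ) + 1) (2 * r * n) t (by
    rw [abs_of_nonneg (by positivity)]; push_cast [hK]; nlinarith [(by positivity : (0:ℝ) ≤ n), (by positivity : (0:ℝ) ≤ (r:ℝ) * n)]) ht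
  have e3 := hlo (-(n : ℝ)) (2 * n + 1) t (by
    rw [abs_neg, abs_of_nonneg (by positivity)]; push_cast [hK]; nlinarith [(by positivity : (0:ℝ) ≤ n), (by positivity : (0:ℝ) ≤ (r:ℝ) * n)]) ht
  unfold cf
  rw [norm_div, norm_mul, norm_pow, norm_pow, norm_pow]
  push_cast at e1 e2 e3 ⊢
  rw [← sub_eq_add_neg] at e1 e3
  rw [← add_assoc] at e2
  have hp : 0 < ‖t‖ / 2 := by linarith
  calc _ ≤ ((2 * ‖t‖) ^ (2 * r * n)) ^ 3 * ((2 * ‖t‖) ^ (2 * r * n)) ^ 3 / ((‖t‖ / 2) ^ (2 * n + 1)) ^ a := by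
        gcongr
    _ = 2 ^ (2 * r * n * 3 + 2 * r * n * 3 + (2 * n + 1) * a) * ‖t‖ ^ (2 * r * n * 3 + 2 * r * n * 3) / ‖t‖ ^ ((2 * n + 1) * a) := by
        rw [← pow_mul, ← pow_mul, ← pow_add, mul_pow, div_pow, pow_add 2 (2 * r * n * 3 + 2 * r * n * 3)]
        field_simp
    _ ≤ _ := by
        rw [div_le_div_iff₀ (by positivity) (by positivity), mul_assoc, ← pow_add]
        refine mul_le_mul_of_nonneg_left (pow_le_pow_right₀ ht1 ?_) (by positivity)
        nlinarith [Nat.zero_le (r*n), Nat.zero_le n, mul_le_mul_left ha n]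

lemma triple_zero {N M : ℝ → ℝ} {x : ℝ} (hN : ContDiffAt ℝ 2 N x) (hM : ContDiffAt ℝ 2 M x) (h0 : N x = 0) :
    deriv (deriv (fun t => N t ^ 3 * M t)) x = 0 := by
  have hN1 : ∀ᶠ t in 𝓝 x, DifferentiableAt ℝ N t :=
    (hN.eventually (by simp)).mono fun t ht => ht.differentiableAt (by simp)
  have hM1 : ∀ᶠ t in 𝓝 x, DifferentiableAt ℝ M t :=
    (hM.eventually (by simp)).mono fun t ht => ht.differentiableAt (by simp)
  have hN2 : DifferentiableAt ℝ (deriv N) x :=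
    ((hN.derivWithin (m := 1) (by norm_num)).differentiableAt (by simp))
  have hM2 : DifferentiableAt ℝ (deriv M) x := 
    ((hM.derivWithin (m := 1) (by norm_num)).differentiableAt (by simp))
  have e : deriv (fun t => N t ^ 3 * M t) =ᶠ[𝓝 x] fun t => N t ^ 2 * (3 * deriv N t * M t + N t * deriv M t) := by
    filter_upwards [hN1, hM1] with t h1 h2
    have := ((h1.hasDerivAt.pow 3).mul h2.hasDerivAt).deriv
    refine this.trans ?_
    simp; ring
  rw [e.deriv_eq]
  have k1 := hN1.self_of_nhds
  have k2 := hM1.self_of_nhds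
  have := ((k1.hasDerivAt.pow 2).mul ((((hN2.hasDerivAt).const_mul 3).mul k2.hasDerivAt).add (k1.hasDerivAt.mul hM2.hasDerivAt))).deriv
  refine this.trans ?_
  simp [h0]

lemma poch_cd (b : ℝ) (m : ℕ) : ContDiff ℝ 2 (fun t => poch (t + b) m) := by
  unfold poch; fun_prop

lemma Sfun_zero (a r n x : ℕ) (h1 : n < x) (h2 : x ≤ (2 * r + 1) * n) :
    deriv (deriv (Sfun a r n)) (x : ℝ) = 0 := by
  have e : Sfun a r n = fun t => (poch (t - ((2 * r + 1) * n : ℕ)) (2 * r * n)) ^ 3 *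
    ((poch (t + (n : ℕ) + 1) (2 * r * n)) ^ 3 * ((poch (t - (n : ℕ)) (2 * n + 1)) ^ a)⁻¹) := by
    funext t; unfold Sfun; rw [mul_div_assoc, div_eq_mul_inv]
  rw [e]
  have c1 := (poch_cd (-(((2 * r + 1) * n : ℕ) : ℝ)) (2 * r * n)).contDiffAt (x := (x : ℝ))
  have c2 := (poch_cd ((n : ℕ) + 1) (2 * r * n)).contDiffAt (x := (x : ℝ))
  have c3 := (poch_cd (-(n : ℝ)) (2 * n + 1)).contDiffAt (x := (x : ℝ))
  simp only [← sub_eq_add_neg, ← add_assoc] at c1 c2 c3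
  have hx : (n : ℝ) < x := by exact_mod_cast h1
  refine triple_zero c1 ((c2.pow 3).mul ((c3.pow a).inv (pow_ne_zero _ ?_))) ?_
  · refine Finset.prod_ne_zero_iff.2 fun j _ => ?_
    have : (0 : ℝ) ≤ j := by positivity
    linarith
  · refine Finset.prod_eq_zero (i := (2 * r + 1) * n - x) ?_ ?_
    · have : (2 * r + 1) * n = 2 * r * n + n := by ring
      simp; omega
    · rw [Nat.cast_sub h2]; ring

theorem Sder_repr (a r n k : ℕ) (ha : 6 * r + 2 ≤ a) (hnk : n ≤ k) (hk : k ≤ (2 * r + 1) * n) :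
    Sder a r n = -(1 / Real.pi) * ((2 * n).factorial : ℝ) ^ (a - 6 * r) *
      (∫ s in Ioi (0 : ℝ), cf a r n (((k : ℝ) + 1 / 2 : ℝ) + s * I) * kap (((k : ℝ) + 1 / 2 : ℝ) + s * I)).re := by
  obtain ⟨C, R₀, hd⟩ := cf_decay a r n ha
  have hnk' : (n : ℝ) ≤ k := by exact_mod_cast hnk
  have := sum_repr (f := cf a r n) (g := Sfun a r n) (q := (k : ℝ) + 1 / 2) (C := C) (R₀ := R₀) n k rfl hnk
    (fun t ht => cf_diff a r n t (Or.inl (by linarith))) (fun t _ ht => hd t ht) (fun x _ => cf_ofReal a r n x)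
    (cf_conj a r n) (fun m hm => by
      have := Sfun_zero a r n (n + 1 + m) (by omega) (by omega)
      push_cast at this
      exact this)
  unfold Sder
  rw [this]
  ring

end Z18
end SecP2

section SecP3
namespace Z18
open Complex MeasureTheory Filter Topology Set

noncomputable def Pf (w : ℂ) : ℂ := w * log w - w
noncomputable def Qf (w : ℂ) : ℂ := (w - 1 / 2) * log w - w

lemma log_step {w : ℂ} (hw : 0 < w.im) : log (w + 1) = log w + log (1 + w⁻¹) := by
  have h0 : w ≠ 0 := by rintro rfl; simp at hw
  have him : (1 + w⁻¹).im < 0 := by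
    simp [Complex.inv_im]
    exact div_neg_of_neg_of_pos (by linarith) (normSq_pos.2 h0)
  have h1 : (1 + w⁻¹) ≠ 0 := by intro h; rw [h] at him; simp at him
  have : w + 1 = w * (1 + w⁻¹) := by field_simp
  rw [this, Complex.log_mul h0 h1]
  have a1 := Complex.arg_nonneg_iff.2 hw.le
  have a2 := Complex.arg_neg_iff.2 him
  have a3 := Complex.neg_pi_lt_arg (1 + w⁻¹)
  have a4 := Complex.arg_le_pi w
  constructor <;> linarith

lemma Q_step {w : ℂ} (hw : 2 ≤ w.im) : ‖log w - (Qf (w + 1) - Qf w)‖ ≤ 2 / w.im ^ 2 := by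
  have h0 : w ≠ 0 := by rintro rfl; simp at hw; linarith
  have hn : w.im ≤ ‖w‖ := (le_abs_self _).trans (Complex.abs_im_le_norm w)
  have hn0 : 0 < ‖w‖ := by linarith
  have hv : ‖w⁻¹‖ ≤ 1 / 2 := by rw [norm_inv]; rw [inv_le_comm₀ hn0 (by norm_num)]; linarith
  have hT := Complex.norm_log_sub_logTaylor_le 2 (z := w⁻¹) (by linarith)
  have e : logTaylor 3 w⁻¹ = w⁻¹ - w⁻¹ ^ 2 / 2 := by
    simp [logTaylor, Finset.sum_range_succ]; ring
  norm_num at hT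
  rw [e] at hT
  set l := log (1 + w⁻¹) with hl
  have e2 : log w - (Qf (w + 1) - Qf w) = w⁻¹ ^ 2 / 4 - (w + 1 / 2) * (l - (w⁻¹ - w⁻¹ ^ 2 / 2)) := by
    unfold Qf
    rw [log_step (by linarith), ← hl]
    clear_value l
    field_simp
    ring
  have hd : ‖l - (w⁻¹ - w⁻¹ ^ 2 / 2)‖ ≤ (2 / 3) * ‖w‖⁻¹ ^ 3 := by
    refine hT.trans ?_
    have : (1 - ‖w‖⁻¹)⁻¹ ≤ 2 := by
      rw [norm_inv] at hv
      rw [inv_le_comm₀ (by linarith) (by norm_num)]; linarith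
    have h3 : 0 ≤ (‖w‖ ^ 3)⁻¹ := by positivity
    rw [inv_pow]
    nlinarith
  rw [e2]
  refine (norm_sub_le _ _).trans ?_
  have h4 : ‖w + 1 / 2‖ ≤ (5/4) * ‖w‖ := by
    refine (norm_add_le _ _).trans ?_
    norm_num; linarith
  rw [norm_mul, norm_div, norm_pow, norm_inv]
  have : ‖w + 1 / 2‖ * ‖l - (w⁻¹ - w⁻¹ ^ 2 / 2)‖ ≤ (5/4) * ‖w‖ * ((2 / 3) * ‖w‖⁻¹ ^ 3) := by gcongr
  have h5 : (5/4) * ‖w‖ * ((2 / 3) * ‖w‖⁻¹ ^ 3) = (5/6) * ‖w‖⁻¹ ^ 2 := by field_simp; norm_num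
  have h6 : ‖w‖⁻¹ ^ 2 ≤ 1 / w.im ^ 2 := by
    rw [inv_pow, one_div]; gcongr
  have h7 : (2:ℝ) / w.im ^ 2 = 2 * (1 / w.im ^ 2) := by ring
  rw [h7]
  have h8 : ‖(4:ℂ)‖ = 4 := by norm_num
  rw [h8]
  rw [h5] at this
  nlinarith [sq_nonneg (‖w‖⁻¹)]

lemma cpoch_exp {w : ℂ} (hw : 2 ≤ w.im) (N : ℕ) :
    ∃ e : ℂ, ‖e‖ ≤ 2 * N / w.im ^ 2 ∧ cpoch w N = exp (Qf (w + N) - Qf w + e) := by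
  induction N with
  | zero => exact ⟨0, by simp, by simp [cpoch]⟩
  | succ N ih =>
    obtain ⟨e, he, h⟩ := ih
    have hi : (w + N).im = w.im := by simp
    have hs := Q_step (w := w + N) (by rw [hi]; exact hw)
    rw [hi] at hs
    refine ⟨e + (log (w + N) - (Qf (w + N + 1) - Qf (w + N))), (norm_add_le _ _).trans ?_, ?_⟩
    · refine (add_le_add he hs).trans (le_of_eq ?_)
      push_cast; ring
    · have h0 : w + N ≠ 0 := by intro h; rw [h] at hi; simp at hi; linarith
      have : cpoch w (N + 1) = cpoch w N * (w + N) := by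
        unfold cpoch; rw [Finset.prod_range_succ]
      rw [this, h]
      nth_rewrite 2 [← Complex.exp_log h0]
      rw [← Complex.exp_add]
      congr 1
      push_cast
      rw [← add_assoc w]
      ring

lemma Qf_scale {n : ℕ} (hn : 0 < n) {w : ℂ} (hw : w ≠ 0) :
    Qf (n * w) = n * Pf w + (n * w - 1 / 2) * Real.log n - (1 / 2) * log w := by
  have : log ((n : ℂ) * w) = Real.log n + log w := by
    have := Complex.log_ofReal_mul (r := (n : ℝ)) (by exact_mod_cast hn) hw
    push_cast at this ⊢
    exact this
  unfold Qf Pf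
  rw [this]; ring

noncomputable def Phf (a r : ℕ) (x : ℂ) : ℂ :=
  3 * (Pf (x - 1) - Pf (x - (2 * r + 1))) + 3 * (Pf (x + (2 * r + 1)) - Pf (x + 1))
    - a * (Pf (x + 1) - Pf (x - 1))

noncomputable def lA (a r : ℕ) (x : ℂ) : ℂ :=
  -((a + 3) / 2) * (log (x - 1) + log (x + 1)) + (3 / 2) * (log (x - (2 * r + 1)) + log (x + (2 * r + 1)))

lemma cpoch_shift (w : ℂ) (m : ℕ) : w * cpoch (w + 1) m = cpoch w m * (w + m) := by
  have h1 : cpoch w (m + 1) = cpoch w m * (w + m) := by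
    unfold cpoch; rw [Finset.prod_range_succ]
  have h2 : cpoch w (m + 1) = cpoch (w + 1) m * w := by
    unfold cpoch; rw [Finset.prod_range_succ']; simp [add_assoc, add_comm (1:ℂ)]
  rw [← h1, h2, mul_comm]

theorem cf_exp (a r n : ℕ) (hn : 0 < n) {x : ℂ} (hx : 0 < x.im) (hnx : 2 ≤ n * x.im) :
    ∃ e : ℂ, ‖e‖ ≤ (24 * r + 4 * a) / (n * x.im ^ 2) ∧
      cf a r n (n * x) = exp ((((12 * r * n - 2 * a * n - a : ℝ) * Real.log n : ℝ) : ℂ)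
        + n * Phf a r x + lA a r x + e) := by
  have ne : ∀ b : ℝ, x + b ≠ 0 := by
    intro b h; have := congrArg Complex.im h; simp at this; linarith
  have n1 : x - 1 ≠ 0 := by simpa [sub_eq_add_neg] using ne (-1)
  have n2 : x + 1 ≠ 0 := by simpa using ne 1
  have n3 : x - (2 * r + 1) ≠ 0 := by
    have := ne (-(2 * r + 1)); push_cast at this; rwa [← sub_eq_add_neg] at this
  have n4 : x + (2 * r + 1) ≠ 0 := by simpa using ne (2 * r + 1)
  have hn' : (n : ℂ) ≠ 0 := by exact_mod_cast hn.ne'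
  have hnr : (0 : ℝ) < n := by exact_mod_cast hn
  obtain ⟨e1, he1, h1⟩ := cpoch_exp (w := n * (x - (2 * r + 1))) (by simpa using hnx) (2 * r * n)
  obtain ⟨e2, he2, h2⟩ := cpoch_exp (w := n * (x + 1)) (by simpa using hnx) (2 * r * n)
  obtain ⟨e3, he3, h3⟩ := cpoch_exp (w := n * (x - 1)) (by simpa using hnx) (2 * n)
  have i1 : ((n : ℂ) * (x - (2 * r + 1))).im = n * x.im := by simp
  have i2 : ((n : ℂ) * (x + 1)).im = n * x.im := by simp
  have i3 : ((n : ℂ) * (x - 1)).im = n * x.im := by simp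
  rw [i1] at he1
  rw [i2] at he2
  rw [i3] at he3
  have w1 : (n : ℂ) * (x - (2 * r + 1)) + (2 * r * n : ℕ) = n * (x - 1) := by push_cast; ring
  have w2 : (n : ℂ) * (x + 1) + (2 * r * n : ℕ) = n * (x + (2 * r + 1)) := by push_cast; ring
  have w3 : (n : ℂ) * (x - 1) + (2 * n : ℕ) = n * (x + 1) := by push_cast; ring
  rw [w1, Qf_scale hn n1, Qf_scale hn n3] at h1
  rw [w2, Qf_scale hn n2, Qf_scale hn n4] at h2
  rw [w3, Qf_scale hn n2, Qf_scale hn n1] at h3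
  have s2 := cpoch_shift (n * (x + 1)) (2 * r * n)
  rw [w2] at s2
  have s3 : cpoch (n * (x - 1)) (2 * n + 1) = cpoch (n * (x - 1)) (2 * n) * (n * (x + 1)) := by
    rw [← w3]; unfold cpoch; rw [Finset.prod_range_succ]
  have l2 : (n : ℂ) * (x + 1) = exp (Real.log n + log (x + 1)) := by
    rw [Complex.exp_add, Complex.exp_log n2, ← Complex.ofReal_exp, Real.exp_log hnr]; simp
  have l4 : (n : ℂ) * (x + (2 * r + 1)) = exp (Real.log n + log (x + (2 * r + 1))) := by
    rw [Complex.exp_add, Complex.exp_log n4, ← Complex.ofReal_exp, Real.exp_log hnr]; simp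
  have s2' : cpoch (n * (x + 1) + 1) (2 * r * n) = cpoch (n * (x + 1)) (2 * r * n) * (n * (x + (2 * r + 1))) / (n * (x + 1)) := by
    rw [← s2]; field_simp
  have s2'' : cpoch (n * (x + 1) + 1) (2 * r * n) = cpoch (n * (x + 1)) (2 * r * n) * exp (Real.log n + log (x + (2 * r + 1))) / exp (Real.log n + log (x + 1)) := by
    rw [s2', ← l2, ← l4]
  have s3' : cpoch (n * (x - 1)) (2 * n + 1) = cpoch (n * (x - 1)) (2 * n) * exp (Real.log n + log (x + 1)) := by
    rw [s3, ← l2]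
  refine ⟨3 * e1 + 3 * e2 - a * e3, ?_, ?_⟩
  · have : (24 * r + 4 * a : ℝ) / (n * x.im ^ 2) = 3 * (2 * (2 * r * n : ℕ) / (n * x.im) ^ 2) + 3 * (2 * (2 * r * n : ℕ) / (n * x.im) ^ 2) + a * (2 * (2 * n : ℕ) / (n * x.im) ^ 2) := by
      push_cast; field_simp; ring
    rw [this]
    refine (norm_sub_le _ _).trans (add_le_add ((norm_add_le _ _).trans (add_le_add ?_ ?_)) ?_)
    · rw [norm_mul]; norm_num; push_cast at he1; linarith
    · rw [norm_mul]; norm_num; push_cast at he2; linarith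
    · rw [norm_mul, Complex.norm_natCast]; gcongr
  · unfold cf
    have t1 : (n : ℂ) * x - ((2 * r + 1) * n : ℕ) = n * (x - (2 * r + 1)) := by push_cast; ring
    have t2 : (n : ℂ) * x + (n : ℕ) + 1 = n * (x + 1) + 1 := by push_cast; ring
    have t3 : (n : ℂ) * x - (n : ℕ) = n * (x - 1) := by push_cast; ring
    rw [t1, t2, t3, s2'', s3', h1, h2, h3, ← Complex.exp_add, ← Complex.exp_sub, ← Complex.exp_add,
      ← Complex.exp_nat_mul, ← Complex.exp_nat_mul, ← Complex.exp_nat_mul, ← Complex.exp_add, ← Complex.exp_sub]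
    congr 1
    unfold Phf lA
    push_cast
    ring

end Z18
end SecP3

section SecP4
namespace Z18
open Complex MeasureTheory Filter Topology Set

theorem kap_exp : ∃ K : ℝ, 0 < K ∧ ∀ t : ℂ, 1 ≤ t.im → ∃ e : ℂ, ‖e‖ ≤ K / t.im ∧
    kap t = 4 * Real.pi ^ 3 * I * exp (2 * Real.pi * I * t) * (1 + e) := by
  have hs : Summable (fun m : ℕ => ((m : ℝ) + 2) ^ 2 * (1 / 2 : ℝ) ^ m) := by
    have h := (summable_nat_add_iff 2).2 (summable_pow_mul_geometric_of_norm_lt_one 2 (r := (1 / 2 : ℝ)) (by norm_num))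
    refine (h.mul_left 4).congr fun m => ?_
    push_cast; ring
  refine ⟨∑' m : ℕ, ((m : ℝ) + 2) ^ 2 * (1 / 2 : ℝ) ^ m, ?_, ?_⟩
  · exact hs.tsum_pos (fun m => by positivity) 0 (by positivity)
  intro t ht
  set q := exp (2 * Real.pi * I * t) with hq
  have hqn : ‖q‖ = Real.exp (-(2 * Real.pi * t.im)) := by
    rw [hq, Complex.norm_exp]; congr 1; simp
  have hpi := Real.pi_gt_three
  have hq1 : ‖q‖ ≤ 1 / t.im := by
    rw [hqn, Real.exp_neg, one_div]
    apply inv_anti₀ (by linarith)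
    have := Real.add_one_le_exp (2 * Real.pi * t.im)
    nlinarith
  have hq2 : ‖q‖ ≤ 1 / 2 := by
    rw [hqn, Real.exp_neg, one_div]
    apply inv_anti₀ (by norm_num)
    have := Real.add_one_le_exp (2 * Real.pi * t.im)
    nlinarith
  have hid := EisensteinSeries.qExpansion_identity (k := 2) (by norm_num) ⟨t, by linarith⟩
  have hid' : kap t = ((-2 * Real.pi * I) ^ 3 / 2) * ∑' n : ℕ, (n : ℂ) ^ 2 * q ^ n := by
    have h2 : ((2 : ℕ).factorial : ℂ) = 2 := by norm_num
    rw [h2] at hid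
    exact hid
  have hsq : Summable (fun n : ℕ => (n : ℂ) ^ 2 * q ^ n) :=
    summable_pow_mul_geometric_of_norm_lt_one 2 (by linarith)
  have h2 : ∑' n : ℕ, (n : ℂ) ^ 2 * q ^ n = q + q * (q * ∑' m : ℕ, ((m : ℂ) + 2) ^ 2 * q ^ m) := by
    rw [← hsq.sum_add_tsum_nat_add 2]
    simp [Finset.sum_range_succ]
    rw [← tsum_mul_left, ← tsum_mul_left]
    refine tsum_congr fun m => ?_
    ring
  refine ⟨q * ∑' m : ℕ, ((m : ℂ) + 2) ^ 2 * q ^ m, ?_, ?_⟩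
  · have hb : ‖∑' m : ℕ, ((m : ℂ) + 2) ^ 2 * q ^ m‖ ≤ ∑' m : ℕ, ((m : ℝ) + 2) ^ 2 * (1 / 2 : ℝ) ^ m := by
      refine tsum_of_norm_bounded hs.hasSum fun m => ?_
      rw [norm_mul, norm_pow, norm_pow]
      have : ‖(m : ℂ) + 2‖ = m + 2 := by
        have := Complex.norm_natCast (m + 2); push_cast at this; exact this
      rw [this]; gcongr
    rw [norm_mul, div_eq_mul_one_div, mul_comm]
    gcongr
  · rw [hid', h2]
    have : I ^ 3 = -I := by rw [pow_succ, I_sq]; ring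
    rw [mul_pow, this]; ring

lemma cpoch_le {w w' : ℂ} {c : ℝ} (m : ℕ) (h : ∀ j : ℕ, ‖w + j‖ ≤ c * ‖w' + j‖) :
    ‖cpoch w m‖ ≤ c ^ m * ‖cpoch w' m‖ := by
  unfold cpoch
  rw [norm_prod, norm_prod]
  calc _ ≤ ∏ j ∈ Finset.range m, (c * ‖w' + j‖) := Finset.prod_le_prod (fun _ _ => norm_nonneg _) (fun j _ => h j)
    _ = _ := by rw [Finset.prod_mul_distrib]; simp

lemma nrm_sq (b s : ℝ) : ‖(b : ℂ) + s * I‖ ^ 2 = b ^ 2 + s ^ 2 := by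
  rw [← Complex.normSq_eq_norm_sq, Complex.normSq_add_mul_I]

lemma nrm_le {b b' s s' c : ℝ} (hc : 0 ≤ c) (h : b ^ 2 + s ^ 2 ≤ c ^ 2 * (b' ^ 2 + s' ^ 2)) :
    ‖(b : ℂ) + s * I‖ ≤ c * ‖(b' : ℂ) + s' * I‖ := by
  apply le_of_sq_le_sq _ (by positivity)
  rw [mul_pow, nrm_sq, nrm_sq]; exact h

lemma cf_compare (a r n : ℕ) {q s s' c d : ℝ} (hc : 0 ≤ c) (hd : 0 < d) (hs' : 0 < s')
    (h1 : ∀ b : ℝ, b ^ 2 + s ^ 2 ≤ c ^ 2 * (b ^ 2 + s' ^ 2))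
    (h2 : ∀ b : ℝ, q - n ≤ b → b ^ 2 + s' ^ 2 ≤ d ^ 2 * (b ^ 2 + s ^ 2)) :
    ‖cf a r n (q + s * I)‖ ≤ c ^ (12 * r * n) * d ^ ((2 * n + 1) * a) * ‖cf a r n (q + s' * I)‖ := by
  have e : ∀ (b s : ℝ) (j : ℕ), (q : ℂ) + s * I + b + j = ((q + b + j : ℝ) : ℂ) + s * I := by
    intro b s j; push_cast; ring
  have k1 : ∀ (b : ℝ) (m : ℕ), ‖cpoch (q + s * I + b) m‖ ≤ c ^ m * ‖cpoch (q + s' * I + b) m‖ := by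
    intro b m
    refine cpoch_le m fun j => ?_
    rw [e, e]
    exact nrm_le hc (h1 _)
  have k2 : ‖cpoch (q + s' * I + (-n : ℝ)) (2 * n + 1)‖ ≤ d ^ (2 * n + 1) * ‖cpoch (q + s * I + (-n : ℝ)) (2 * n + 1)‖ := by
    refine cpoch_le _ fun j => ?_
    rw [e, e]
    refine nrm_le hd.le (h2 _ ?_)
    have : (0 : ℝ) ≤ j := by positivity
    linarith
  have k3 : 0 < ‖cpoch (q + s' * I + (-n : ℝ)) (2 * n + 1)‖ := by
    rw [norm_pos_iff]
    refine cpoch_ne _ fun j h => ?_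
    rw [e] at h
    have := congrArg Complex.im h
    simp at this
    linarith
  have k1a := k1 (-((2 * r + 1) * n : ℕ)) (2 * r * n)
  have k1b := k1 (n + 1) (2 * r * n)
  unfold cf
  have f1 : ∀ s : ℝ, (q : ℂ) + s * I - ((2 * r + 1) * n : ℕ) = q + s * I + (-((2 * r + 1) * n : ℕ) : ℝ) := by
    intro s; push_cast; ring
  have f2 : ∀ s : ℝ, (q : ℂ) + s * I + (n : ℕ) + 1 = q + s * I + (n + 1 : ℝ) := by
    intro s; push_cast; ring
  have f3 : ∀ s : ℝ, (q : ℂ) + s * I - (n : ℕ) = q + s * I + (-n : ℝ) := by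
    intro s; push_cast; ring
  rw [f1, f1, f2, f2, f3, f3]
  rw [norm_div, norm_div, norm_mul, norm_mul, norm_pow, norm_pow, norm_pow, norm_pow, norm_pow, norm_pow]
  set A := ‖cpoch (q + s * I + (-((2 * r + 1) * n : ℕ) : ℝ)) (2 * r * n)‖
  set A' := ‖cpoch (q + s' * I + (-((2 * r + 1) * n : ℕ) : ℝ)) (2 * r * n)‖
  set B := ‖cpoch (q + s * I + (n + 1 : ℝ)) (2 * r * n)‖
  set B' := ‖cpoch (q + s' * I + (n + 1 : ℝ)) (2 * r * n)‖
  set D := ‖cpoch (q + s * I + (-n : ℝ)) (2 * n + 1)‖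
  set D' := ‖cpoch (q + s' * I + (-n : ℝ)) (2 * n + 1)‖
  have hD : 0 < D := by
    by_contra h
    have h0 : D = 0 := le_antisymm (not_lt.1 h) (norm_nonneg _)
    rw [h0] at k2; linarith
  have hA : 0 ≤ A := norm_nonneg _
  have hB : 0 ≤ B := norm_nonneg _
  calc A ^ 3 * B ^ 3 / D ^ a ≤ (c ^ (2 * r * n) * A') ^ 3 * (c ^ (2 * r * n) * B') ^ 3 / (D' / d ^ (2 * n + 1)) ^ a := by
        have : D' / d ^ (2 * n + 1) ≤ D := by rw [div_le_iff₀ (by positivity)]; linarith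
        gcongr
    _ = _ := by
        rw [div_pow, ← pow_mul d]
        field_simp
        rw [mul_assoc, mul_assoc, ← pow_mul]
        ring_nf

lemma cf_left (a r n : ℕ) (hn : 0 < n) {q s y : ℝ} (hq : 2 * n ≤ q) (hs : 0 ≤ s) (hy : 0 < y) (hsy : s ≤ n * y) :
    ‖cf a r n (q + s * I)‖ ≤ Real.exp (2 * a * n * y ^ 2) * ‖cf a r n (q + (n * y : ℝ) * I)‖ := by
  have hnr : (1 : ℝ) ≤ n := by exact_mod_cast hn
  have := cf_compare a r n (q := q) (s := s) (s' := n * y) (c := 1) (d := Real.exp (y ^ 2 / 2)) (by norm_num)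
    (Real.exp_pos _) (by positivity) (fun b => by nlinarith) (fun b hb => by
      rw [← Real.exp_nat_mul]
      have h1 : (↑(2:ℕ) * (y ^ 2 / 2) : ℝ) = y ^ 2 := by push_cast; ring
      rw [h1]
      have h2 := Real.add_one_le_exp (y ^ 2)
      have h3 : (n : ℝ) ≤ b := by linarith
      have h4 : (n : ℝ) ^ 2 ≤ b ^ 2 := by gcongr
      have h5 : (y ^ 2 + 1) * (b ^ 2 + s ^ 2) ≤ Real.exp (y ^ 2) * (b ^ 2 + s ^ 2) := by gcongr
      nlinarith [sq_nonneg y, sq_nonneg s, mul_nonneg (sq_nonneg y) (sq_nonneg s), mul_le_mul_of_nonneg_right h4 (sq_nonneg y)])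
  refine this.trans ?_
  rw [one_pow, one_mul, ← Real.exp_nat_mul]
  refine mul_le_mul_of_nonneg_right (Real.exp_le_exp.2 ?_) (norm_nonneg _)
  push_cast
  nlinarith [mul_nonneg (Nat.cast_nonneg (α := ℝ) a) (sq_nonneg y)]

lemma cf_right (a r n : ℕ) {q s s' : ℝ} (hs' : 0 < s') (hs : s' ≤ s) :
    ‖cf a r n (q + s * I)‖ ≤ (s / s') ^ (12 * r * n) * ‖cf a r n (q + s' * I)‖ := by
  have h1 : 1 ≤ s / s' := by rw [le_div_iff₀ hs']; linarith
  have := cf_compare a r n (q := q) (s := s) (s' := s') (c := s / s') (d := 1) (by positivity)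
    (by norm_num) hs' (fun b => by
      have : (s / s') ^ 2 * s' ^ 2 = s ^ 2 := by field_simp
      have : 1 ≤ (s / s') ^ 2 := one_le_pow₀ h1
      nlinarith [sq_nonneg b]) (fun b hb => by nlinarith)
  simpa using this

end Z18
end SecP4

section SecP5
namespace Z18
open Complex MeasureTheory Filter Topology Set

lemma taylor2 {F F' : ℂ → ℂ} {x0 κ : ℂ} (hF : ∀ᶠ x in 𝓝 x0, HasDerivAt F (F' x) x)
    (hF' : HasDerivAt F' κ x0) (h0 : F' x0 = 0) :
    (fun x => F x - F x0 - κ / 2 * (x - x0) ^ 2) =o[𝓝 x0] (fun x => (x - x0) ^ 2) := by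
  rw [Asymptotics.isLittleO_iff]
  intro ε hε
  have h1 := (hasDerivAt_iff_isLittleO.1 hF')
  rw [Asymptotics.isLittleO_iff] at h1
  have h2 := (h1 hε).and hF
  obtain ⟨d, hd, hball⟩ := Metric.eventually_nhds_iff_ball.1 h2
  rw [Metric.eventually_nhds_iff_ball]
  refine ⟨d, hd, fun x hx => ?_⟩
  set R := dist x x0 with hR
  have hRd : R < d := hx
  have key := (convex_closedBall x0 R).norm_image_sub_le_of_norm_hasDerivWithin_le
    (f := fun x => F x - κ / 2 * (x - x0) ^ 2) (f' := fun x => F' x - κ * (x - x0)) (C := ε * R)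
    (x := x0) (y := x) ?_ ?_ (by simp [hR]) (by simp [hR])
  · simp only [sub_self] at key
    have e : F x - κ / 2 * (x - x0) ^ 2 - (F x0 - κ / 2 * 0 ^ 2) = F x - F x0 - κ / 2 * (x - x0) ^ 2 := by ring
    rw [e] at key
    refine key.trans (le_of_eq ?_)
    rw [hR, dist_eq_norm, norm_pow]; ring
  · intro z hz
    have hz' : z ∈ Metric.ball x0 d := lt_of_le_of_lt hz hRd
    have g1 := (hball z hz').2
    have g2 : HasDerivAt (fun x : ℂ => κ / 2 * (x - x0) ^ 2) (κ * (z - x0)) z := by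
      have := (((hasDerivAt_id z).sub_const x0).pow 2).const_mul (κ / 2)
      refine (this : HasDerivAt (fun x : ℂ => κ / 2 * (x - x0) ^ 2) _ z).congr_deriv ?_
      simp; ring
    exact (g1.sub g2).hasDerivWithinAt
  · intro z hz
    have hz' : z ∈ Metric.ball x0 d := lt_of_le_of_lt hz hRd
    have g1 := (hball z hz').1
    rw [h0] at g1
    simp only [sub_zero, smul_eq_mul] at g1
    rw [mul_comm (z - x0)] at g1
    refine g1.trans ?_
    have : ‖z - x0‖ ≤ R := by rw [← dist_eq_norm]; exact hz
    gcongr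

theorem laplace {F F' G : ℂ → ℂ} {c y0 y1 y2 η K : ℝ} {κ : ℂ} {N0 : ℕ}
    (hF : ∀ x : ℂ, 0 < x.im → HasDerivAt F (F' x) x)
    (hFc : ContinuousOn F' {x : ℂ | 0 < x.im})
    (hF' : HasDerivAt F' κ (c + y0 * I)) (h0 : F' (c + y0 * I) = 0) (hκ : 0 < κ.re)
    (hG : ContinuousOn G {x : ℂ | 0 < x.im})
    (hy1 : 0 < y1) (h01 : y1 < y0) (h02 : y0 < y2) (hη : 0 < η)
    (hdec : ∀ y ∈ Icc y1 y2, (F (c + y * I)).re ≤ (F (c + y0 * I)).re - η * (y - y0) ^ 2)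
    (cn : ℕ → ℝ) (hcn : ∀ n ≥ N0, |cn n - c| ≤ 1 / n)
    (h : ℕ → ℝ → ℂ)
    (hh : ∀ n ≥ N0, ∀ y ∈ Icc y1 y2, ∃ e : ℂ, ‖e‖ ≤ K / n ∧
      h n y = exp (n * F (cn n + y * I)) * G (cn n + y * I) * (1 + e))
    (hm : ∀ n ≥ N0, ContinuousOn (h n) (Icc y1 y2)) :
    Tendsto (fun n : ℕ => (Real.sqrt n : ℂ) * exp (-(n * F (c + y0 * I))) * ∫ y in Icc y1 y2, h n y) atTop
      (𝓝 (G (c + y0 * I) * (2 * Real.pi / κ) ^ (1 / 2 : ℂ))) := by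
  set x0 : ℂ := c + y0 * I with hx0
  choose! e he1 he2 using hh
  set g : ℕ → ℝ → ℂ := fun n => indicator (Icc y1 y2) (fun y => exp (-(n * F x0)) * h n y) with hg
  -- change of variables
  have cv : ∀ n : ℕ, 0 < n → (Real.sqrt n : ℂ) * exp (-(n * F x0)) * ∫ y in Icc y1 y2, h n y
      = ∫ σ : ℝ, g n (y0 + σ / Real.sqrt n) := by
    intro n hn
    have hs : 0 < Real.sqrt n := Real.sqrt_pos.2 (by exact_mod_cast hn)
    rw [Measure.integral_comp_div (fun σ => g n (y0 + σ)) (Real.sqrt n),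
      integral_add_left_eq_self (μ := volume) (g n) y0, abs_of_pos hs, hg]
    simp only
    rw [integral_indicator measurableSet_Icc, integral_const_mul, Complex.real_smul]
    ring
  -- compact set
  set Kc : Set ℂ := Icc (c - 1) (c + 1) ×ℂ Icc y1 y2 with hKc
  have hKcomp : IsCompact Kc := isCompact_Icc.reProdIm isCompact_Icc
  have hKconv : Convex ℝ Kc :=
    ((convex_Icc (c - 1) (c + 1)).linear_preimage Complex.reLm).inter ((convex_Icc y1 y2).linear_preimage Complex.imLm)
  have hKsub : Kc ⊆ {x : ℂ | 0 < x.im} := fun x hx => lt_of_lt_of_le hy1 hx.2.1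
  obtain ⟨BG, hBG⟩ := hKcomp.exists_bound_of_continuousOn (hG.mono hKsub)
  obtain ⟨BF, hBF⟩ := hKcomp.exists_bound_of_continuousOn (hFc.mono hKsub)
  have hmem : ∀ (c' y : ℝ), |c' - c| ≤ 1 → y ∈ Icc y1 y2 → (c' : ℂ) + y * I ∈ Kc := by
    intro c' y h1 h2
    rw [abs_le] at h1
    refine ⟨?_, ?_⟩
    · simp; constructor <;> linarith
    · simpa using h2
  have hx0K : x0 ∈ Kc := hmem c y0 (by simp) ⟨h01.le, h02.le⟩
  have hBG0 : 0 ≤ BG := (norm_nonneg _).trans (hBG _ hx0K)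
  have hBF0 : 0 ≤ BF := (norm_nonneg _).trans (hBF _ hx0K)
  have hcn1 : ∀ n ≥ max N0 1, |cn n - c| ≤ 1 := by
    intro n hn
    refine (hcn n (le_of_max_le_left hn)).trans ?_
    have : (1 : ℝ) ≤ n := by exact_mod_cast le_of_max_le_right hn
    rw [div_le_one (by linarith)]; exact this
  have hlip : ∀ n ≥ max N0 1, ∀ y ∈ Icc y1 y2,
      n * (F (cn n + y * I)).re ≤ n * (F (c + y * I)).re + BF := by
    intro n hn y hy
    have k1 := hKconv.norm_image_sub_le_of_norm_hasDerivWithin_le (f := F) (f' := F') (C := BF)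
      (fun x hx => (hF x (hKsub hx)).hasDerivWithinAt) hBF (hmem c y (by simp) hy) (hmem (cn n) y (hcn1 n hn) hy)
    have k2 : ‖(cn n + y * I : ℂ) - (c + y * I)‖ = |cn n - c| := by
      rw [← Real.norm_eq_abs, ← Complex.norm_real]; congr 1; push_cast; ring
    rw [k2] at k1
    have k3 := (Complex.re_le_norm _).trans k1
    rw [sub_re] at k3
    have hn1 : (1 : ℝ) ≤ n := by exact_mod_cast le_of_max_le_right hn
    have k4 := hcn n (le_of_max_le_left hn)
    have k5 : n * (BF * |cn n - c|) ≤ BF := by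
      have : n * (BF * |cn n - c|) ≤ n * (BF * (1 / n)) := by gcongr
      refine this.trans (le_of_eq ?_)
      field_simp
    nlinarith
  have main : Tendsto (fun n : ℕ => ∫ σ : ℝ, g n (y0 + σ / Real.sqrt n)) atTop
      (𝓝 (∫ σ : ℝ, G x0 * exp (-(κ / 2) * (σ : ℂ) ^ 2))) := by
    refine tendsto_integral_filter_of_dominated_convergence
      (fun σ => Real.exp BF * BG * (1 + |K|) * Real.exp (-η * σ ^ 2)) ?_ ?_ ?_ ?_
    · filter_upwards [eventually_ge_atTop N0] with n hn
      have : Measurable (g n) := by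
        have h1 : ContinuousOn (fun y => exp (-(n * F x0)) * h n y) (Icc y1 y2) := continuousOn_const.mul (hm n hn)
        have h2 := h1.measurable_piecewise (g := (0 : ℝ → ℂ)) continuousOn_const measurableSet_Icc
        rw [Set.piecewise_eq_indicator] at h2
        exact h2
      exact (this.comp (by fun_prop)).aestronglyMeasurable
    · filter_upwards [eventually_ge_atTop (max N0 1)] with n hn
      refine Eventually.of_forall fun σ => ?_
      have hn0 : (0 : ℝ) < n := by exact_mod_cast (le_of_max_le_right hn)
      have hs : 0 < Real.sqrt n := Real.sqrt_pos.2 hn0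
      simp only [hg]
      by_cases hy : y0 + σ / Real.sqrt n ∈ Icc y1 y2
      · rw [indicator_of_mem hy]
        set y := y0 + σ / Real.sqrt n with hyd
        have hσ : n * (y - y0) ^ 2 = σ ^ 2 := by
          rw [hyd, add_sub_cancel_left, div_pow, Real.sq_sqrt hn0.le]; field_simp
        rw [he2 n (le_of_max_le_left hn) y hy]
        have e1 : exp (-(n * F x0)) * (exp (n * F (cn n + y * I)) * G (cn n + y * I) * (1 + e n y))
          = exp (-(n * F x0) + n * F (cn n + y * I)) * G (cn n + y * I) * (1 + e n y) := by
          rw [Complex.exp_add]; ring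
        rw [e1, norm_mul, norm_mul, Complex.norm_exp]
        have f1 : (-(n * F x0) + n * F (cn n + y * I)).re ≤ BF + -η * σ ^ 2 := by
          have g1 := hlip n hn y hy
          have g2 := hdec y hy
          have g3 : (-(n * F x0) + n * F (cn n + y * I)).re = -(n * (F x0).re) + n * (F (cn n + y * I)).re := by simp
          rw [g3, ← hσ]
          nlinarith
        have f2 := hBG _ (hmem (cn n) y (hcn1 n hn) hy)
        have f3 : ‖1 + e n y‖ ≤ 1 + |K| := by
          refine (norm_add_le _ _).trans ?_
          rw [norm_one]
          have := he1 n (le_of_max_le_left hn) y hy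
          have h1 : (1 : ℝ) ≤ n := by exact_mod_cast (le_of_max_le_right hn)
          have h2 : K / n ≤ |K| := by
            rw [div_le_iff₀ hn0]
            nlinarith [le_abs_self K, abs_nonneg K]
          linarith
        calc _ ≤ Real.exp (BF + -η * σ ^ 2) * BG * (1 + |K|) := by gcongr
          _ = _ := by rw [Real.exp_add]; ring
      · rw [indicator_of_notMem hy, norm_zero]
        positivity
    · exact (integrable_exp_neg_mul_sq hη).const_mul _
    · refine Eventually.of_forall fun σ => ?_
      have hsq : Tendsto (fun n : ℕ => Real.sqrt n) atTop atTop :=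
        Real.tendsto_sqrt_atTop.comp tendsto_natCast_atTop_atTop
      have hy : Tendsto (fun n : ℕ => y0 + σ / Real.sqrt n) atTop (𝓝 y0) := by
        simpa using (hsq.const_div_atTop σ).const_add y0
      have hev : ∀ᶠ n : ℕ in atTop, y0 + σ / Real.sqrt n ∈ Icc y1 y2 := hy (Icc_mem_nhds h01 h02)
      have hcnt : Tendsto cn atTop (𝓝 c) := by
        rw [tendsto_iff_dist_tendsto_zero]
        refine squeeze_zero' (Eventually.of_forall fun _ => dist_nonneg) ?_ tendsto_one_div_atTop_nhds_zero_nat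
        filter_upwards [eventually_ge_atTop N0] with n hn
        exact hcn n hn
      set xn : ℕ → ℂ := fun n => cn n + (y0 + σ / Real.sqrt n : ℝ) * I with hxn
      have hxt : Tendsto xn atTop (𝓝 x0) := by
        have t1 : Tendsto (fun n => (cn n : ℂ)) atTop (𝓝 (c : ℂ)) := (continuous_ofReal.tendsto c).comp hcnt
        have t2 : Tendsto (fun n : ℕ => ((y0 + σ / Real.sqrt n : ℝ) : ℂ)) atTop (𝓝 (y0 : ℂ)) := (continuous_ofReal.tendsto y0).comp hy
        exact t1.add (t2.mul_const I)
      have hx0i : 0 < x0.im := hKsub hx0K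
      have hopen : {x : ℂ | 0 < x.im} ∈ 𝓝 x0 := (isOpen_lt continuous_const continuous_im).mem_nhds hx0i
      have tG : Tendsto (fun n => G (xn n)) atTop (𝓝 (G x0)) := (hG.continuousAt hopen).tendsto.comp hxt
      have tw : Tendsto (fun n : ℕ => (Real.sqrt n : ℂ) * (xn n - x0)) atTop (𝓝 (σ * I)) := by
        have t1 : Tendsto (fun n : ℕ => Real.sqrt n * (cn n - c)) atTop (𝓝 0) := by
          rw [tendsto_zero_iff_abs_tendsto_zero]
          have hi : Tendsto (fun n : ℕ => 1 / Real.sqrt n) atTop (𝓝 0) := hsq.const_div_atTop 1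
          refine squeeze_zero' (Eventually.of_forall fun _ => abs_nonneg _) ?_ hi
          filter_upwards [eventually_ge_atTop (max N0 1)] with n hn
          have hn0 : (0 : ℝ) < n := by exact_mod_cast (le_of_max_le_right hn)
          have hs : 0 < Real.sqrt n := Real.sqrt_pos.2 hn0
          simp only [Function.comp, abs_mul, abs_of_pos hs]
          calc _ ≤ Real.sqrt n * (1 / n) := by gcongr; exact hcn n (le_of_max_le_left hn)
            _ = _ := by
              rw [mul_one_div, div_eq_div_iff hn0.ne' hs.ne', one_mul, Real.mul_self_sqrt hn0.le]
        have t2 : Tendsto (fun n : ℕ => ((Real.sqrt n * (cn n - c) : ℝ) : ℂ) + σ * I) atTop (𝓝 (((0 : ℝ) : ℂ) + σ * I)) :=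
          ((continuous_ofReal.tendsto 0).comp t1).add_const _
        rw [ofReal_zero, zero_add] at t2
        refine t2.congr' ?_
        filter_upwards [eventually_ge_atTop 1] with n hn
        have hs : (Real.sqrt n : ℂ) ≠ 0 := by
          have : 0 < Real.sqrt n := Real.sqrt_pos.2 (by exact_mod_cast hn)
          exact_mod_cast this.ne'
        simp only [hxn, hx0]
        push_cast
        field_simp
        ring
      have tw2 : Tendsto (fun n : ℕ => (n : ℂ) * (xn n - x0) ^ 2) atTop (𝓝 (-(σ : ℂ) ^ 2)) := by
        have := tw.pow 2
        rw [mul_pow, I_sq, mul_neg_one] at this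
        refine this.congr fun n => ?_
        rw [mul_pow]
        congr 1
        rw [← ofReal_pow, Real.sq_sqrt (by positivity)]; simp
      have tl := (taylor2 (F := F) (F' := F') (x0 := x0) (κ := κ)
        (by filter_upwards [hopen] with x hx using hF x hx) hF' h0).comp_tendsto hxt
      have tl2 : Tendsto (fun n : ℕ => (n : ℂ) * (F (xn n) - F x0 - κ / 2 * (xn n - x0) ^ 2)) atTop (𝓝 0) := by
        rw [← Asymptotics.isLittleO_one_iff ℂ]
        have := (Asymptotics.isBigO_refl (fun n : ℕ => (n : ℂ)) atTop).mul_isLittleO tl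
        exact this.trans_isBigO (tw2.isBigO_one ℂ)
      have tF : Tendsto (fun n : ℕ => (n : ℂ) * (F (xn n) - F x0)) atTop (𝓝 (-(κ / 2) * (σ : ℂ) ^ 2)) := by
        have := tl2.add (tw2.const_mul (κ / 2))
        have e1 : (0 : ℂ) + κ / 2 * -(σ : ℂ) ^ 2 = -(κ / 2) * (σ : ℂ) ^ 2 := by ring
        rw [e1] at this
        refine this.congr fun n => ?_
        ring
      have te : Tendsto (fun n : ℕ => e n (y0 + σ / Real.sqrt n)) atTop (𝓝 0) := by
        rw [tendsto_zero_iff_norm_tendsto_zero]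
        refine squeeze_zero' (Eventually.of_forall fun _ => norm_nonneg _) ?_ (tendsto_const_div_atTop_nhds_zero_nat K)
        filter_upwards [hev, eventually_ge_atTop N0] with n h1 h2
        exact he1 n h2 _ h1
      have tot := ((Complex.continuous_exp.tendsto _).comp tF).mul (tG.mul (te.const_add 1))
      have e1 : exp (-(κ / 2) * (σ : ℂ) ^ 2) * (G x0 * (1 + 0)) = G x0 * exp (-(κ / 2) * (σ : ℂ) ^ 2) := by ring
      rw [e1] at tot
      refine tot.congr' ?_
      filter_upwards [hev, eventually_ge_atTop N0] with n h1 h2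
      simp only [hg, Function.comp]
      rw [indicator_of_mem h1, he2 n h2 _ h1, mul_sub, Complex.exp_sub, Complex.exp_neg]
      simp only [hxn]
      field_simp
  have val : ∫ σ : ℝ, G x0 * exp (-(κ / 2) * (σ : ℂ) ^ 2) = G x0 * (2 * Real.pi / κ) ^ (1 / 2 : ℂ) := by
    rw [integral_const_mul, integral_gaussian_complex (by simpa using hκ)]
    congr 2
    have : κ ≠ 0 := by rintro rfl; simp at hκ
    field_simp
  rw [val] at main
  refine main.congr' ?_
  filter_upwards [eventually_ge_atTop 1] with n hn
  exact (cv n hn).symm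

end Z18
end SecP5

section SecP6
namespace Z18
open Complex MeasureTheory Filter Topology Set

noncomputable def Ph (a r : ℕ) (x : ℂ) : ℂ := Phf a r x + 2 * Real.pi * I * x

noncomputable def Phd (a r : ℕ) (x : ℂ) : ℂ :=
  3 * (log (x - 1) - log (x - (2 * r + 1))) + 3 * (log (x + (2 * r + 1)) - log (x + 1))
    - a * (log (x + 1) - log (x - 1)) + 2 * Real.pi * I

noncomputable def Phdd (a r : ℕ) (x : ℂ) : ℂ :=
  3 * ((x - 1)⁻¹ - (x - (2 * r + 1))⁻¹) + 3 * ((x + (2 * r + 1))⁻¹ - (x + 1)⁻¹)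
    - a * ((x + 1)⁻¹ - (x - 1)⁻¹)

lemma slit_im {x : ℂ} (h : 0 < x.im) : x ∈ slitPlane := Or.inr h.ne'

lemma Pf_deriv {x : ℂ} (h : x ∈ slitPlane) : HasDerivAt Pf (log x) x := by
  have h1 := ((hasDerivAt_id x).mul (hasDerivAt_log h)).sub (hasDerivAt_id x)
  have h0 : x ≠ 0 := slitPlane_ne_zero h
  refine HasDerivAt.congr_deriv (f := Pf) h1 ?_
  simp [h0]

lemma Pf_shift {x b : ℂ} (h : x + b ∈ slitPlane) : HasDerivAt (fun x => Pf (x + b)) (log (x + b)) x := by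
  simpa using (Pf_deriv h).comp_add_const x b

lemma log_shift {x b : ℂ} (h : x + b ∈ slitPlane) : HasDerivAt (fun x => log (x + b)) ((x + b)⁻¹) x := by
  simpa using (hasDerivAt_log h).comp_add_const x b

lemma Ph_deriv (a r : ℕ) {x : ℂ} (h : 0 < x.im) : HasDerivAt (Ph a r) (Phd a r x) x := by
  have k : ∀ b : ℝ, x + b ∈ slitPlane := fun b => slit_im (by simpa using h)
  have k1 := Pf_shift (k 1)
  have k2 := Pf_shift (k (-1))
  have k3 := Pf_shift (k (2 * r + 1))
  have k4 := Pf_shift (k (-(2 * r + 1)))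
  push_cast at k1 k2 k3 k4
  simp only [← sub_eq_add_neg] at k1 k2 k3 k4
  have := ((((k2.sub k4).const_mul 3).add ((k3.sub k1).const_mul 3)).sub ((k1.sub k2).const_mul (a : ℂ))).add
    ((hasDerivAt_id x).const_mul (2 * Real.pi * I))
  refine HasDerivAt.congr_deriv (f := Ph a r) this ?_
  unfold Phd; ring

lemma Phd_deriv (a r : ℕ) {x : ℂ} (h : 0 < x.im) : HasDerivAt (Phd a r) (Phdd a r x) x := by
  have k : ∀ b : ℝ, x + b ∈ slitPlane := fun b => slit_im (by simpa using h)
  have k1 := log_shift (k 1)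
  have k2 := log_shift (k (-1))
  have k3 := log_shift (k (2 * r + 1))
  have k4 := log_shift (k (-(2 * r + 1)))
  push_cast at k1 k2 k3 k4
  simp only [← sub_eq_add_neg] at k1 k2 k3 k4
  have := ((((k2.sub k4).const_mul 3).add ((k3.sub k1).const_mul 3)).sub ((k1.sub k2).const_mul (a : ℂ))).add_const
    (2 * Real.pi * I)
  exact HasDerivAt.congr_deriv (f := Phd a r) this (by unfold Phdd; ring)

lemma lA_cont (a r : ℕ) : ContinuousOn (fun x => exp (lA a r x)) {x : ℂ | 0 < x.im} := by
  intro x h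
  have k : ∀ b : ℝ, x + b ∈ slitPlane := fun b => slit_im (by have : 0 < x.im := h; simpa using this)
  have k1 := (log_shift (k 1)).continuousAt
  have k2 := (log_shift (k (-1))).continuousAt
  have k3 := (log_shift (k (2 * r + 1))).continuousAt
  have k4 := (log_shift (k (-(2 * r + 1)))).continuousAt
  push_cast at k1 k2 k3 k4
  simp only [← sub_eq_add_neg] at k1 k2 k3 k4
  have := ((k2.add k1).const_mul (-(((a : ℂ) + 3) / 2))).add ((k4.add k3).const_mul (3 / 2))
  exact (ContinuousAt.comp Complex.continuous_exp.continuousAt this).continuousWithinAt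

noncomputable def Mn (a r n : ℕ) : ℝ := (12 * r * n - 2 * a * n - a) * Real.log n

noncomputable def qn (c : ℝ) (n : ℕ) : ℝ := (⌊c * n⌋₊ : ℝ) + 1 / 2

noncomputable def cnn (c : ℝ) (n : ℕ) : ℝ := qn c n / n

lemma cnn_close {c : ℝ} (hc : 0 ≤ c) (n : ℕ) (hn : 0 < n) : |cnn c n - c| ≤ 1 / n := by
  have hn' : (0 : ℝ) < n := by exact_mod_cast hn
  have h1 := Nat.floor_le (show 0 ≤ c * n by positivity)
  have h2 := Nat.lt_floor_add_one (c * n)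
  have : cnn c n - c = (qn c n - c * n) / n := by unfold cnn; field_simp
  rw [this, abs_div, abs_of_pos hn']
  gcongr
  unfold qn
  rw [abs_le]; constructor <;> linarith

lemma n_cnn (c : ℝ) (n : ℕ) (hn : 0 < n) (y : ℝ) : (n : ℂ) * (cnn c n + y * I) = qn c n + (n * y : ℝ) * I := by
  have hn' : (n : ℂ) ≠ 0 := by exact_mod_cast hn.ne'
  unfold cnn; push_cast; field_simp

lemma cnn_tendsto {c : ℝ} (hc : 0 ≤ c) : Tendsto (cnn c) atTop (𝓝 c) := by
  rw [tendsto_iff_dist_tendsto_zero]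
  refine squeeze_zero' (Eventually.of_forall fun _ => dist_nonneg) ?_ tendsto_one_div_atTop_nhds_zero_nat
  filter_upwards [eventually_ge_atTop 1] with n hn
  exact cnn_close hc n hn

lemma point_bound (a r : ℕ) {c y : ℝ} (hc : 0 ≤ c) (hy : 0 < y) : ∃ C : ℝ, 0 < C ∧ ∀ᶠ n : ℕ in atTop,
    ‖cf a r n (qn c n + (n * y : ℝ) * I)‖ ≤ C * Real.exp (Mn a r n + n * ((Ph a r (c + y * I)).re + 2 * Real.pi * y)) := by
  set x1 : ℂ := c + y * I with hx1
  have him : 0 < x1.im := by simp [hx1, hy]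
  set xn : ℕ → ℂ := fun n => cnn c n + y * I with hxn
  have hxt : Tendsto xn atTop (𝓝 x1) :=
    ((continuous_ofReal.tendsto c).comp (cnn_tendsto hc)).add_const _
  have hxim : ∀ n, (xn n).im = y := by intro n; simp [hxn]
  obtain ⟨B, hB0, hB⟩ := (((Ph_deriv a r him).isBigO_sub).comp_tendsto hxt).exists_pos
  have hopen : {x : ℂ | 0 < x.im} ∈ 𝓝 x1 := (isOpen_lt continuous_const continuous_im).mem_nhds him
  have tA := (((lA_cont a r).continuousAt hopen).tendsto.comp hxt).norm
  have hA := tA.eventually_le_const (lt_add_one _)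
  refine ⟨Real.exp B * (‖exp (lA a r x1)‖ + 1) * Real.exp 1, by positivity, ?_⟩
  have hbig : ∀ᶠ n : ℕ in atTop, max (2 / y) ((24 * r + 4 * a) / y ^ 2) ≤ (n : ℝ) :=
    tendsto_natCast_atTop_atTop.eventually_ge_atTop _
  filter_upwards [hB.bound, hA, hbig, eventually_ge_atTop 1] with n h1 h2 h3 hn
  have hn0 : (0 : ℝ) < n := by exact_mod_cast hn
  have h3a : 2 ≤ n * y := by
    have := le_of_max_le_left h3
    rwa [div_le_iff₀ hy] at this
  have h3b : (24 * r + 4 * a) / (n * y ^ 2) ≤ 1 := by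
    have := le_of_max_le_right h3
    rw [div_le_iff₀ (by positivity)] at this
    rw [div_le_one (by positivity)]; exact this
  obtain ⟨e, he, hcf⟩ := cf_exp a r n hn (x := xn n) (by rw [hxim]; exact hy) (by rw [hxim]; exact h3a)
  rw [hxim] at he
  have : (n : ℂ) * xn n = qn c n + (n * y : ℝ) * I := n_cnn c n hn y
  rw [← this, hcf, Complex.norm_exp]
  have r1 : (((((12 * r * n - 2 * a * n - a : ℝ) * Real.log n : ℝ) : ℂ) + n * Phf a r (xn n) + lA a r (xn n) + e)).re
      = Mn a r n + n * (Phf a r (xn n)).re + (lA a r (xn n)).re + e.re := by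
    have : ((n : ℂ) * Phf a r (xn n)).re = n * (Phf a r (xn n)).re := by simp
    rw [add_re, add_re, add_re, ofReal_re, this]; rfl
  rw [r1]
  have r2 : (Phf a r (xn n)).re = (Ph a r (xn n)).re + 2 * Real.pi * y := by
    unfold Ph; simp [hxn]
  have r3 : n * (Ph a r (xn n)).re ≤ n * (Ph a r x1).re + B := by
    have k1 : ‖Ph a r (xn n) - Ph a r x1‖ ≤ B * ‖xn n - x1‖ := h1
    have k2 : ‖xn n - x1‖ ≤ 1 / n := by
      have : xn n - x1 = ((cnn c n - c : ℝ) : ℂ) := by simp [hxn, hx1]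
      rw [this, Complex.norm_real]; exact cnn_close hc n hn
    have k3 := (Complex.re_le_norm _).trans k1
    rw [sub_re] at k3
    have k4 : n * (B * ‖xn n - x1‖) ≤ B := by
      calc _ ≤ n * (B * (1 / n)) := by gcongr
        _ = B := by field_simp
    nlinarith
  have r4 : Real.exp ((lA a r (xn n)).re) ≤ ‖exp (lA a r x1)‖ + 1 := by
    rw [← Complex.norm_exp]; exact h2
  have r5 : e.re ≤ 1 := (Complex.re_le_norm e).trans (he.trans h3b)
  rw [r2]
  calc _ ≤ Real.exp ((Mn a r n + n * ((Ph a r x1).re + 2 * Real.pi * y)) + B + (lA a r (xn n)).re + 1) := by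
        apply Real.exp_le_exp.2; nlinarith
    _ = Real.exp (Mn a r n + n * ((Ph a r x1).re + 2 * Real.pi * y)) * Real.exp B * Real.exp ((lA a r (xn n)).re) * Real.exp 1 := by
        rw [Real.exp_add, Real.exp_add, Real.exp_add]
    _ ≤ Real.exp (Mn a r n + n * ((Ph a r x1).re + 2 * Real.pi * y)) * Real.exp B * (‖exp (lA a r x1)‖ + 1) * Real.exp 1 := by
        gcongr
    _ = _ := by ring

end Z18
end SecP6

section SecP7
namespace Z18
open Complex MeasureTheory Filter Topology Set

noncomputable def In (a r : ℕ) (c : ℝ) (n : ℕ) : ℂ :=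
  ∫ s in Ioi (0 : ℝ), cf a r n (qn c n + s * I) * kap (qn c n + s * I)

lemma kap_bd : ∃ B : ℝ, 0 < B ∧ ∀ (c : ℝ) (n : ℕ) (s : ℝ), ‖kap (qn c n + s * I)‖ ≤ B := by
  refine ⟨(∑' m : ℤ, 1 / |((0 : ℝ) + 1 / 2) + m| ^ 3) + 1, ?_, ?_⟩
  · have : 0 ≤ ∑' m : ℤ, 1 / |((0 : ℝ) + 1 / 2) + m| ^ 3 := tsum_nonneg fun m => by positivity
    linarith
  · intro c n s
    have := kap_bound (⌊c * n⌋₊ : ℤ) s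
    unfold qn
    push_cast at this ⊢
    linarith

lemma kap_cont (c : ℝ) (n : ℕ) : Continuous (fun s : ℝ => kap (qn c n + s * I)) := by
  have := kap_meas (⌊c * n⌋₊ : ℤ)
  unfold qn
  push_cast at this ⊢
  exact this

lemma qn_ge {c : ℝ} (hc : 3 ≤ c) {n : ℕ} (hn : 0 < n) : 2 * (n : ℝ) ≤ qn c n := by
  have hn' : (1 : ℝ) ≤ n := by exact_mod_cast hn
  have h2 := Nat.lt_floor_add_one (c * n)
  unfold qn
  nlinarith

lemma cf_line (a r n : ℕ) (ha : 6 * r + 2 ≤ a) {q : ℝ} (hq : n < q) :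
    Continuous (fun s : ℝ => cf a r n (q + s * I)) ∧ Integrable (fun s : ℝ => cf a r n (q + s * I)) := by
  obtain ⟨C, R₀, hd⟩ := cf_decay a r n ha
  exact line_int (fun t ht => cf_diff a r n t (Or.inl (by linarith))) (fun t _ ht => hd t ht)

lemma int_full (a r n : ℕ) (ha : 6 * r + 2 ≤ a) {c : ℝ} (hc : 3 ≤ c) (hn : 0 < n) :
    Integrable (fun s : ℝ => cf a r n (qn c n + s * I) * kap (qn c n + s * I)) ∧
    Continuous (fun s : ℝ => cf a r n (qn c n + s * I) * kap (qn c n + s * I)) := by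
  have hn' : (1 : ℝ) ≤ n := by exact_mod_cast hn
  have h := cf_line a r n ha (q := qn c n) (by have := qn_ge hc hn; linarith)
  obtain ⟨B, hB, hk⟩ := kap_bd
  refine ⟨?_, h.1.mul (kap_cont c n)⟩
  refine h.2.mul_bdd (c := B) (kap_cont c n).aestronglyMeasurable ?_
  exact Eventually.of_forall fun s => hk c n s

/-- left edge -/
lemma left_edge (a r : ℕ) (ha : 6 * r + 2 ≤ a) {c y1 : ℝ} (hc : 3 ≤ c) (hy : 0 < y1) :
    ∃ C : ℝ, 0 < C ∧ ∀ᶠ n : ℕ in atTop,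
      ‖∫ s in Ioc (0 : ℝ) (n * y1), cf a r n (qn c n + s * I) * kap (qn c n + s * I)‖ ≤
        C * n * Real.exp (Mn a r n + n * ((Ph a r (c + y1 * I)).re + 2 * Real.pi * y1 + 2 * a * y1 ^ 2)) := by
  obtain ⟨C, hC, h⟩ := point_bound a r (c := c) (y := y1) (by linarith) hy
  obtain ⟨B, hB, hk⟩ := kap_bd
  refine ⟨C * B * y1, by positivity, ?_⟩
  filter_upwards [h, eventually_ge_atTop 1] with n h1 hn
  have hn0 : (0 : ℝ) < n := by exact_mod_cast hn
  set E := Real.exp (Mn a r n + n * ((Ph a r (c + y1 * I)).re + 2 * Real.pi * y1 + 2 * a * y1 ^ 2)) with hE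
  have hb : ∀ s ∈ Ioc (0 : ℝ) (n * y1), ‖cf a r n (qn c n + s * I) * kap (qn c n + s * I)‖ ≤ C * E * B := by
    intro s hs
    rw [norm_mul]
    have h2 := cf_left a r n hn (qn_ge hc hn) hs.1.le hy hs.2
    have h3 : ‖cf a r n (qn c n + s * I)‖ ≤ C * E := by
      refine h2.trans ?_
      calc _ ≤ Real.exp (2 * a * n * y1 ^ 2) * (C * Real.exp (Mn a r n + n * ((Ph a r (c + y1 * I)).re + 2 * Real.pi * y1))) := by
            gcongr
        _ = C * E := by
            rw [hE, mul_left_comm, ← Real.exp_add]; congr 2; ring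
    exact mul_le_mul h3 (hk c n s) (norm_nonneg _) (by positivity)
  refine (norm_setIntegral_le_of_norm_le_const measure_Ioc_lt_top hb).trans (le_of_eq ?_)
  simp [Measure.real, hn0.le, hy.le]
  ring

lemma right_edge (a r : ℕ) (ha : 6 * r + 2 ≤ a) {c y2 : ℝ} (hc : 3 ≤ c) (hy : 0 < y2) (hy2 : 12 * r ≤ Real.pi * y2) :
    ∃ C : ℝ, 0 < C ∧ ∀ᶠ n : ℕ in atTop,
      ‖∫ s in Ioi (n * y2 : ℝ), cf a r n (qn c n + s * I) * kap (qn c n + s * I)‖ ≤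
        C * Real.exp (Mn a r n + n * (Ph a r (c + y2 * I)).re) := by
  obtain ⟨C, hC, h⟩ := point_bound a r (c := c) (y := y2) (by linarith) hy
  obtain ⟨K, hK, hk⟩ := kap_exp
  refine ⟨C * (4 * Real.pi ^ 3 * (1 + K)) * (1 / Real.pi), by positivity, ?_⟩
  have hbig : ∀ᶠ n : ℕ in atTop, 1 / y2 ≤ (n : ℝ) := tendsto_natCast_atTop_atTop.eventually_ge_atTop _
  filter_upwards [h, eventually_ge_atTop 1, hbig] with n h1 hn hb
  have hn0 : (0 : ℝ) < n := by exact_mod_cast hn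
  rw [div_le_iff₀ hy] at hb
  set s2 : ℝ := n * y2 with hs2
  set P := C * (4 * Real.pi ^ 3 * (1 + K)) * Real.exp (Mn a r n + n * (Ph a r (c + y2 * I)).re) with hP
  have hs20 : 0 < s2 := by positivity
  have hpi := Real.pi_pos
  have hbd : ∀ s ∈ Ioi s2, ‖cf a r n (qn c n + s * I) * kap (qn c n + s * I)‖ ≤ P * Real.exp (Real.pi * s2) * Real.exp (-Real.pi * s) := by
    intro s hs
    have hs' : s2 < s := hs
    rw [norm_mul]
    have k1 := cf_right a r n (q := qn c n) hs20 hs'.le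
    obtain ⟨e, he, hke⟩ := hk (qn c n + s * I) (by simp; linarith)
    have k2 : ‖kap (qn c n + s * I)‖ ≤ 4 * Real.pi ^ 3 * (1 + K) * Real.exp (-(2 * Real.pi * s)) := by
      rw [hke, norm_mul, norm_mul, Complex.norm_exp]
      have e1 : (2 * Real.pi * I * (qn c n + s * I)).re = -(2 * Real.pi * s) := by simp
      have e2 : ‖(4 : ℂ) * Real.pi ^ 3 * I‖ = 4 * Real.pi ^ 3 := by
        simp [abs_of_pos hpi]
      have e3 : ‖1 + e‖ ≤ 1 + K := by
        refine (norm_add_le _ _).trans ?_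
        rw [norm_one]
        have : ((qn c n : ℂ) + s * I).im = s := by simp
        rw [this] at he
        have : K / s ≤ K := div_le_self hK.le (by linarith)
        linarith
      rw [e1, e2, mul_right_comm]
      gcongr
    have k3 : (s / s2) ^ (12 * r * n) ≤ Real.exp (Real.pi * (s - s2)) := by
      have m1 : s / s2 ≤ Real.exp ((s - s2) / s2) := by
        have := Real.add_one_le_exp ((s - s2) / s2)
        have e : (s - s2) / s2 + 1 = s / s2 := by field_simp; ring
        rwa [e] at this
      calc (s / s2) ^ (12 * r * n) ≤ Real.exp ((s - s2) / s2) ^ (12 * r * n) := by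
            apply pow_le_pow_left₀ (div_nonneg (by linarith) hs20.le) m1
        _ = Real.exp ((12 * r * n : ℕ) * ((s - s2) / s2)) := by rw [Real.exp_nat_mul]
        _ ≤ _ := by
            apply Real.exp_le_exp.2
            push_cast
            rw [mul_div_assoc', div_le_iff₀ hs20]
            have : (12 * r * n : ℝ) ≤ Real.pi * s2 := by rw [hs2]; nlinarith
            nlinarith
    calc _ ≤ (Real.exp (Real.pi * (s - s2)) * (C * Real.exp (Mn a r n + n * ((Ph a r (c + y2 * I)).re + 2 * Real.pi * y2))))
          * (4 * Real.pi ^ 3 * (1 + K) * Real.exp (-(2 * Real.pi * s))) := by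
          refine mul_le_mul (k1.trans ?_) k2 (norm_nonneg _) (by positivity)
          gcongr
      _ = C * (4 * Real.pi ^ 3 * (1 + K)) * (Real.exp (Real.pi * (s - s2)) * Real.exp (Mn a r n + n * ((Ph a r (c + y2 * I)).re + 2 * Real.pi * y2)) * Real.exp (-(2 * Real.pi * s))) := by ring
      _ = C * (4 * Real.pi ^ 3 * (1 + K)) * (Real.exp (Mn a r n + n * (Ph a r (c + y2 * I)).re) * Real.exp (Real.pi * s2) * Real.exp (-Real.pi * s)) := by
          rw [← Real.exp_add, ← Real.exp_add, ← Real.exp_add, ← Real.exp_add]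
          congr 2; rw [hs2]; ring
      _ = _ := by rw [hP]; ring
  have hint : IntegrableOn (fun s => P * Real.exp (Real.pi * s2) * Real.exp (-Real.pi * s)) (Ioi s2) :=
    (exp_neg_integrableOn_Ioi s2 hpi).const_mul _
  refine (norm_integral_le_of_norm_le hint ((ae_restrict_iff' measurableSet_Ioi).2 (Eventually.of_forall hbd))).trans (le_of_eq ?_)
  rw [integral_const_mul, integral_exp_mul_Ioi (by linarith)]
  have : Real.exp (Real.pi * s2) * Real.exp (-Real.pi * s2) = 1 := by rw [← Real.exp_add]; simp
  rw [neg_div_neg_eq, mul_assoc, mul_div_assoc', this, hP]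
  ring

lemma mid_change (a r n : ℕ) (c y1 y2 : ℝ) (h12 : y1 ≤ y2) (hn : 0 < n) :
    ∫ s in Ioc (n * y1 : ℝ) (n * y2), cf a r n (qn c n + s * I) * kap (qn c n + s * I) =
    n * ∫ y in Icc y1 y2, cf a r n (n * (cnn c n + y * I)) * kap (n * (cnn c n + y * I)) := by
  have hn0 : (0 : ℝ) < n := by exact_mod_cast hn
  rw [integral_Icc_eq_integral_Ioc, ← intervalIntegral.integral_of_le h12,
    ← intervalIntegral.integral_of_le (by gcongr)]
  have := intervalIntegral.smul_integral_comp_mul_left (a := y1) (b := y2)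
    (fun s : ℝ => cf a r n (qn c n + s * I) * kap (qn c n + s * I)) (n : ℝ)
  rw [← this, Complex.real_smul]
  simp only [n_cnn c n hn]
  simp

end Z18
end SecP7

section SecP8
namespace Z18
open Complex MeasureTheory Filter Topology Set

lemma small_edge {C θ g0 : ℝ} (hθ : 0 < θ) {X : ℕ → ℂ} {M : ℕ → ℝ} (x0 : ℂ) (hx0 : x0.re = g0)
    (h : ∀ᶠ n : ℕ in atTop, ‖X n‖ ≤ C * n * Real.exp (M n + n * (g0 - θ))) :
    Tendsto (fun n : ℕ => (Real.sqrt n : ℂ)⁻¹ * exp (-(M n : ℂ)) * exp (-(n * x0)) * X n) atTop (𝓝 0) := by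
  rw [tendsto_zero_iff_norm_tendsto_zero]
  have hz : Tendsto (fun n : ℕ => C * ((n : ℝ) ^ 1 * Real.exp (-θ * n))) atTop (𝓝 0) := by
    have := (Real.tendsto_pow_mul_exp_neg_atTop_nhds_zero 1).comp ((tendsto_natCast_atTop_atTop (R := ℝ)).const_mul_atTop hθ)
    have h2 := this.const_mul (C * θ⁻¹)
    rw [mul_zero] at h2
    refine h2.congr fun n => ?_
    simp only [Function.comp]
    field_simp
  refine squeeze_zero' (Eventually.of_forall fun _ => norm_nonneg _) ?_ hz
  filter_upwards [h, eventually_ge_atTop 1] with n h1 hn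
  have hn1 : (1 : ℝ) ≤ n := by exact_mod_cast hn
  rw [norm_mul, norm_mul, norm_mul, Complex.norm_exp, Complex.norm_exp, norm_inv, Complex.norm_real,
    Real.norm_of_nonneg (Real.sqrt_nonneg _)]
  have e1 : (-(n * x0)).re = -(n * g0) := by simp [hx0]
  rw [e1, neg_re, ofReal_re]
  have hs : 1 ≤ Real.sqrt n := by rw [Real.one_le_sqrt]; exact hn1
  have hs' : (Real.sqrt n)⁻¹ ≤ 1 := inv_le_one_of_one_le₀ hs
  calc _ ≤ 1 * Real.exp (-M n) * Real.exp (-(n * g0)) * (C * n * Real.exp (M n + n * (g0 - θ))) := by gcongr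
    _ = C * n * (Real.exp (-M n) * Real.exp (-(n * g0)) * Real.exp (M n + n * (g0 - θ))) := by ring
    _ = _ := by
      rw [← Real.exp_add, ← Real.exp_add, pow_one, mul_assoc]; congr 3; ring

theorem In_asymp (a r : ℕ) (ha : 6 * r + 2 ≤ a) {c y0 y2 η : ℝ} (hc : 3 ≤ c) (hy0 : 0 < y0)
    (hd0 : Phd a r (c + y0 * I) = 0) (hκ : 0 < (Phdd a r (c + y0 * I)).re) (hη : 0 < η) (h02 : y0 < y2)
    (hy2 : 12 * r ≤ Real.pi * y2)
    (hdec : ∀ y ∈ Ioc 0 y2, (Ph a r (c + y * I)).re ≤ (Ph a r (c + y0 * I)).re - η * (y - y0) ^ 2) :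
    Tendsto (fun n : ℕ => (Real.sqrt n : ℂ)⁻¹ * exp (-(Mn a r n : ℂ)) * exp (-(n * Ph a r (c + y0 * I))) * In a r c n)
      atTop (𝓝 (4 * Real.pi ^ 3 * I *
        (exp (lA a r (c + y0 * I)) * (2 * Real.pi / Phdd a r (c + y0 * I)) ^ (1 / 2 : ℂ)))) := by
  have hpi := Real.pi_pos
  set x0 : ℂ := c + y0 * I with hx0
  set g0 := (Ph a r x0).re with hg0
  have hx0i : 0 < x0.im := by simp [hx0, hy0]
  -- choose y1
  obtain ⟨y1, hy1, hy10, hy1b⟩ : ∃ y1 : ℝ, 0 < y1 ∧ y1 < y0 ∧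
      2 * Real.pi * y1 + 2 * a * y1 ^ 2 - η * (y1 - y0) ^ 2 < -(η * y0 ^ 2 / 2) := by
    have hcont : Tendsto (fun y : ℝ => 2 * Real.pi * y + 2 * a * y ^ 2 - η * (y - y0) ^ 2) (𝓝[>] 0)
        (𝓝 (2 * Real.pi * 0 + 2 * a * 0 ^ 2 - η * (0 - y0) ^ 2)) :=
      ((by fun_prop : Continuous (fun y : ℝ => 2 * Real.pi * y + 2 * a * y ^ 2 - η * (y - y0) ^ 2)).tendsto 0).mono_left nhdsWithin_le_nhds
    have h1 := hcont.eventually_lt_const (u := -(η * y0 ^ 2 / 2)) (by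
      have : 0 < η * y0 ^ 2 := by positivity
      nlinarith)
    have h2 : ∀ᶠ y : ℝ in 𝓝[>] 0, y ∈ Ioo 0 y0 := Ioo_mem_nhdsGT hy0
    obtain ⟨y, h3, h4⟩ := (h1.and h2).exists
    exact ⟨y, h4.1, h4.2, h3⟩
  have hy20 : 0 < y2 := by linarith
  have hL : Tendsto (fun n : ℕ => (Real.sqrt n : ℂ)⁻¹ * exp (-(Mn a r n : ℂ)) * exp (-(n * Ph a r x0)) *
      ∫ s in Ioc (0 : ℝ) (n * y1), cf a r n (qn c n + s * I) * kap (qn c n + s * I)) atTop (𝓝 0) := by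
    obtain ⟨C, hC, h⟩ := left_edge a r ha hc hy1
    refine small_edge (C := C) (θ := η * y0 ^ 2 / 2) (g0 := g0) (by positivity) (Ph a r x0) rfl ?_
    filter_upwards [h] with n hn
    refine hn.trans ?_
    gcongr
    have := hdec y1 ⟨hy1, by linarith⟩
    linarith
  have hR : Tendsto (fun n : ℕ => (Real.sqrt n : ℂ)⁻¹ * exp (-(Mn a r n : ℂ)) * exp (-(n * Ph a r x0)) *
      ∫ s in Ioi (n * y2 : ℝ), cf a r n (qn c n + s * I) * kap (qn c n + s * I)) atTop (𝓝 0) := by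
    obtain ⟨C, hC, h⟩ := right_edge a r ha hc hy20 hy2
    refine small_edge (C := C) (θ := η * (y2 - y0) ^ 2) (g0 := g0) (by have : 0 < y2 - y0 := by linarith
                                                                       positivity) (Ph a r x0) rfl ?_
    filter_upwards [h, eventually_ge_atTop 1] with n hn hn1
    have hn1' : (1 : ℝ) ≤ n := by exact_mod_cast hn1
    refine hn.trans ?_
    have := hdec y2 ⟨hy20, le_refl _⟩
    calc _ ≤ C * 1 * Real.exp (Mn a r n + n * (g0 - η * (y2 - y0) ^ 2)) := by rw [mul_one]; gcongr
      _ ≤ _ := by gcongr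
  obtain ⟨K, hK, hk⟩ := kap_exp
  obtain ⟨N0, hN0⟩ := exists_nat_ge (max 1 (max (2 / y1) ((24 * r + 4 * a) / y1 ^ 2)))
  have hbig : ∀ n ≥ N0, 0 < n ∧ 2 ≤ n * y1 ∧ (24 * r + 4 * a) / (n * y1 ^ 2) ≤ 1 := by
    intro n hn
    have hn' : (N0 : ℝ) ≤ n := by exact_mod_cast hn
    have h1 := (hN0.trans hn')
    have h2 := le_of_max_le_left h1
    have h3 := le_of_max_le_left (le_of_max_le_right h1)
    have h4 := le_of_max_le_right (le_of_max_le_right h1)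
    have hn0 : (0 : ℝ) < n := by linarith
    rw [div_le_iff₀ (by positivity)] at h3 h4
    refine ⟨by exact_mod_cast hn0, h3, ?_⟩
    rw [div_le_one (by positivity)]; exact h4
  set D : ℂ := 4 * Real.pi ^ 3 * I with hD
  have hD0 : D ≠ 0 := by
    have : (Real.pi : ℂ) ≠ 0 := by exact_mod_cast hpi.ne'
    simp [hD, this]
  have hMid := laplace (F := Ph a r) (F' := Phd a r) (G := fun x => exp (lA a r x)) (c := c) (y0 := y0) (y1 := y1) (y2 := y2)
    (η := η) (K := 2 * (24 * r + 4 * a) / y1 ^ 2 + 3 * (K / y1)) (κ := Phdd a r x0) (N0 := N0)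
    (fun x hx => Ph_deriv a r hx) (fun x hx => (Phd_deriv a r hx).continuousAt.continuousWithinAt)
    (Phd_deriv a r hx0i) hd0 hκ (lA_cont a r) hy1 hy10 h02 hη
    (fun y hy => hdec y ⟨by linarith [hy.1], hy.2⟩) (cnn c) (fun n hn => cnn_close (by linarith) n (hbig n hn).1)
    (fun n y => exp (-(Mn a r n : ℂ)) * D⁻¹ * (cf a r n (n * (cnn c n + y * I)) * kap (n * (cnn c n + y * I)))) ?_ ?_
  · have hMid2 := hMid.const_mul D
    have hM : Tendsto (fun n : ℕ => (Real.sqrt n : ℂ)⁻¹ * exp (-(Mn a r n : ℂ)) * exp (-(n * Ph a r x0)) *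
      ∫ s in Ioc (n * y1 : ℝ) (n * y2), cf a r n (qn c n + s * I) * kap (qn c n + s * I)) atTop
        (𝓝 (D * (exp (lA a r x0) * (2 * Real.pi / Phdd a r x0) ^ (1 / 2 : ℂ)))) := by
      refine hMid2.congr' ?_
      filter_upwards [eventually_ge_atTop N0] with n hn
      have hn0 := (hbig n hn).1
      have hnr : (0 : ℝ) < n := by exact_mod_cast hn0
      rw [mid_change a r n c y1 y2 (by linarith) hn0, integral_const_mul]
      have hs : (Real.sqrt n : ℂ) ≠ 0 := by exact_mod_cast (Real.sqrt_pos.2 hnr).ne'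
      have hs2 : (Real.sqrt n : ℂ) * Real.sqrt n = n := by
        rw [← ofReal_mul, Real.mul_self_sqrt hnr.le]; simp
      have hs3 : (Real.sqrt n : ℂ)⁻¹ * n = Real.sqrt n := by rw [inv_mul_eq_iff_eq_mul₀ hs, hs2]
      rw [← hx0]
      generalize (∫ s in Icc y1 y2, cf a r n (n * (cnn c n + s * I)) * kap (n * (cnn c n + s * I))) = J
      have hDD := mul_inv_cancel₀ hD0
      clear_value D
      linear_combination (exp (-(n * Ph a r x0)) * exp (-(Mn a r n : ℂ)) * Real.sqrt n * J) * hDD - (exp (-(n * Ph a r x0)) * exp (-(Mn a r n : ℂ)) * J) * hs3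
    have tot := (hL.add hM).add hR
    rw [zero_add, add_zero] at tot
    refine tot.congr' ?_
    filter_upwards [eventually_ge_atTop N0] with n hn
    have hn0 := (hbig n hn).1
    have hnr : (0 : ℝ) < n := by exact_mod_cast hn0
    obtain ⟨hint, -⟩ := int_full a r n ha hc hn0
    have e1 : Ioi (0 : ℝ) = Ioc 0 (n * y1) ∪ (Ioc (n * y1) (n * y2) ∪ Ioi (n * y2)) := by
      rw [Ioc_union_Ioi_eq_Ioi (by gcongr; linarith), Ioc_union_Ioi_eq_Ioi (by positivity)]
    unfold In
    rw [e1, setIntegral_union _ (measurableSet_Ioc.union measurableSet_Ioi) hint.integrableOn hint.integrableOn,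
      setIntegral_union _ measurableSet_Ioi hint.integrableOn hint.integrableOn]
    · ring
    · rw [Set.disjoint_left]; intro x h1 h2
      exact not_lt.2 h1.2 h2
    · rw [Ioc_union_Ioi_eq_Ioi (by gcongr; linarith), Set.disjoint_left]; intro x h1 h2
      exact not_lt.2 h1.2 h2
  · intro n hn y hy
    obtain ⟨hn0, hn2, hn3⟩ := hbig n hn
    have hnr : (0 : ℝ) < n := by exact_mod_cast hn0
    set x : ℂ := cnn c n + y * I with hx
    have hxi : x.im = y := by simp [hx]
    have hyp : 0 < y := by linarith [hy.1]
    have hny : n * y1 ≤ n * y := by gcongr; exact hy.1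
    obtain ⟨e, he, hcf⟩ := cf_exp a r n hn0 (x := x) (by rw [hxi]; exact hyp) (by rw [hxi]; linarith)
    obtain ⟨e2, he2, hkk⟩ := hk (n * x) (by simp [hxi]; linarith)
    have hnx : ((n : ℂ) * x).im = n * y := by simp [hxi]
    rw [hnx] at he2
    rw [hxi] at he
    have b1 : ‖e‖ ≤ (24 * r + 4 * a) / y1 ^ 2 / n := by
      refine he.trans ?_
      rw [div_div, mul_comm (n : ℝ)]
      gcongr; exact hy.1
    have b1' : ‖e‖ ≤ 1 := by
      refine he.trans (le_trans ?_ hn3)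
      gcongr; exact hy.1
    have b2 : ‖e2‖ ≤ K / y1 / n := by
      refine he2.trans ?_
      rw [div_div, mul_comm (n : ℝ)]
      gcongr; exact hy.1
    have b3 : ‖exp e - 1‖ ≤ 2 * ‖e‖ := Complex.norm_exp_sub_one_le b1'
    refine ⟨exp e * (1 + e2) - 1, ?_, ?_⟩
    · have : exp e * (1 + e2) - 1 = (exp e - 1) + (exp e - 1) * e2 + e2 := by ring
      rw [this]
      refine (norm_add₃_le).trans ?_
      rw [norm_mul]
      have k1 : ‖exp e - 1‖ * ‖e2‖ ≤ 2 * ‖e2‖ := by gcongr; linarith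
      have k2 : (2 * (24 * r + 4 * a) / y1 ^ 2 + 3 * (K / y1)) / n = 2 * ((24 * r + 4 * a) / y1 ^ 2 / n) + 3 * (K / y1 / n) := by ring
      rw [k2]
      linarith
    · rw [hcf, hkk]
      have hM : (((12 * r * n - 2 * a * n - a : ℝ) * Real.log n : ℝ) : ℂ) = (Mn a r n : ℂ) := rfl
      rw [hM]
      have hPh : (n : ℂ) * Ph a r x = n * Phf a r x + 2 * Real.pi * I * (n * x) := by unfold Ph; ring
      rw [hPh, Complex.exp_add, Complex.exp_add, Complex.exp_add, Complex.exp_add, Complex.exp_neg]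
      have hm0 := Complex.exp_ne_zero (Mn a r n : ℂ)
      field_simp
      ring
  · intro n hn
    obtain ⟨hn0, hn2, hn3⟩ := hbig n hn
    obtain ⟨-, hcont⟩ := int_full a r n ha hc hn0
    refine ContinuousOn.mul continuousOn_const ?_
    simp only [n_cnn c n hn0]
    exact (hcont.comp (by fun_prop : Continuous fun y : ℝ => (n : ℝ) * y)).continuousOn

end Z18
end SecP8

section SecP9
namespace Z18
open Complex MeasureTheory Filter Topology Set

structure Par (a r : ℕ) : Prop where
  hr : 100 ≤ r
  h1 : 100 * r ≤ a
  h2 : 100 * (a + 3) ≤ r ^ 2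
  h3 : (4 * r + 2 : ℝ) * Real.exp (-((a + 3) / (3 * (r + 1)))) * (a + 3) ≤ 1 / 100

lemma par_exists : ∃ A : ℕ, ∀ a : ℕ, A ≤ a → ∀ r : ℕ,
    r = ⌊(a : ℝ) * Real.exp (-Real.sqrt (Real.log a))⌋₊ → Par a r := by
  have ht : Tendsto (fun a : ℕ => Real.sqrt (Real.log a)) atTop atTop :=
    Real.tendsto_sqrt_atTop.comp (Real.tendsto_log_atTop.comp tendsto_natCast_atTop_atTop)
  obtain ⟨A, hA⟩ := eventually_atTop.1 ((ht.eventually_ge_atTop 1000).and (eventually_ge_atTop 3))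
  refine ⟨A, fun a ha r hr => ?_⟩
  obtain ⟨hL, ha3⟩ := hA a ha
  set L := Real.sqrt (Real.log a) with hLd
  have ha3' : (3 : ℝ) ≤ a := by exact_mod_cast ha3
  have hlog : Real.log a = L ^ 2 := by
    rw [hLd, Real.sq_sqrt (Real.log_nonneg (by linarith))]
  have haL : (a : ℝ) = Real.exp (L ^ 2) := by rw [← hlog, Real.exp_log (by linarith)]
  have hE4 : L ^ 4 / 24 ≤ Real.exp L := by
    have := Real.pow_div_factorial_le_exp L (by linarith) 4
    simpa [Nat.factorial] using this
  have hE : 1000 ≤ Real.exp L := by linarith [Real.add_one_le_exp L]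
  set y := (a : ℝ) * Real.exp (-L) with hy
  have hya : y * Real.exp L = a := by rw [hy, mul_assoc, ← Real.exp_add]; simp
  have hyE : y = Real.exp (L ^ 2 - L) := by rw [hy, haL, ← Real.exp_add]; ring_nf
  have hy3 : 1000 * Real.exp L ≤ y := by
    rw [hyE]
    calc 1000 * Real.exp L ≤ Real.exp L * Real.exp L := by gcongr
      _ = Real.exp (L + L) := by rw [Real.exp_add]
      _ ≤ _ := by apply Real.exp_le_exp.2; nlinarith
  have hyb : 1000000 ≤ y := by linarith
  have hr1 : (r : ℝ) ≤ y := by rw [hr]; exact Nat.floor_le (by linarith)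
  have hr2 : y < r + 1 := by rw [hr]; exact Nat.lt_floor_add_one _
  have hr3 : y ≤ 2 * r := by linarith
  refine ⟨?_, ?_, ?_, ?_⟩
  · have : (100 : ℝ) ≤ r := by linarith
    exact_mod_cast this
  · have : (100 * r : ℝ) ≤ a := by
      rw [← hya]
      nlinarith
    exact_mod_cast this
  · have : (100 * (a + 3) : ℝ) ≤ r ^ 2 := by
      have h1 : (y : ℝ) ^ 2 ≤ 4 * r ^ 2 := by nlinarith
      have h2 : 1000 * (a : ℝ) ≤ y ^ 2 := by
        rw [← hya]
        nlinarith
      linarith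
    exact_mod_cast this
  · have hrpos : (0 : ℝ) < r := by linarith
    have hra : (r : ℝ) ≤ a := by
      rw [← hya]
      nlinarith
    have e1 : 2 * L ^ 2 + 7 ≤ ((a : ℝ) + 3) / (3 * (r + 1)) := by
      rw [le_div_iff₀ (by positivity)]
      have k1 : 3 * ((r : ℝ) + 1) ≤ 6 * y := by linarith
      have k2 : 6 * (2 * L ^ 2 + 7) ≤ Real.exp L := by
        refine le_trans ?_ hE4
        have : 1000000 ≤ L ^ 2 := by nlinarith
        nlinarith
      calc (2 * L ^ 2 + 7) * (3 * (r + 1)) ≤ (2 * L ^ 2 + 7) * (6 * y) := by gcongr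
        _ = y * (6 * (2 * L ^ 2 + 7)) := by ring
        _ ≤ y * Real.exp L := by gcongr
        _ ≤ _ := by rw [hya]; linarith
    have e2 : Real.exp (-((a + 3) / (3 * (r + 1)))) ≤ Real.exp (-(2 * L ^ 2 + 7)) := Real.exp_le_exp.2 (by linarith)
    have e3 : Real.exp (-(2 * L ^ 2 + 7)) = (a : ℝ)⁻¹ ^ 2 * Real.exp (-7) := by
      rw [haL, ← Real.exp_neg, ← Real.exp_nat_mul, ← Real.exp_add]; congr 1; push_cast; ring
    have e4 : Real.exp (-7) ≤ 1 / 1000 := by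
      rw [Real.exp_neg, ← one_div]
      apply one_div_le_one_div_of_le (by norm_num)
      have := Real.exp_one_gt_d9
      calc (1000 : ℝ) ≤ (2.7) ^ 7 := by norm_num
        _ ≤ (Real.exp 1) ^ 7 := by gcongr; linarith
        _ = _ := by rw [← Real.exp_nat_mul]; norm_num
    calc (4 * r + 2 : ℝ) * Real.exp (-((a + 3) / (3 * (r + 1)))) * (a + 3)
        ≤ (5 * a) * ((a : ℝ)⁻¹ ^ 2 * (1 / 1000)) * (2 * a) := by
          gcongr
          · linarith
          · refine e2.trans ?_
            rw [e3]; gcongr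
          · linarith
      _ = 1 / 100 := by field_simp; norm_num

end Z18
end SecP9

section SecP10
namespace Z18
open Complex MeasureTheory Filter Topology Set

noncomputable def Ef (a r : ℕ) (z : ℂ) : ℂ :=
  3 * log (2 * (2 * r + 1) - z) + (a + 3) * (log (2 * r + 1 - 1 - z) - log (2 * r + 1 + 1 - z))

noncomputable def Efd (a r : ℕ) (z : ℂ) : ℂ :=
  -3 * (2 * (2 * r + 1) - z)⁻¹ - (a + 3) * ((2 * r + 1 - 1 - z)⁻¹ - (2 * r + 1 + 1 - z)⁻¹)

lemma re_le_one {z : ℂ} (hz : ‖z‖ ≤ 1) : z.re ≤ 1 := (re_le_norm z).trans hz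

lemma Ef_deriv {a r : ℕ} (hp : Par a r) {z : ℂ} (hz : ‖z‖ ≤ 1) : HasDerivAt (Ef a r) (Efd a r z) z := by
  have h1 := re_le_one hz
  have hr : (100 : ℝ) ≤ r := by exact_mod_cast hp.hr
  have key : ∀ k : ℂ, 0 < (k - z).re → HasDerivAt (fun z => log (k - z)) (-(k - z)⁻¹) z := by
    intro k hk
    have h0 : HasDerivAt (fun z : ℂ => k - z) (-1) z := by simpa using (hasDerivAt_id z).const_sub k
    have := h0.clog (Or.inl hk)
    rw [neg_div, one_div] at this
    exact this
  unfold Ef Efd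
  have d1 := key (2 * (2 * r + 1)) (by simp; linarith)
  have d2 := key (2 * r + 1 - 1) (by simp; linarith)
  have d3 := key (2 * r + 1 + 1) (by simp; linarith)
  refine ((d1.const_mul 3).add ((d2.sub d3).const_mul (a + 3 : ℂ))).congr_deriv ?_
  ring

lemma Efd_bound {a r : ℕ} (hp : Par a r) {z : ℂ} (hz : ‖z‖ ≤ 1) : ‖Efd a r z‖ ≤ 1 / 50 := by
  have h1 := re_le_one hz
  have hr : (100 : ℝ) ≤ r := by exact_mod_cast hp.hr
  have h2 : (100 * (a + 3) : ℝ) ≤ r ^ 2 := by exact_mod_cast hp.h2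
  have b1 : 4 * (r : ℝ) + 1 ≤ ‖(2 * (2 * r + 1) - z : ℂ)‖ := le_trans (by simp; linarith) (re_le_norm _)
  have b2 : 2 * (r : ℝ) - 1 ≤ ‖(2 * r + 1 - 1 - z : ℂ)‖ := le_trans (by simp; linarith) (re_le_norm _)
  have b3 : 2 * (r : ℝ) + 1 ≤ ‖(2 * r + 1 + 1 - z : ℂ)‖ := le_trans (by simp; linarith) (re_le_norm _)
  have n1 : (2 * (2 * r + 1) - z : ℂ) ≠ 0 := by rw [← norm_pos_iff]; linarith
  have n2 : (2 * r + 1 - 1 - z : ℂ) ≠ 0 := by rw [← norm_pos_iff]; linarith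
  have n3 : (2 * r + 1 + 1 - z : ℂ) ≠ 0 := by rw [← norm_pos_iff]; linarith
  have e : Efd a r z = -3 / (2 * (2 * r + 1) - z) - 2 * (a + 3) / ((2 * r + 1 - 1 - z) * (2 * r + 1 + 1 - z)) := by
    unfold Efd
    rw [inv_sub_inv n2 n3]
    have : (2 * r + 1 + 1 - z - (2 * r + 1 - 1 - z) : ℂ) = 2 := by ring
    rw [this]; ring
  rw [e]
  refine (norm_sub_le _ _).trans ?_
  rw [norm_div, norm_div, norm_mul, norm_mul, norm_neg]
  have e3 : ‖(a + 3 : ℂ)‖ = a + 3 := by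
    rw [show (a + 3 : ℂ) = ((a + 3 : ℝ) : ℂ) by push_cast; ring, Complex.norm_of_nonneg (by positivity)]
  rw [e3, show ‖(3 : ℂ)‖ = 3 by simp, show ‖(2 : ℂ)‖ = 2 by simp]
  calc _ ≤ 3 / (4 * (r : ℝ) + 1) + 2 * (a + 3) / ((2 * (r : ℝ) - 1) * (2 * (r : ℝ) + 1)) := by
        have : 0 < 2 * (r : ℝ) - 1 := by linarith
        gcongr
    _ ≤ 1 / 100 + 1 / 100 := by
        apply add_le_add
        · rw [div_le_iff₀ (by positivity)]; linarith
        · rw [div_le_iff₀ (by nlinarith)]; nlinarith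
    _ = _ := by norm_num

lemma Ef_lip {a r : ℕ} (hp : Par a r) {z w : ℂ} (hz : ‖z‖ ≤ 1) (hw : ‖w‖ ≤ 1) :
    ‖Ef a r z - Ef a r w‖ ≤ 1 / 50 * ‖z - w‖ := by
  have := Convex.norm_image_sub_le_of_norm_hasDerivWithin_le (s := Metric.closedBall (0 : ℂ) 1) (f := Ef a r)
    (f' := Efd a r) (C := 1 / 50) (x := w) (y := z)
    (fun x hx => (Ef_deriv hp (by simpa using hx)).hasDerivWithinAt)
    (fun x hx => Efd_bound hp (by simpa using hx)) (convex_closedBall _ _) (by simpa using hw) (by simpa using hz)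
  exact this

/-- real value of E at 0 -/
noncomputable def E0 (a r : ℕ) : ℝ :=
  3 * Real.log (2 * (2 * r + 1)) + (a + 3) * (Real.log (2 * r) - Real.log (2 * r + 2))

lemma Ef_zero (a r : ℕ) : Ef a r 0 = E0 a r := by
  unfold Ef E0
  push_cast
  rw [Complex.ofReal_log (by positivity), Complex.ofReal_log (by positivity), Complex.ofReal_log (by positivity)]
  push_cast
  ring_nf

lemma E0_bound {a r : ℕ} (hp : Par a r) : Real.exp (E0 a r / 3) * (a + 3) ≤ 1 / 100 := by
  refine le_trans ?_ hp.h3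
  have hr : (100 : ℝ) ≤ r := by exact_mod_cast hp.hr
  have hl : Real.log (2 * r) - Real.log (2 * r + 2) ≤ - (1 / (r + 1)) := by
    rw [← Real.log_div (by positivity) (by positivity)]
    refine (Real.log_le_sub_one_of_pos (by positivity)).trans (le_of_eq ?_)
    field_simp; ring
  have : E0 a r / 3 ≤ Real.log (2 * (2 * r + 1)) + -((a + 3) / (3 * (r + 1))) := by
    unfold E0
    have : ((a : ℝ) + 3) * (Real.log (2 * r) - Real.log (2 * r + 2)) ≤ (a + 3) * (- (1 / (r + 1))) := by gcongr
    have e : ((a : ℝ) + 3) / (3 * (r + 1)) = (a + 3) * (1 / (r + 1)) / 3 := by field_simp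
    rw [e]; linarith
  gcongr
  calc Real.exp (E0 a r / 3) ≤ _ := Real.exp_le_exp.2 this
    _ = _ := by rw [Real.exp_add, Real.exp_log (by positivity)]; ring

lemma E0_small {a r : ℕ} (hp : Par a r) : Real.exp (E0 a r / 3) ≤ 1 / 1000000 := by
  have h := E0_bound hp
  have h1 : (100 * r : ℝ) ≤ a := by exact_mod_cast hp.h1
  have hr : (100 : ℝ) ≤ r := by exact_mod_cast hp.hr
  have := Real.exp_pos (E0 a r / 3)
  nlinarith

noncomputable def Tf (a r : ℕ) (z : ℂ) : ℂ := exp ((Ef a r z - Real.pi * I) / 3)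

lemma Tf_norm {a r : ℕ} (hp : Par a r) {z : ℂ} (hz : ‖z‖ ≤ 1) : ‖Tf a r z‖ ≤ 1 / 10000 := by
  unfold Tf
  rw [Complex.norm_exp]
  have h := Ef_lip hp hz (w := 0) (by simp)
  rw [Ef_zero, sub_zero] at h
  have h2 : (Ef a r z).re - E0 a r ≤ 1 / 50 := by
    have := (re_le_norm (Ef a r z - E0 a r))
    rw [sub_re, ofReal_re] at this
    linarith
  have e : ((Ef a r z - Real.pi * I) / 3).re = (Ef a r z).re / 3 := by
    simp
  rw [e]
  calc Real.exp ((Ef a r z).re / 3) ≤ Real.exp (E0 a r / 3 + 1) := Real.exp_le_exp.2 (by linarith)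
    _ = Real.exp (E0 a r / 3) * Real.exp 1 := Real.exp_add _ _
    _ ≤ 1 / 1000000 * 3 := by
      gcongr
      · exact E0_small hp
      · linarith [Real.exp_one_lt_d9]
    _ ≤ _ := by norm_num

lemma Tf_lip {a r : ℕ} (hp : Par a r) {z w : ℂ} (hz : ‖z‖ ≤ 1) (hw : ‖w‖ ≤ 1) :
    ‖Tf a r z - Tf a r w‖ ≤ 1 / 2 * ‖z - w‖ := by
  have := Convex.norm_image_sub_le_of_norm_hasDerivWithin_le (s := Metric.closedBall (0 : ℂ) 1) (f := Tf a r)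
    (f' := fun z => Tf a r z * (Efd a r z / 3)) (C := 1 / 2) (x := w) (y := z)
    (fun x hx => ?_)
    (fun x hx => ?_) (convex_closedBall _ _) (by simpa using hw) (by simpa using hz)
  · exact this
  · exact (((Ef_deriv hp (by simpa using hx)).sub_const _).div_const 3).cexp.hasDerivWithinAt
  · have hx' : ‖x‖ ≤ 1 := by simpa using hx
    rw [norm_mul, norm_div, show ‖(3 : ℂ)‖ = 3 by simp]
    have h1 := Tf_norm hp hx'
    have h2 := Efd_bound hp hx'
    calc _ ≤ (1 / 10000 : ℝ) * ((1 / 50) / 3) := by gcongr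
      _ ≤ _ := by norm_num

lemma exists_fixed {a r : ℕ} (hp : Par a r) : ∃ z : ℂ, ‖z‖ ≤ 1 ∧ Tf a r z = z := by
  have hm : MapsTo (Tf a r) (Metric.closedBall (0 : ℂ) 1) (Metric.closedBall (0 : ℂ) 1) := by
    intro z hz
    have := Tf_norm hp (z := z) (by simpa using hz)
    simp only [Metric.mem_closedBall, dist_zero_right]
    linarith
  have hc : ContractingWith (1 / 2) (hm.restrict (Tf a r) _ _) := by
    refine ⟨by rw [← NNReal.coe_lt_coe]; norm_num, LipschitzWith.of_dist_le_mul fun x y => ?_⟩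
    have := Tf_lip hp (z := x) (w := y) (mem_closedBall_zero_iff.1 x.2) (mem_closedBall_zero_iff.1 y.2)
    rw [Subtype.dist_eq, Subtype.dist_eq, dist_eq_norm, dist_eq_norm]
    simpa using this
  obtain ⟨z, hz, hf, -⟩ := hc.exists_fixedPoint' (Metric.isClosed_closedBall.isComplete) hm (x := 0) (by simp)
    (edist_ne_top _ _)
  exact ⟨z, by simpa using hz, hf⟩

structure Sad (a r : ℕ) (z : ℂ) : Prop where
  small : ‖z‖ ≤ 1 / 10000
  re_pos : 0 < z.re
  im_neg : z.im < 0
  sect : ‖z‖ ≤ 3 * z.re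
  log_eq : log z = (Ef a r z - Real.pi * I) / 3
  ez : ‖Ef a r z - E0 a r‖ ≤ 1 / 50

lemma exists_sad {a r : ℕ} (hp : Par a r) : ∃ z : ℂ, Sad a r z := by
  obtain ⟨z, hz, hf⟩ := exists_fixed hp
  have hpi := Real.pi_gt_three
  have hpi2 := Real.pi_lt_d2
  have hn := Tf_norm hp hz
  rw [hf] at hn
  have ez : ‖Ef a r z - E0 a r‖ ≤ 1 / 50 := by
    have h := Ef_lip hp hz (w := 0) (by simp)
    rw [Ef_zero, sub_zero] at h
    linarith
  have him : |(Ef a r z).im| ≤ 1 / 50 := by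
    have := (abs_im_le_norm (Ef a r z - E0 a r))
    rw [sub_im, ofReal_im, sub_zero] at this
    linarith
  rw [abs_le] at him
  set ζ := (Ef a r z - Real.pi * I) / 3 with hζ
  have hzi : ζ.im = ((Ef a r z).im - Real.pi) / 3 := by simp [hζ]
  have hze : z = exp ζ := hf.symm
  have hsin : Real.sin ζ.im < 0 := Real.sin_neg_of_neg_of_neg_pi_lt (by rw [hzi]; linarith) (by rw [hzi]; linarith)
  have hcos : 1 / 3 ≤ Real.cos ζ.im := by
    refine le_trans ?_ Real.one_sub_sq_div_two_le_cos
    have h1 : -(1.07 : ℝ) ≤ ζ.im := by rw [hzi]; linarith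
    have h2 : ζ.im ≤ 0 := by rw [hzi]; linarith
    nlinarith
  have hre : z.re = Real.exp ζ.re * Real.cos ζ.im := by rw [hze, exp_re]
  have hi : z.im = Real.exp ζ.re * Real.sin ζ.im := by rw [hze, exp_im]
  have hnn : ‖z‖ = Real.exp ζ.re := by rw [hze, Complex.norm_exp]
  have hpos := Real.exp_pos ζ.re
  refine ⟨z, hn, ?_, ?_, ?_, ?_, ez⟩
  · rw [hre]; have : 0 < Real.cos ζ.im := by linarith
    positivity
  · rw [hi]; nlinarith
  · rw [hre, hnn]; nlinarith
  · rw [hze, Complex.log_exp (by rw [hzi]; linarith) (by rw [hzi]; linarith), ← hze]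

end Z18
end SecP10

section SecP11
namespace Z18
open Complex MeasureTheory Filter Topology Set

lemma Phd_z (a r : ℕ) {z : ℂ} (hz : z.im < 0) :
    Phd a r (2 * r + 1 - z) = Ef a r z - 3 * log z - Real.pi * I := by
  have hl : log (-z) = log z + Real.pi * I := by
    have ha := Complex.arg_neg_eq_arg_add_pi_of_im_neg hz
    unfold Complex.log
    rw [norm_neg, ha]; push_cast; ring
  unfold Phd Ef
  have e1 : (2 * r + 1 - z - 1 : ℂ) = 2 * r + 1 - 1 - z := by ring
  have e2 : (2 * r + 1 - z - (2 * r + 1) : ℂ) = -z := by ring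
  have e3 : (2 * r + 1 - z + (2 * r + 1) : ℂ) = 2 * (2 * r + 1) - z := by ring
  have e4 : (2 * r + 1 - z + 1 : ℂ) = 2 * r + 1 + 1 - z := by ring
  rw [e1, e2, e3, e4, hl]
  ring

lemma Phdd_z (a r : ℕ) (z : ℂ) : Phdd a r (2 * r + 1 - z) = 3 * z⁻¹ - Efd a r z := by
  unfold Phdd Efd
  have e1 : (2 * r + 1 - z - 1 : ℂ) = 2 * r + 1 - 1 - z := by ring
  have e2 : (2 * r + 1 - z - (2 * r + 1) : ℂ) = -z := by ring
  have e3 : (2 * r + 1 - z + (2 * r + 1) : ℂ) = 2 * (2 * r + 1) - z := by ring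
  have e4 : (2 * r + 1 - z + 1 : ℂ) = 2 * r + 1 + 1 - z := by ring
  rw [e1, e2, e3, e4, inv_neg]
  ring

lemma xz (r : ℕ) (u y : ℝ) : (((2 * r + 1 - u : ℝ) : ℂ) + y * I) = 2 * r + 1 - (u - y * I) := by
  push_cast; ring

lemma inv_re_line (p y : ℝ) : ((p + y * I : ℂ)⁻¹).re = p / (p ^ 2 + y ^ 2) := by
  rw [inv_re, normSq_apply]; simp; ring

lemma Phdd_re {a r : ℕ} (hp : Par a r) {u y : ℝ} (hu : 0 < u) (hu1 : u ≤ 1) (hy : 0 < y) (hy1 : y ≤ 1) :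
    3 * u / (u ^ 2 + 1) ≤ (Phdd a r ((2 * r + 1 - u : ℝ) + y * I)).re := by
  have hr : (100 : ℝ) ≤ r := by exact_mod_cast hp.hr
  rw [xz, Phdd_z]
  unfold Efd
  have e1 : (2 * r + 1 - 1 - (u - y * I) : ℂ) = (2 * r - u : ℝ) + y * I := by push_cast; ring
  have e2 : (u - y * I : ℂ) = u + (-y : ℝ) * I := by push_cast; ring
  have e3 : (2 * (2 * r + 1) - (u - y * I) : ℂ) = (2 * (2 * r + 1) - u : ℝ) + y * I := by push_cast; ring
  have e4 : (2 * r + 1 + 1 - (u - y * I) : ℂ) = (2 * r + 2 - u : ℝ) + y * I := by push_cast; ring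
  have e5 : (3 : ℂ) = (3 : ℝ) := by norm_num
  have e6 : (a + 3 : ℂ) = (a + 3 : ℝ) := by norm_num
  rw [e1, e3, e4, e2, e6, e5, ← ofReal_neg, sub_re, sub_re, re_ofReal_mul, re_ofReal_mul, re_ofReal_mul, sub_re,
    inv_re_line, inv_re_line, inv_re_line, inv_re_line]
  have k1 : 3 * u / (u ^ 2 + 1) ≤ 3 * (u / (u ^ 2 + (-y) ^ 2)) := by
    rw [← mul_div_assoc]
    gcongr
    nlinarith
  have k2 : 0 ≤ (2 * (2 * r + 1) - u) / ((2 * (2 * r + 1) - u) ^ 2 + y ^ 2) := by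
    apply div_nonneg (by linarith) (by positivity)
  have k3 : (2 * r + 2 - u) / ((2 * r + 2 - u) ^ 2 + y ^ 2) ≤ (2 * r - u) / ((2 * r - u) ^ 2 + y ^ 2) := by
    rw [div_le_div_iff₀ (by positivity) (by positivity)]
    set p := 2 * r - u with hp
    have hp2 : 2 ≤ p := by rw [hp]; linarith
    rw [show 2 * r + 2 - u = p + 2 by rw [hp]; ring]
    nlinarith
  have k4 : 0 ≤ ((a : ℝ) + 3) * ((2 * r - u) / ((2 * r - u) ^ 2 + y ^ 2) - (2 * r + 2 - u) / ((2 * r + 2 - u) ^ 2 + y ^ 2)) :=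
    mul_nonneg (by positivity) (by linarith)
  linarith

lemma hasDeriv_line {F F' : ℂ → ℂ} {c y : ℝ} (h : HasDerivAt F (F' (c + y * I)) (c + y * I)) :
    HasDerivAt (fun y : ℝ => F (c + y * I)) (F' (c + y * I) * I) y := by
  have h0 : HasDerivAt (fun y : ℝ => (c : ℂ) + y * I) I y := by
    simpa using ((Complex.ofRealCLM.hasDerivAt (x := y)).mul_const I).const_add (c : ℂ)
  exact h.comp y h0

lemma hasDeriv_re {F : ℝ → ℂ} {F' : ℂ} {y : ℝ} (h : HasDerivAt F F' y) : HasDerivAt (fun y => (F y).re) F'.re y :=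
  (Complex.reCLM.hasFDerivAt.comp_hasDerivAt y h)

lemma hasDeriv_im {F : ℝ → ℂ} {F' : ℂ} {y : ℝ} (h : HasDerivAt F F' y) : HasDerivAt (fun y => (F y).im) F'.im y :=
  (Complex.imCLM.hasFDerivAt.comp_hasDerivAt y h)

lemma g_deriv (a r : ℕ) (c : ℝ) {y : ℝ} (hy : 0 < y) :
    HasDerivAt (fun y : ℝ => (Ph a r (c + y * I)).re) (-(Phd a r (c + y * I)).im) y := by
  have := hasDeriv_re (hasDeriv_line (Ph_deriv a r (x := c + y * I) (by simpa using hy)))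
  simpa using this

lemma g_deriv2 (a r : ℕ) (c : ℝ) {y : ℝ} (hy : 0 < y) :
    HasDerivAt (fun y : ℝ => -(Phd a r (c + y * I)).im) (-(Phdd a r (c + y * I)).re) y := by
  have := (hasDeriv_im (hasDeriv_line (Phd_deriv a r (x := c + y * I) (by simpa using hy)))).fun_neg
  simpa using this

lemma arg_mono {p q y : ℝ} (hp : 0 < p) (hpq : p ≤ q) (hy : 0 < y) : arg (q + y * I) ≤ arg (p + y * I) := by
  rw [Complex.arg_of_re_nonneg (by simp; linarith), Complex.arg_of_re_nonneg (by simp; linarith)]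
  apply Real.monotone_arcsin
  have h1 : ‖(p + y * I : ℂ)‖ ≤ ‖(q + y * I : ℂ)‖ := by
    rw [Complex.norm_add_mul_I, Complex.norm_add_mul_I]
    apply Real.sqrt_le_sqrt; gcongr
  have h2 : 0 < ‖(p + y * I : ℂ)‖ := by
    rw [Complex.norm_add_mul_I]; positivity
  simp only [add_im, ofReal_im, mul_im, ofReal_re, I_im, I_re]
  simp only [mul_one, mul_zero, add_zero, zero_add]
  gcongr

lemma gd_neg {a r : ℕ} (hp : Par a r) {u y : ℝ} (hu : 0 < u) (hu1 : u ≤ 1 / 2) (hy : 1 ≤ y) :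
    -(Phd a r ((2 * r + 1 - u : ℝ) + y * I)).im ≤ 0 := by
  have hr : (100 : ℝ) ≤ r := by exact_mod_cast hp.hr
  rw [xz, Phd_z a r (by simp; linarith)]
  unfold Ef
  have e1 : (2 * r + 1 - 1 - (u - y * I) : ℂ) = (2 * r - u : ℝ) + y * I := by push_cast; ring
  have e3 : (2 * (2 * r + 1) - (u - y * I) : ℂ) = (2 * (2 * r + 1) - u : ℝ) + y * I := by push_cast; ring
  have e4 : (2 * r + 1 + 1 - (u - y * I) : ℂ) = (2 * r + 2 - u : ℝ) + y * I := by push_cast; ring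
  rw [e1, e3, e4]
  have a1 := arg_mono (p := 2 * r - u) (q := 2 * r + 2 - u) (y := y) (by linarith) (by linarith) (by linarith)
  have a2 : 0 ≤ arg ((2 * (2 * r + 1) - u : ℝ) + y * I) := by rw [Complex.arg_nonneg_iff]; simp; linarith
  have a3 : arg (u - y * I) ≤ -(Real.pi / 3) := by
    rw [Complex.arg_of_re_nonneg (by simp; linarith)]
    have : -(Real.pi / 3) = Real.arcsin (- (Real.sqrt 3 / 2)) := by
      rw [← Real.sin_pi_div_three, Real.arcsin_neg, Real.arcsin_sin] <;> linarith [Real.pi_pos]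
    rw [this]
    apply Real.monotone_arcsin
    have hn : ‖(u - y * I : ℂ)‖ = Real.sqrt (u ^ 2 + y ^ 2) := by
      have := Complex.norm_add_mul_I u (-y)
      push_cast at this
      rw [show (u - y * I : ℂ) = u + -y * I by ring, this]; simp
    rw [hn]
    have : (u - y * I : ℂ).im = -y := by simp
    rw [this, neg_div, neg_le_neg_iff, div_le_div_iff₀ (by norm_num) (by positivity), ← Real.sqrt_mul (by norm_num)]
    apply Real.sqrt_le_iff.2
    constructor
    · positivity
    · nlinarith
  have e5 : (3 * log ((2 * (2 * r + 1) - u : ℝ) + y * I) + (a + 3) * (log ((2 * r - u : ℝ) + y * I) - log ((2 * r + 2 - u : ℝ) + y * I))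
     - 3 * log (u - y * I) - Real.pi * I).im = 3 * arg ((2 * (2 * r + 1) - u : ℝ) + y * I) +
      (a + 3) * (arg ((2 * r - u : ℝ) + y * I) - arg ((2 * r + 2 - u : ℝ) + y * I)) - 3 * arg (u - y * I) - Real.pi := by
    have : (a + 3 : ℂ) = ((a + 3 : ℝ) : ℂ) := by push_cast; ring
    rw [this]
    simp only [sub_im, add_im, log_im, mul_im]
    simp
  rw [e5]
  have : 0 ≤ ((a : ℝ) + 3) * (arg ((2 * r - u : ℝ) + y * I) - arg ((2 * r + 2 - u : ℝ) + y * I)) := by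
    apply mul_nonneg (by positivity); linarith
  linarith

lemma max_concave {g g' g'' : ℝ → ℝ} {m y0 : ℝ} (h1 : ∀ y ∈ Ioc (0 : ℝ) 1, HasDerivAt g (g' y) y)
    (h2 : ∀ y ∈ Ioc (0 : ℝ) 1, HasDerivAt g' (g'' y) y) (h3 : ∀ y ∈ Ioc (0 : ℝ) 1, g'' y ≤ -m) (hy0 : y0 ∈ Ioc (0 : ℝ) 1)
    (h0 : g' y0 = 0) : ∀ y ∈ Ioc (0 : ℝ) 1, g y ≤ g y0 - m / 2 * (y - y0) ^ 2 := by
  set k : ℝ → ℝ := fun y => g' y + m * (y - y0) with hk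
  have hkd : ∀ y ∈ Ioc (0 : ℝ) 1, HasDerivAt k (g'' y + m) y := by
    intro y hy
    have : HasDerivAt (fun y : ℝ => m * (y - y0)) m y := by
      simpa using ((hasDerivAt_id y).sub_const y0).const_mul m
    exact (h2 y hy).add this
  have hanti : AntitoneOn k (Ioc 0 1) := by
    apply antitoneOn_of_deriv_nonpos (convex_Ioc 0 1) (fun y hy => (hkd y hy).continuousAt.continuousWithinAt)
      (fun y hy => (hkd y (interior_subset hy)).differentiableAt.differentiableWithinAt)
    intro y hy
    rw [(hkd y (interior_subset hy)).deriv]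
    linarith [h3 y (interior_subset hy)]
  have hk0 : k y0 = 0 := by simp [hk, h0]
  set l : ℝ → ℝ := fun y => g y + m / 2 * (y - y0) ^ 2 with hl
  have hld : ∀ y ∈ Ioc (0 : ℝ) 1, HasDerivAt l (k y) y := by
    intro y hy
    have : HasDerivAt (fun y : ℝ => m / 2 * (y - y0) ^ 2) (m * (y - y0)) y := by
      refine ((((hasDerivAt_id y).sub_const y0).pow 2).const_mul (m / 2)).congr_deriv ?_
      simp; ring
    exact (h1 y hy).add this
  intro y hy
  suffices l y ≤ l y0 by
    simp only [hl, sub_self] at this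
    linarith
  rcases le_total y y0 with h | h
  · have hsub : Icc y y0 ⊆ Ioc (0 : ℝ) 1 := fun t ht => ⟨hy.1.trans_le ht.1, ht.2.trans hy0.2⟩
    have : MonotoneOn l (Icc y y0) := by
      apply monotoneOn_of_deriv_nonneg (convex_Icc _ _) (fun t ht => (hld t (hsub ht)).continuousAt.continuousWithinAt)
        (fun t ht => (hld t (hsub (interior_subset ht))).differentiableAt.differentiableWithinAt)
      intro t ht
      rw [(hld t (hsub (interior_subset ht))).deriv, ← hk0]
      exact hanti (hsub (interior_subset ht)) hy0 (interior_subset ht).2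
    exact this ⟨le_refl _, h⟩ ⟨h, le_refl _⟩ h
  · have hsub : Icc y0 y ⊆ Ioc (0 : ℝ) 1 := fun t ht => ⟨hy0.1.trans_le ht.1, ht.2.trans hy.2⟩
    have : AntitoneOn l (Icc y0 y) := by
      apply antitoneOn_of_deriv_nonpos (convex_Icc _ _) (fun t ht => (hld t (hsub ht)).continuousAt.continuousWithinAt)
        (fun t ht => (hld t (hsub (interior_subset ht))).differentiableAt.differentiableWithinAt)
      intro t ht
      rw [(hld t (hsub (interior_subset ht))).deriv, ← hk0]
      exact hanti hy0 (hsub (interior_subset ht)) (interior_subset ht).1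
    exact this ⟨le_refl _, h⟩ ⟨h, le_refl _⟩ h

theorem sad_main {a r : ℕ} (hp : Par a r) {z : ℂ} (hs : Sad a r z) :
    3 ≤ 2 * r + 1 - z.re ∧ ((2 * r + 1 - z.re : ℝ) : ℂ) + (-z.im : ℝ) * I = 2 * r + 1 - z ∧ 0 < - z.im ∧
    Phd a r (2 * r + 1 - z) = 0 ∧ 0 < (Phdd a r (2 * r + 1 - z)).re ∧
    ∃ η y2 : ℝ, 0 < η ∧ -z.im < y2 ∧ 12 * r ≤ Real.pi * y2 ∧
    (∀ y ∈ Ioc 0 y2, (Ph a r ((2 * r + 1 - z.re : ℝ) + y * I)).re ≤ (Ph a r (2 * r + 1 - z)).re - η * (y - (-z.im)) ^ 2) := by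
  have hr : (100 : ℝ) ≤ r := by exact_mod_cast hp.hr
  have hu := hs.re_pos
  have hu1 := (re_le_norm z).trans hs.small
  have hv := hs.im_neg
  have hv1 : -z.im ≤ 1 / 10000 := (neg_le_abs _).trans ((abs_im_le_norm z).trans hs.small)
  have e0 : ((2 * r + 1 - z.re : ℝ) : ℂ) + (-z.im : ℝ) * I = 2 * r + 1 - z := by
    rw [xz]; congr 1; apply Complex.ext <;> simp
  have hd0 : Phd a r (2 * r + 1 - z) = 0 := by
    rw [Phd_z a r hv, hs.log_eq]; ring
  set m := 3 * z.re / (z.re ^ 2 + 1) with hm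
  have hm0 : 0 < m := by positivity
  refine ⟨by linarith, e0, by linarith, hd0, ?_, ?_⟩
  · rw [← e0]
    exact lt_of_lt_of_le hm0 (Phdd_re hp hu (by linarith) (by linarith) (by linarith))
  set c := 2 * r + 1 - z.re with hc
  set y0 := -z.im with hy0
  have hy00 : 0 < y0 := by rw [hy0]; linarith
  have step1 := max_concave (m := m) (y0 := y0) (g := fun y : ℝ => (Ph a r (c + y * I)).re) (fun y hy => g_deriv a r c hy.1)
    (fun y hy => g_deriv2 a r c hy.1) (fun y hy => by
      have := Phdd_re hp hu (by linarith) hy.1 hy.2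
      linarith) ⟨by linarith, by linarith⟩ (by rw [e0, hd0]; simp)
  simp only [e0] at step1
  set g0 := (Ph a r (2 * r + 1 - z)).re with hg0
  have step2 : AntitoneOn (fun y : ℝ => (Ph a r (c + y * I)).re) (Ici 1) := by
    have hd : ∀ y ∈ Ici (1 : ℝ), HasDerivAt (fun y : ℝ => (Ph a r (c + y * I)).re) (-(Phd a r (c + y * I)).im) y :=
      fun y hy => g_deriv a r c (by linarith [mem_Ici.1 hy])
    apply antitoneOn_of_deriv_nonpos (convex_Ici _) (fun t ht => (hd t ht).continuousAt.continuousWithinAt)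
        (fun t ht => (hd t (interior_subset ht)).differentiableAt.differentiableWithinAt)
    intro t ht
    rw [(hd t (interior_subset ht)).deriv]
    exact gd_neg hp hu (by linarith) (interior_subset ht)
  refine ⟨m / 2 * (1 - y0) ^ 2 / (12 * r) ^ 2, 12 * r, ?_, ?_, ?_, ?_⟩
  · have : 0 < 1 - y0 := by linarith
    positivity
  · linarith
  · have := Real.pi_gt_three; nlinarith
  intro y hy
  rcases le_total y 1 with h | h
  · refine (step1 y ⟨hy.1, h⟩).trans ?_
    have : m / 2 * (1 - y0) ^ 2 / (12 * r) ^ 2 ≤ m / 2 := by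
      rw [div_le_iff₀ (by positivity)]
      have : (1 - y0) ^ 2 ≤ (12 * (r : ℝ)) ^ 2 := by
        apply pow_le_pow_left₀ <;> linarith
      gcongr
    gcongr
  · have h1 := step2 (mem_Ici.2 (le_refl 1)) (mem_Ici.2 h) h
    have h2 := step1 1 ⟨by norm_num, le_refl _⟩
    have h3 : m / 2 * (1 - y0) ^ 2 / (12 * r) ^ 2 * (y - y0) ^ 2 ≤ m / 2 * (1 - y0) ^ 2 := by
      rw [div_mul_eq_mul_div, div_le_iff₀ (by positivity)]
      have : (y - y0) ^ 2 ≤ (12 * (r : ℝ)) ^ 2 := by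
        apply pow_le_pow_left₀ <;> linarith [hy.2]
      gcongr
    simp only at h1 h2
    linarith

end Z18
end SecP11

section SecP12
namespace Z18
open Complex MeasureTheory Filter Topology Set

lemma Pf_cont_zero : ContinuousAt Pf 0 := by
  have h0 : Pf 0 = 0 := by simp [Pf]
  rw [ContinuousAt, h0, tendsto_zero_iff_norm_tendsto_zero]
  have hb : ∀ w : ℂ, ‖Pf w‖ ≤ |‖w‖ * Real.log ‖w‖| + (Real.pi + 1) * ‖w‖ := by
    intro w
    unfold Pf
    refine (norm_sub_le _ _).trans ?_
    rw [norm_mul]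
    have h1 : ‖log w‖ ≤ |Real.log ‖w‖| + Real.pi := by
      refine (Complex.norm_le_abs_re_add_abs_im _).trans ?_
      rw [log_re, log_im]
      linarith [Complex.abs_arg_le_pi w]
    rw [abs_mul, abs_of_nonneg (norm_nonneg w)]
    nlinarith [norm_nonneg w]
  refine squeeze_zero (fun _ => norm_nonneg _) hb ?_
  have hc : Continuous (fun w : ℂ => |‖w‖ * Real.log ‖w‖| + (Real.pi + 1) * ‖w‖) := by
    have := Real.continuous_mul_log.comp (continuous_norm (E := ℂ))
    exact (this.abs).add (by fun_prop)
  have := hc.tendsto 0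
  simpa using this

lemma Pf_cont_slit {w : ℂ} (hw : w ∈ slitPlane) : ContinuousAt Pf w := by
  unfold Pf
  exact (continuousAt_id.mul (continuousAt_clog hw)).sub continuousAt_id

lemma Ph_cont_rho (a r : ℕ) (hr : 1 ≤ r) : ContinuousAt (Ph a r) (2 * r + 1) := by
  have hr' : (1 : ℝ) ≤ r := by exact_mod_cast hr
  have key : ∀ k : ℂ, ContinuousAt Pf (2 * r + 1 + k) → ContinuousAt (fun x => Pf (x + k)) (2 * r + 1) := by
    intro k hk
    exact ContinuousAt.comp (f := fun x : ℂ => x + k) hk (by fun_prop)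
  have k1 := key (-1) (Pf_cont_slit (Or.inl (by simp; linarith)))
  have k2 := key 1 (Pf_cont_slit (Or.inl (by simp; linarith)))
  have k3 := key (2 * r + 1) (Pf_cont_slit (Or.inl (by simp; linarith)))
  have k4 := key (-(2 * r + 1)) (by rw [add_neg_cancel]; exact Pf_cont_zero)
  simp only [← sub_eq_add_neg] at k1 k4
  unfold Ph Phf
  exact (((continuousAt_const.mul (k1.sub k4)).add (continuousAt_const.mul (k3.sub k2))).sub
    (continuousAt_const.mul (k2.sub k1))).add (by fun_prop)

theorem sad_lt {a r : ℕ} (hp : Par a r) {z : ℂ} (hs : Sad a r z) :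
    (Ph a r (2 * r + 1 - z)).re < (Ph a r (2 * r + 1)).re := by
  have hr : 1 ≤ r := le_trans (by norm_num) hp.hr
  have hz := hs.small
  have hv := hs.im_neg
  have hd : ∀ τ : ℝ, 0 < τ → HasDerivAt (fun τ : ℝ => (Ph a r (2 * r + 1 - τ * z)).re)
      (Phd a r (2 * r + 1 - τ * z) * (-z)).re τ := by
    intro τ hτ
    apply hasDeriv_re
    have h0 : HasDerivAt (fun y : ℝ => (2 * r + 1 : ℂ) - y * z) (-z) τ := by
      simpa using ((Complex.ofRealCLM.hasDerivAt (x := τ)).mul_const z).const_sub (2 * r + 1 : ℂ)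
    have h1 := Ph_deriv a r (x := 2 * r + 1 - τ * z) (by simp; nlinarith)
    exact h1.comp τ h0
  have hanti : StrictAntiOn (fun τ : ℝ => (Ph a r (2 * r + 1 - τ * z)).re) (Icc 0 1) := by
    apply strictAntiOn_of_deriv_neg (convex_Icc _ _)
    · intro τ hτ
      rcases hτ.1.eq_or_lt with h | h
      · subst h
        apply ContinuousAt.continuousWithinAt
        refine Complex.continuous_re.continuousAt.comp ?_
        have := Ph_cont_rho a r hr
        refine ContinuousAt.comp (f := fun τ : ℝ => (2 * r + 1 : ℂ) - τ * z) (g := Ph a r) ?_ (by fun_prop)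
        simpa using this
      · exact (hd τ h).continuousAt.continuousWithinAt
    · intro τ hτ
      rw [interior_Icc] at hτ
      obtain ⟨h0, h1⟩ := hτ
      rw [(hd τ h0).deriv]
      have hτz : ‖(τ : ℂ) * z‖ ≤ 1 := by
        rw [norm_mul, Complex.norm_of_nonneg h0.le]
        nlinarith [norm_nonneg z]
      have hzne : z ≠ 0 := by intro h; rw [h] at hv; simp at hv
      have e1 : Phd a r (2 * r + 1 - τ * z) = -(3 * Real.log τ : ℝ) + (Ef a r (τ * z) - Ef a r z) := by
        rw [Phd_z a r (by simp; nlinarith), Complex.log_ofReal_mul h0 hzne, hs.log_eq]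
        push_cast
        ring
      have hl := Ef_lip hp hτz (w := z) (by linarith)
      have e2 : ‖(τ : ℂ) * z - z‖ = (1 - τ) * ‖z‖ := by
        rw [show (τ : ℂ) * z - z = -(((1 - τ : ℝ) : ℂ) * z) by push_cast; ring, norm_neg, norm_mul,
          Complex.norm_of_nonneg (by linarith)]
      rw [e2] at hl
      have e3 : (Phd a r (2 * r + 1 - τ * z) * (-z)).re = 3 * Real.log τ * z.re + ((Ef a r (τ * z) - Ef a r z) * (-z)).re := by
        rw [e1, add_mul, add_re, ← ofReal_neg, re_ofReal_mul, neg_re]; ring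
      rw [e3]
      have h3 : ((Ef a r (τ * z) - Ef a r z) * (-z)).re ≤ 1 / 50 * ((1 - τ) * ‖z‖) * ‖z‖ := by
        refine (re_le_norm _).trans ?_
        rw [norm_mul, norm_neg]
        gcongr
      have h4 : Real.log τ ≤ τ - 1 := Real.log_le_sub_one_of_pos h0
      have hu := hs.re_pos
      have hsec := hs.sect
      have h5 : 3 * Real.log τ * z.re ≤ 3 * (τ - 1) * z.re := by gcongr
      have h6 : (1 - τ) * (‖z‖ * ‖z‖) ≤ (1 - τ) * z.re := by
        apply mul_le_mul_of_nonneg_left _ (by linarith)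
        nlinarith [norm_nonneg z]
      have h7 : 0 < (1 - τ) * z.re := mul_pos (by linarith) hu
      nlinarith
  have := hanti (⟨le_refl _, zero_le_one⟩ : (0 : ℝ) ∈ Icc (0 : ℝ) 1) (⟨zero_le_one, le_refl _⟩ : (1 : ℝ) ∈ Icc (0 : ℝ) 1) one_pos
  simpa using this

end Z18
end SecP12

section SecP13
namespace Z18
open Complex MeasureTheory Filter Topology Set

lemma abs_arg_le {w : ℂ} (hw : 1 ≤ w.re) : |arg w| ≤ 2 * |w.im| := by
  have hn : 1 ≤ ‖w‖ := hw.trans (re_le_norm w)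
  have h1 : |arg w| ≤ Real.pi / 2 := by rw [Complex.abs_arg_le_pi_div_two_iff]; linarith
  have h2 := Real.mul_abs_le_abs_sin h1
  rw [Complex.sin_arg, abs_div, abs_of_nonneg (norm_nonneg w)] at h2
  have h3 : |w.im| / ‖w‖ ≤ |w.im| := div_le_self (abs_nonneg _) hn
  have hpi := Real.pi_pos
  have h4 : 2 / Real.pi * |arg w| ≤ |w.im| := h2.trans h3
  rw [div_mul_eq_mul_div, div_le_iff₀ hpi] at h4
  have := Real.pi_le_four
  nlinarith [abs_nonneg w.im]

lemma sad_norm {a r : ℕ} (hp : Par a r) {z : ℂ} (hs : Sad a r z) : ‖z‖ * (a + 3) ≤ 1 / 50 := by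
  have hzne : z ≠ 0 := by intro h; have := hs.im_neg; rw [h] at this; simp at this
  have h1 : ‖z‖ = Real.exp ((Ef a r z).re / 3) := by
    have h := congrArg Complex.re hs.log_eq
    rw [log_re] at h
    rw [← Real.exp_log (norm_pos_iff.2 hzne), h]
    simp
  have h2 : (Ef a r z).re ≤ E0 a r + 1 / 50 := by
    have := (re_le_norm (Ef a r z - E0 a r)).trans hs.ez
    rw [sub_re, ofReal_re] at this
    linarith
  have h3 : ‖z‖ ≤ Real.exp (E0 a r / 3) * 2 := by
    rw [h1]
    have h5 : Real.exp (1 / 2) ≤ 2 := by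
      have : Real.exp (1 / 2) ^ 2 ≤ 2 ^ 2 := by
        rw [← Real.exp_nat_mul]; norm_num
        linarith [Real.exp_one_lt_d9]
      exact le_of_sq_le_sq this (by norm_num)
    calc Real.exp ((Ef a r z).re / 3) ≤ Real.exp (E0 a r / 3 + 1 / 2) := Real.exp_le_exp.2 (by linarith)
      _ = Real.exp (E0 a r / 3) * Real.exp (1 / 2) := Real.exp_add _ _
      _ ≤ _ := by gcongr
  have := E0_bound hp
  nlinarith

lemma sad_sin {a r : ℕ} {z : ℂ} (hs : Sad a r z) : ‖z‖ / 2 ≤ -z.im := by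
  have him : |(Ef a r z).im| ≤ 1 / 50 := by
    have := (abs_im_le_norm (Ef a r z - E0 a r)).trans hs.ez
    rwa [sub_im, ofReal_im, sub_zero] at this
  rw [abs_le] at him
  have h : arg z = ((Ef a r z).im - Real.pi) / 3 := by
    have h := congrArg Complex.im hs.log_eq
    rw [log_im] at h
    rw [h]; simp
  have hpi := Real.pi_gt_three
  have h1 := Real.mul_le_sin (x := -arg z) (by rw [h]; linarith) (by rw [h]; linarith)
  rw [Real.sin_neg, Complex.sin_arg] at h1
  have h2 : 1 / 2 ≤ 2 / Real.pi * -arg z := by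
    rw [div_mul_eq_mul_div, le_div_iff₀ (by linarith), h]; linarith
  have hzne : z ≠ 0 := by intro h; have := hs.im_neg; rw [h] at this; simp at this
  have hn := norm_pos_iff.2 hzne
  have h3 := h2.trans h1
  rw [← neg_div, le_div_iff₀ hn] at h3
  linarith

noncomputable def C0 (a r : ℕ) (z : ℂ) : ℂ :=
  4 * Real.pi ^ 3 * I * (exp (lA a r (2 * r + 1 - z)) * (2 * Real.pi / Phdd a r (2 * r + 1 - z)) ^ (1 / 2 : ℂ))

noncomputable def Gf (a r : ℕ) (z : ℂ) : ℂ :=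
  -(a + 3) * (log (2 * r + 1 - 1 - z) + log (2 * r + 1 + 1 - z)) + 3 * log (2 * (2 * r + 1) - z) + Ef a r z

lemma C0_sq {a r : ℕ} (hp : Par a r) {z : ℂ} (hs : Sad a r z) :
    C0 a r z ^ 2 * Phdd a r (2 * r + 1 - z) = -((32 * Real.pi ^ 7 : ℝ) : ℂ) * exp (Gf a r z) := by
  obtain ⟨-, -, -, -, hκ, -⟩ := sad_main hp hs
  set κ := Phdd a r (2 * r + 1 - z) with hκd
  have hκ0 : κ ≠ 0 := by intro h; rw [h] at hκ; simp at hκ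
  have h1 : ((2 * Real.pi / κ : ℂ) ^ (1 / 2 : ℂ)) ^ 2 = 2 * Real.pi / κ := by
    rw [← Complex.cpow_nat_mul]; norm_num
  have hzne : z ≠ 0 := by intro h; have := hs.im_neg; rw [h] at this; simp at this
  have hcube : z ^ 3 = -exp (Ef a r z) := by
    have hz1 : z = exp ((Ef a r z - Real.pi * I) / 3) := by rw [← hs.log_eq, Complex.exp_log hzne]
    have hz2 : z ^ 3 = exp ((Ef a r z - Real.pi * I) / 3) ^ 3 := congrArg (· ^ 3) hz1
    rw [hz2, ← Complex.exp_nat_mul]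
    rw [show ((3 : ℕ) : ℂ) * ((Ef a r z - Real.pi * I) / 3) = Ef a r z - Real.pi * I by push_cast; ring,
      Complex.exp_sub, Complex.exp_pi_mul_I]
    rw [div_neg, div_one]
  have h2 : exp (lA a r (2 * r + 1 - z)) ^ 2 = exp (Gf a r z) := by
    rw [← Complex.exp_nat_mul]
    have e1 : (2 * r + 1 - z - 1 : ℂ) = 2 * r + 1 - 1 - z := by ring
    have e2 : (2 * r + 1 - z - (2 * r + 1) : ℂ) = -z := by ring
    have e3 : (2 * r + 1 - z + (2 * r + 1) : ℂ) = 2 * (2 * r + 1) - z := by ring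
    have e4 : (2 * r + 1 - z + 1 : ℂ) = 2 * r + 1 + 1 - z := by ring
    have e5 : ((2 : ℕ) : ℂ) * lA a r (2 * r + 1 - z) =
      (-(a + 3) * (log (2 * r + 1 - 1 - z) + log (2 * r + 1 + 1 - z)) + 3 * log (2 * (2 * r + 1) - z)) + (3 : ℕ) * log (-z) := by
      unfold lA
      rw [e1, e2, e3, e4]; push_cast; ring
    rw [e5, Gf, Complex.exp_add, Complex.exp_add _ (Ef a r z), Complex.exp_nat_mul, Complex.exp_log (neg_ne_zero.2 hzne)]
    rw [show (-z) ^ 3 = - z ^ 3 by ring, hcube, neg_neg]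
  unfold C0
  rw [mul_pow, mul_pow (exp _), ← hκd, h1, h2, mul_pow, I_sq]
  push_cast
  field_simp
  ring

lemma C0_ne {a r : ℕ} (hp : Par a r) {z : ℂ} (hs : Sad a r z) : C0 a r z ≠ 0 := by
  intro h
  have := C0_sq hp hs
  rw [h] at this
  have hpi := Real.pi_pos.ne'
  simp [hpi, Complex.exp_ne_zero] at this

theorem C0_re {a r : ℕ} (hp : Par a r) {z : ℂ} (hs : Sad a r z) : (C0 a r z).re ≠ 0 := by
  intro h0
  have hsq := C0_sq hp hs
  have hr : (100 : ℝ) ≤ r := by exact_mod_cast hp.hr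
  have h100 : (100 * r : ℝ) ≤ a := by exact_mod_cast hp.h1
  have hpi := Real.pi_pos
  have hsm := hs.small
  have hsn := sad_norm hp hs
  have hzre := re_le_one (hsm.trans (by norm_num))
  have hzim := abs_im_le_norm z
  have hzne : z ≠ 0 := by intro h; have := hs.im_neg; rw [h] at this; simp at this
  have hn := norm_pos_iff.2 hzne
  set t := (C0 a r z).im with ht
  have hC : C0 a r z = t * I := by apply Complex.ext <;> simp [h0, ht]
  rw [hC, mul_pow, I_sq, Phdd_z] at hsq
  set q : ℝ := t ^ 2 / (32 * Real.pi ^ 7) with hq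
  have hG : exp (Gf a r z) = q * (3 * z⁻¹ - Efd a r z) := by
    have : ((32 * Real.pi ^ 7 : ℝ) : ℂ) ≠ 0 := by
      rw [Ne, ofReal_eq_zero]; positivity
    rw [hq, ofReal_div]
    rw [div_mul_eq_mul_div, eq_div_iff this]
    push_cast at hsq ⊢
    linear_combination hsq
  have him : |(Ef a r z).im| ≤ 1 / 50 := by
    have := (abs_im_le_norm (Ef a r z - E0 a r)).trans hs.ez
    rwa [sub_im, ofReal_im, sub_zero] at this
  have hGi : |(Gf a r z).im| ≤ 1 / 4 := by
    have b1 := abs_arg_le (w := 2 * r + 1 - 1 - z) (by simp; linarith)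
    have b2 := abs_arg_le (w := 2 * r + 1 + 1 - z) (by simp; linarith)
    have b3 := abs_arg_le (w := 2 * (2 * r + 1) - z) (by simp; linarith)
    have i1 : (2 * r + 1 - 1 - z : ℂ).im = -z.im := by simp
    have i2 : (2 * r + 1 + 1 - z : ℂ).im = -z.im := by simp
    have i3 : (2 * (2 * r + 1) - z : ℂ).im = -z.im := by simp
    rw [i1, abs_neg] at b1
    rw [i2, abs_neg] at b2
    rw [i3, abs_neg] at b3
    have e : (Gf a r z).im = -((a + 3) * (arg (2 * r + 1 - 1 - z) + arg (2 * r + 1 + 1 - z))) + 3 * arg (2 * (2 * r + 1) - z)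
        + (Ef a r z).im := by
      unfold Gf
      have : (-(a + 3) : ℂ) = ((-(a + 3) : ℝ) : ℂ) := by push_cast; ring
      rw [this, add_im, add_im, im_ofReal_mul, add_im, log_im, log_im, show (3 : ℂ) = (3 : ℝ) by norm_num, im_ofReal_mul, log_im]
      ring
    rw [e]
    have c1 : |arg (2 * r + 1 - 1 - z) + arg (2 * r + 1 + 1 - z)| ≤ 4 * ‖z‖ := by
      refine (abs_add_le _ _).trans ?_; linarith
    have c2 : |-((a + 3) * (arg (2 * r + 1 - 1 - z) + arg (2 * r + 1 + 1 - z)))| ≤ 4 * (1 / 50) := by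
      rw [abs_neg, abs_mul, abs_of_nonneg (by positivity : (0 : ℝ) ≤ a + 3)]
      nlinarith
    have c3 : |3 * arg (2 * (2 * r + 1) - z)| ≤ 1 / 50 := by
      rw [abs_mul, abs_of_nonneg (by norm_num : (0 : ℝ) ≤ 3)]; linarith
    refine (abs_add_three _ _ _).trans ?_
    linarith
  have hre := congrArg Complex.re hG
  have himm := congrArg Complex.im hG
  rw [re_ofReal_mul, exp_re, sub_re] at hre
  rw [im_ofReal_mul, exp_im, sub_im] at himm
  have hq0 : 0 ≤ q := by positivity
  have hk1 := (re_le_norm (-Efd a r z)).trans ((norm_neg _).le.trans (Efd_bound hp (hsm.trans (by norm_num))))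
  have hk2 := (abs_im_le_norm (Efd a r z)).trans (Efd_bound hp (hsm.trans (by norm_num)))
  rw [neg_re] at hk1
  rw [abs_le] at hk2
  have z3 : (3 * z⁻¹).re ≤ 3 * ‖z‖⁻¹ := by
    refine (re_le_norm _).trans ?_
    rw [norm_mul, norm_inv]; simp
  have z4 : 3 / 2 * ‖z‖⁻¹ ≤ (3 * z⁻¹).im := by
    rw [show (3 : ℂ) = (3 : ℝ) by norm_num, im_ofReal_mul, inv_im, normSq_eq_norm_sq]
    have := sad_sin hs
    have : ‖z‖⁻¹ / 2 ≤ -z.im / ‖z‖ ^ 2 := by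
      rw [le_div_iff₀ (by positivity)]
      calc _ = ‖z‖ / 2 := by field_simp
        _ ≤ _ := this
    linarith
  have z5 : 10000 ≤ ‖z‖⁻¹ := by
    rw [le_inv_comm₀ (by norm_num) hn]; linarith
  set Lr := (3 * z⁻¹).re
  set Li := (3 * z⁻¹).im
  have hpe := Real.exp_pos (Gf a r z).re
  have hcos : 1 - (1 / 4) ^ 2 / 2 ≤ Real.cos (Gf a r z).im := by
    refine le_trans ?_ Real.one_sub_sq_div_two_le_cos
    have := sq_le_sq' (by linarith [neg_le_of_abs_le hGi] : -(1 / 4 : ℝ) ≤ _) (le_of_abs_le hGi)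
    linarith
  have hsin : Real.sin (Gf a r z).im ≤ 1 / 4 := by
    refine (le_abs_self _).trans ?_
    have := Real.abs_sin_le_abs (x := (Gf a r z).im)
    linarith
  have f1 : q * (Lr - (Efd a r z).re) ≤ q * (3 * ‖z‖⁻¹ + 1 / 50) := by gcongr; linarith
  have f2 : q * (3 / 2 * ‖z‖⁻¹ - 1 / 50) ≤ q * (Li - (Efd a r z).im) := by gcongr; linarith
  have f3 : q * 10000 ≤ q * ‖z‖⁻¹ := by gcongr
  have f4 : Real.exp (Gf a r z).re * (1 - (1 / 4) ^ 2 / 2) ≤ Real.exp (Gf a r z).re * Real.cos (Gf a r z).im := by gcongr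
  have f5 : Real.exp (Gf a r z).re * Real.sin (Gf a r z).im ≤ Real.exp (Gf a r z).re * (1 / 4) := by gcongr
  nlinarith

end Z18
end SecP13

section SecP14
namespace Z18
open Complex MeasureTheory Filter Topology Set

noncomputable def pR (w : ℝ) : ℝ := w * Real.log w - w

lemma pR_cont : Continuous pR := Real.continuous_mul_log.sub continuous_id

lemma pR_ub {v w : ℝ} (hw : 0 ≤ w) (hv : 0 < v) : pR v - pR w ≤ (v - w) * Real.log v := by
  unfold pR
  rcases hw.eq_or_lt with h | h
  · subst h; simp; linarith
  · have := Real.log_le_sub_one_of_pos (div_pos hv h)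
    rw [Real.log_div hv.ne' h.ne'] at this
    have h2 : w * (Real.log v - Real.log w) ≤ w * (v / w - 1) := by gcongr
    have h3 : w * (v / w - 1) = v - w := by field_simp
    linarith

lemma pR_lb {v w : ℝ} (hw : 0 < w) (hv : 0 ≤ v) : (v - w) * Real.log w ≤ pR v - pR w := by
  have := pR_ub hv hw
  linarith

lemma pR_scale {n w : ℝ} (hn : 0 < n) : n * pR (w / n) = pR w - w * Real.log n := by
  unfold pR
  rcases eq_or_ne w 0 with h | h
  · subst h; simp
  · rw [Real.log_div h hn.ne']; field_simp; ring

lemma pR_nat (k : ℕ) : -1 ≤ pR (k + 1) - pR k ∧ pR (k + 1) - pR k ≤ Real.log (k + 1) := by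
  constructor
  · rcases Nat.eq_zero_or_pos k with h | h
    · subst h; simp [pR]
    · have hk : (1 : ℝ) ≤ k := by exact_mod_cast h
      have := pR_lb (w := k) (v := k + 1) (by linarith) (by linarith)
      have h2 := Real.log_nonneg hk
      linarith
  · have := pR_ub (w := k) (v := k + 1) (by positivity) (by positivity)
    linarith

lemma log_fact (k : ℕ) : pR k ≤ Real.log (k.factorial) ∧ Real.log (k.factorial) ≤ pR k + 2 * Real.log (k + 1) + 1 := by
  induction k with
  | zero => simp [pR]
  | succ k ih =>
    rw [Nat.factorial_succ]
    push_cast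
    have hk : (0 : ℝ) ≤ k := by positivity
    rw [Real.log_mul (by positivity) (by positivity)]
    have h1 := (pR_nat k).2
    refine ⟨by linarith, ?_⟩
    have h2 : (k : ℝ) / (k + 1) ≤ k * (Real.log (k + 1) - Real.log k) := by
      rcases hk.eq_or_lt with h | h
      · rw [← h]; simp
      · have := Real.log_le_sub_one_of_pos (x := k / (k + 1)) (by positivity)
        rw [Real.log_div h.ne' (by positivity)] at this
        have h3 : (k : ℝ) * (1 - k / (k + 1)) ≤ k * (Real.log (k + 1) - Real.log k) :=
          mul_le_mul_of_nonneg_left (by linarith) hk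
        refine le_trans (le_of_eq ?_) h3
        field_simp; ring
    have h4 : 1 / ((k : ℝ) + 2) ≤ Real.log (k + 1 + 1) - Real.log (k + 1) := by
      have := Real.log_le_sub_one_of_pos (x := ((k : ℝ) + 1) / (k + 1 + 1)) (by positivity)
      rw [Real.log_div (by positivity) (by positivity)] at this
      have h3 : ((k : ℝ) + 1) / (k + 1 + 1) - 1 = - (1 / (k + 2)) := by field_simp; ring
      linarith
    have h5 : 1 ≤ (k : ℝ) / (k + 1) + 2 * (1 / (k + 2)) := by
      rw [← sub_nonneg]
      have : (k : ℝ) / (k + 1) + 2 * (1 / (k + 2)) - 1 = k / ((k + 1) * (k + 2)) := by field_simp; ring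
      rw [this]; positivity
    have h6 : pR (k + 1) - pR k = Real.log (k + 1) + k * (Real.log (k + 1) - Real.log k) - 1 := by
      unfold pR; ring
    linarith [ih.2]

lemma poch_fact (k m : ℕ) : poch ((k : ℝ) + 1) m * k.factorial = (k + m).factorial := by
  induction m with
  | zero => simp [poch]
  | succ m ih =>
    have : poch ((k : ℝ) + 1) (m + 1) = poch ((k : ℝ) + 1) m * (k + 1 + m) := by
      unfold poch; rw [Finset.prod_range_succ]
    rw [this, mul_right_comm, ih, ← add_assoc, Nat.factorial_succ]; push_cast; ring

lemma log_poch (k m : ℕ) : 0 < poch ((k : ℝ) + 1) m ∧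
    Real.log (poch ((k : ℝ) + 1) m) = Real.log (k + m).factorial - Real.log k.factorial := by
  have hk : (0 : ℝ) < k.factorial := by positivity
  have hkm : (0 : ℝ) < (k + m).factorial := by positivity
  have h := poch_fact k m
  have : poch ((k : ℝ) + 1) m = (k + m).factorial / k.factorial := by rw [eq_div_iff hk.ne', h]
  rw [this, Real.log_div hkm.ne' hk.ne']
  exact ⟨by positivity, rfl⟩

noncomputable def phi0 (a r : ℕ) (x : ℝ) : ℝ :=
  3 * (pR (x - 1) - pR (x - (2 * r + 1))) + 3 * (pR (x + (2 * r + 1)) - pR (x + 1)) - a * (pR (x + 1) - pR (x - 1))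

noncomputable def phi (a r : ℕ) (x : ℝ) : ℝ := phi0 a r x + 2 * (a - 6 * r) * (Real.log 2 - 1)

lemma phi_cont (a r : ℕ) : Continuous (phi a r) := by
  have := pR_cont
  unfold phi phi0
  fun_prop

lemma abs_log_fact {k T : ℕ} (h : k + 1 ≤ T) : |Real.log (k.factorial) - pR k| ≤ 2 * (Real.log T + 1) := by
  obtain ⟨h1, h2⟩ := log_fact k
  have hT : ((k : ℝ) + 1) ≤ T := by exact_mod_cast h
  have h3 : Real.log ((k : ℝ) + 1) ≤ Real.log T := Real.log_le_log (by positivity) hT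
  rw [abs_le]
  have : 0 ≤ Real.log ((k : ℝ) + 1) := Real.log_nonneg (by linarith [Nat.cast_nonneg (α := ℝ) k])
  constructor <;> linarith

lemma abs_log_fact' {k T : ℕ} (h : k + 1 ≤ T) : |Real.log (k.factorial) - pR (k + 1)| ≤ 3 * (Real.log T + 1) := by
  have h0 := abs_log_fact h
  obtain ⟨h1, h2⟩ := pR_nat k
  have hT : ((k : ℝ) + 1) ≤ T := by exact_mod_cast h
  have h3 : Real.log ((k : ℝ) + 1) ≤ Real.log T := Real.log_le_log (by positivity) hT
  have : 0 ≤ Real.log ((k : ℝ) + 1) := Real.log_nonneg (by linarith [Nat.cast_nonneg (α := ℝ) k])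
  rw [abs_le] at h0 ⊢
  constructor <;> linarith

lemma five_bound {A R Λ x1 x2 x3 x4 x5 : ℝ} (hA : 0 ≤ A) (hR : 0 ≤ R) (hRA : R ≤ A) (hΛ : 0 ≤ Λ)
    (h1 : |x1| ≤ 3 * Λ) (h2 : |x2| ≤ 3 * Λ) (h3 : |x3| ≤ 2 * Λ) (h4 : |x4| ≤ 2 * Λ) (h5 : |x5| ≤ 2 * Λ) :
     |(3 + A) * x1 - 3 * x2 + 3 * x3 - (3 + A) * x4 + R * x5| ≤ (7 * A + 30) * Λ := by
  have k1 : |(3 + A) * x1| ≤ (3 + A) * (3 * Λ) := by rw [abs_mul, abs_of_nonneg (by positivity)]; gcongr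
  have k4 : |(3 + A) * x4| ≤ (3 + A) * (2 * Λ) := by rw [abs_mul, abs_of_nonneg (by positivity)]; gcongr
  have k5 : |R * x5| ≤ R * (2 * Λ) := by rw [abs_mul, abs_of_nonneg hR]; gcongr
  have k6 : R * (2 * Λ) ≤ A * (2 * Λ) := by gcongr
  rw [abs_le] at k1 k4 k5 h2 h3 ⊢
  constructor <;> linarith

/-- the weighted term -/
noncomputable def tm (a r n : ℕ) (t : ℝ) : ℝ := ((2 * n).factorial : ℝ) ^ (a - 6 * r) * Sfun a r n t

theorem tm_log (a r n m : ℕ) (ha : 6 * r ≤ a) (hn : 0 < n) (t : ℕ) (ht : t = (2 * r + 1) * n + 1 + m) :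
    0 < tm a r n t ∧
    |Real.log (tm a r n t) - n * phi a r (t / n)| ≤ (7 * a + 30) * (Real.log (t + (2 * r + 1) * n + 1 : ℕ) + 1) := by
  set T := t + (2 * r + 1) * n + 1 with hT
  have hnr : (0 : ℝ) < n := by exact_mod_cast hn
  have htR : (t : ℝ) = (2 * r + 1) * n + 1 + m := by rw [ht]; push_cast; ring
  have e1 : (t : ℝ) - ((2 * r + 1) * n : ℕ) = (m : ℕ) + 1 := by rw [htR]; push_cast; ring
  have e2 : (t : ℝ) + (n : ℕ) + 1 = ((2 * r * n + m + (2 * n + 1) : ℕ) : ℝ) + 1 := by rw [htR]; push_cast; ring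
  have e3 : (t : ℝ) - (n : ℕ) = ((2 * r * n + m : ℕ) : ℝ) + 1 := by rw [htR]; push_cast; ring
  obtain ⟨p1, l1⟩ := log_poch m (2 * r * n)
  obtain ⟨p2, l2⟩ := log_poch (2 * r * n + m + (2 * n + 1)) (2 * r * n)
  obtain ⟨p3, l3⟩ := log_poch (2 * r * n + m) (2 * n + 1)
  have hf : (0 : ℝ) < (2 * n).factorial := by positivity
  unfold tm Sfun
  rw [e1, e2, e3]
  refine ⟨by positivity, ?_⟩
  rw [Real.log_mul (by positivity) (by positivity), Real.log_div (by positivity) (by positivity),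
    Real.log_mul (by positivity) (by positivity), Real.log_pow, Real.log_pow, Real.log_pow, Real.log_pow, l1, l2, l3]
  rw [Nat.cast_sub ha]
  have hAB : m + 2 * r * n = 2 * r * n + m := by ring
  rw [hAB]
  have bA := abs_log_fact' (k := 2 * r * n + m) (T := T) (by rw [hT, ht]; nlinarith)
  have bB := abs_log_fact' (k := m) (T := T) (by rw [hT, ht]; nlinarith)
  have bD := abs_log_fact (k := 2 * r * n + m + (2 * n + 1)) (T := T) (by rw [hT, ht]; nlinarith)
  have bC := abs_log_fact (k := 2 * r * n + m + (2 * n + 1) + 2 * r * n) (T := T) (by rw [hT, ht]; nlinarith)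
  have bE := abs_log_fact (k := 2 * n) (T := T) (by rw [hT, ht]; nlinarith)
  set lA := Real.log ((2 * r * n + m).factorial)
  set lB := Real.log (m.factorial)
  set lD := Real.log ((2 * r * n + m + (2 * n + 1)).factorial)
  set lC := Real.log ((2 * r * n + m + (2 * n + 1) + 2 * r * n).factorial)
  set lE := Real.log ((2 * n).factorial)
  have cA : ((2 * r * n + m : ℕ) : ℝ) + 1 = t - n := by rw [htR]; push_cast; ring
  have cB : (m : ℝ) + 1 = t - (2 * r + 1) * n := by rw [htR]; ring
  have cD : ((2 * r * n + m + (2 * n + 1) : ℕ) : ℝ) = t + n := by rw [htR]; push_cast; ring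
  have cC : ((2 * r * n + m + (2 * n + 1) + 2 * r * n : ℕ) : ℝ) = t + (2 * r + 1) * n := by rw [htR]; push_cast; ring
  rw [cA] at bA
  rw [cB] at bB
  rw [cC] at bC
  rw [cD] at bD
  have cE : pR ((2 * n : ℕ) : ℝ) = 2 * n * Real.log n + 2 * n * (Real.log 2 - 1) := by
    unfold pR; push_cast; rw [Real.log_mul (by norm_num) hnr.ne']; ring
  rw [cE] at bE
  have s1 := pR_scale (n := n) (w := t - n) hnr
  have s2 := pR_scale (n := n) (w := t - (2 * r + 1) * n) hnr
  have s3 := pR_scale (n := n) (w := t + (2 * r + 1) * n) hnr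
  have s4 := pR_scale (n := n) (w := t + n) hnr
  have d1 : ((t : ℝ) - n) / n = t / n - 1 := by field_simp
  have d2 : ((t : ℝ) - (2 * r + 1) * n) / n = t / n - (2 * r + 1) := by field_simp
  have d3 : ((t : ℝ) + (2 * r + 1) * n) / n = t / n + (2 * r + 1) := by field_simp
  have d4 : ((t : ℝ) + n) / n = t / n + 1 := by field_simp
  rw [d1] at s1
  rw [d2] at s2
  rw [d3] at s3
  rw [d4] at s4
  have hphi : n * phi a r (t / n) = 3 * (pR (t - n) - pR (t - (2 * r + 1) * n)) + 3 * (pR (t + (2 * r + 1) * n) - pR (t + n))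
     - a * (pR (t + n) - pR (t - n)) + (a - 6 * r) * (2 * n * Real.log n + 2 * n * (Real.log 2 - 1)) := by
    unfold phi phi0
    linear_combination (3 + a) * s1 - 3 * s2 + 3 * s3 - (3 + a) * s4
  rw [hphi]
  set Λ := Real.log T + 1
  have hΛ : 0 ≤ Λ := by
    have : 0 ≤ Real.log T := Real.log_natCast_nonneg T
    linarith
  have haR : (0 : ℝ) ≤ a := by positivity
  have hrR : (0 : ℝ) ≤ r := by positivity
  have h6 : (0 : ℝ) ≤ a - 6 * r := by
    have : (6 * r : ℝ) ≤ a := by exact_mod_cast ha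
    linarith
  have := five_bound haR h6 (by linarith) hΛ bA bB bC bD bE
  refine le_trans (le_of_eq ?_) this
  congr 1
  push_cast
  ring

end Z18
end SecP14

section SecP15
namespace Z18
open Complex MeasureTheory Filter Topology Set

lemma phi_ub {a r : ℕ} (hp : Par a r) {x : ℝ} (hx : 2 * r + 1 ≤ x) :
    phi a r x ≤ 6 * r * Real.log 2 + 3 + 2 * (a - 6 * r) * (Real.log 2 - 1) - 2 * (a - 6 * r) * Real.log (x - 1) := by
  have hr : (100 : ℝ) ≤ r := by exact_mod_cast hp.hr
  have b1 := pR_ub (w := x - (2 * r + 1)) (v := x - 1) (by linarith) (by linarith)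
  have b2 := pR_ub (w := x + 1) (v := x + (2 * r + 1)) (by linarith) (by linarith)
  have b3 := pR_lb (w := x - 1) (v := x + 1) (by linarith) (by linarith)
  have h1 : Real.log (x + (2 * r + 1)) ≤ Real.log 2 + Real.log x := by
    rw [← Real.log_mul (by norm_num) (by linarith)]
    exact Real.log_le_log (by linarith) (by linarith)
  have h2 : Real.log x ≤ Real.log (x - 1) + 1 / (2 * r) := by
    have := Real.log_le_sub_one_of_pos (x := x / (x - 1)) (div_pos (by linarith) (by linarith))
    rw [Real.log_div (by linarith) (by linarith)] at this
    have h3 : x / (x - 1) - 1 = 1 / (x - 1) := by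
      have : x - 1 ≠ 0 := by linarith
      field_simp
      ring
    have h4 : 1 / (x - 1) ≤ 1 / (2 * r) := by
      apply one_div_le_one_div_of_le <;> linarith
    linarith
  have h5 : 6 * (r : ℝ) * Real.log (x + (2 * r + 1)) ≤ 6 * r * (Real.log 2 + (Real.log (x - 1) + 1 / (2 * r))) := by
    gcongr; linarith
  have h6 : 6 * (r : ℝ) * (1 / (2 * r)) = 3 := by field_simp; norm_num
  have h7 : (a : ℝ) * (2 * Real.log (x - 1)) ≤ a * (pR (x + 1) - pR (x - 1)) := by
    gcongr; linarith
  unfold phi phi0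
  nlinarith

lemma phi_max {a r : ℕ} (hp : Par a r) : ∃ x1 Lm : ℝ, 2 * (r:ℝ) + 1 ≤ x1 ∧ (∀ x : ℝ, 2 * (r:ℝ) + 1 ≤ x → phi a r x ≤ phi a r x1) ∧
    (∀ x : ℝ, 2 * (r:ℝ) + 1 ≤ x → phi a r x ≤ phi a r x1 + Lm - Real.log x) := by
  have hr : (100 : ℝ) ≤ r := by exact_mod_cast hp.hr
  have h1 : (100 * r : ℝ) ≤ a := by exact_mod_cast hp.h1
  set ρ : ℝ := 2 * r + 1 with hρ
  set Lm : ℝ := 6 * r * Real.log 2 + 3 + 2 * (a - 6 * r) * (Real.log 2 - 1) + Real.log 2 - phi a r ρ with hLm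
  have key : ∀ x, ρ ≤ x → phi a r x ≤ phi a r ρ + Lm - Real.log x := by
    intro x hx
    have h2 := phi_ub hp hx
    have h3 : Real.log x - Real.log 2 ≤ Real.log (x - 1) := by
      rw [← Real.log_div (by linarith) (by norm_num)]
      apply Real.log_le_log <;> linarith
    have h4 : 0 ≤ Real.log (x - 1) := Real.log_nonneg (by linarith)
    have h5 : Real.log (x - 1) ≤ 2 * (a - 6 * r) * Real.log (x - 1) := by nlinarith
    rw [hLm]; linarith
  obtain ⟨x1, hx1, hmax⟩ := (isCompact_Icc (a := ρ) (b := max ρ (Real.exp Lm))).exists_isMaxOn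
    ⟨ρ, le_refl _, le_max_left _ _⟩ (phi_cont a r).continuousOn
  have hρ1 : phi a r ρ ≤ phi a r x1 := hmax ⟨le_refl _, le_max_left _ _⟩
  refine ⟨x1, Lm, hx1.1, fun x hx => ?_, fun x hx => ?_⟩
  · rcases le_total x (max ρ (Real.exp Lm)) with h | h
    · exact hmax ⟨hx, h⟩
    · have h2 := key x hx
      have h3 : Lm ≤ Real.log x := by
        rw [Real.le_log_iff_exp_le (by linarith)]
        exact (le_max_right _ _).trans h
      linarith
  · linarith [key x hx]

lemma tm_zero (a r n t : ℕ) (h1 : n < t) (h2 : t ≤ (2 * r + 1) * n) : tm a r n t = 0 := by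
  have : poch ((t : ℝ) - ((2 * r + 1) * n : ℕ)) (2 * r * n) = 0 := by
    unfold poch
    apply Finset.prod_eq_zero (i := (2 * r + 1) * n - t)
    · rw [Finset.mem_range]
      have : (2 * r + 1) * n = 2 * r * n + n := by ring
      omega
    · rw [Nat.cast_sub h2]; ring
  unfold tm Sfun
  rw [this]; simp

set_option maxHeartbeats 2000000 in
theorem S_asymp {a r : ℕ} (hp : Par a r) : ∃ x1 : ℝ, 2 * r + 1 ≤ x1 ∧ phi a r (2 * r + 1) ≤ phi a r x1 ∧
    (∀ᶠ n : ℕ in atTop, 0 < S a r n) ∧ Tendsto (fun n : ℕ => Real.log (S a r n) / n) atTop (𝓝 (phi a r x1)) := by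
  obtain ⟨x1, Lm, hx1, hi, hii⟩ := phi_max hp
  have hr : (100 : ℝ) ≤ r := by exact_mod_cast hp.hr
  have ha : 6 * r ≤ a := by have := hp.h1; omega
  refine ⟨x1, hx1, hi _ (le_refl _), ?_⟩
  set C : ℕ := 7 * a + 30 with hC
  set le := phi a r x1 with hle
  have hCr : ((7 : ℝ) * a + 30) = C := by rw [hC]; push_cast; ring
  have hSeq : ∀ n, S a r n = ∑' m : ℕ, tm a r n ((n + 1 + m : ℕ) : ℝ) := by
    intro n
    unfold S tm
    rw [tsum_mul_left]
    push_cast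
    rfl
  have hpos : ∀ n m : ℕ, 0 < n → 0 ≤ tm a r n ((n + 1 + m : ℕ) : ℝ) := by
    intro n m hn
    rcases le_or_gt (n + 1 + m) ((2 * r + 1) * n) with h | h
    · rw [tm_zero a r n _ (by omega) h]
    · obtain ⟨k, hk⟩ := Nat.exists_eq_add_of_lt h
      exact (tm_log a r n k ha hn (n + 1 + m) (by omega)).1.le
  have hub : ∀ n m : ℕ, C + 2 ≤ n → tm a r n ((n + 1 + m : ℕ) : ℝ) ≤
      Real.exp (n * le + (C + 2) * (Real.log n + Lm) + C * Real.log 3 + C) * (1 / ((m : ℝ) + 1) ^ 2) := by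
    intro n m hnC
    have hn : 0 < n := by omega
    have hnr : (0 : ℝ) < n := by exact_mod_cast hn
    have hnC' : (C : ℝ) + 2 ≤ n := by exact_mod_cast hnC
    rcases le_or_gt (n + 1 + m) ((2 * r + 1) * n) with h | h
    · rw [tm_zero a r n _ (by omega) h]; positivity
    · obtain ⟨k, hk⟩ := Nat.exists_eq_add_of_lt h
      obtain ⟨p, hb⟩ := tm_log a r n k ha hn (n + 1 + m) (by omega)
      set t := n + 1 + m with ht
      have htm : (m : ℝ) + 1 ≤ t := by rw [ht]; push_cast; linarith
      have htp : (0 : ℝ) < t := by linarith [Nat.cast_nonneg (α := ℝ) m]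
      have htρ : (2 * r + 1 : ℝ) * n ≤ t := by exact_mod_cast h.le
      have hxρ : (2 * r + 1 : ℝ) ≤ t / n := by rw [le_div_iff₀ hnr]; exact htρ
      have hT : Real.log (t + (2 * r + 1) * n + 1 : ℕ) ≤ Real.log 3 + Real.log t := by
        rw [← Real.log_mul (by norm_num) htp.ne']
        apply Real.log_le_log (by positivity)
        have : t + (2 * r + 1) * n + 1 ≤ 3 * t := by omega
        exact_mod_cast this
      rw [hCr, abs_le] at hb
      have h1 := hi _ hxρ
      have h2 := hii _ hxρ
      have hlogx : Real.log (t / n) = Real.log t - Real.log n := Real.log_div htp.ne' hnr.ne'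
      rw [hlogx] at h2
      have h3 : n * phi a r (t / n) ≤ n * le + (C + 2) * (Real.log n + Lm - Real.log t) := by
        rcases le_total 0 (Real.log n + Lm - Real.log t) with h0 | h0
        · have : (n : ℝ) * phi a r (t / n) ≤ n * le := by gcongr
          have : 0 ≤ ((C : ℝ) + 2) * (Real.log n + Lm - Real.log t) := by positivity
          linarith
        · have : (n : ℝ) * phi a r (t / n) ≤ n * (le + (Real.log n + Lm - Real.log t)) := by gcongr; linarith
          have : (n : ℝ) * (Real.log n + Lm - Real.log t) ≤ (C + 2) * (Real.log n + Lm - Real.log t) :=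
            mul_le_mul_of_nonpos_right hnC' h0
          linarith
      have h4 : (C : ℝ) * Real.log (t + (2 * r + 1) * n + 1 : ℕ) ≤ C * (Real.log 3 + Real.log t) := by gcongr
      have h5 : Real.log (tm a r n t) ≤ (n * le + (C + 2) * (Real.log n + Lm) + C * Real.log 3 + C) + -(2 * Real.log t) := by
        linarith [hb.2]
      rw [Real.log_le_iff_le_exp p, Real.exp_add] at h5
      refine h5.trans ?_
      gcongr
      have : Real.exp (-(2 * Real.log t)) = 1 / (t : ℝ) ^ 2 := by
        rw [Real.exp_neg, ← one_div, mul_comm, Real.exp_mul, Real.exp_log htp]; norm_num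
      rw [this]
      gcongr
  have hsumm : Summable (fun m : ℕ => 1 / ((m : ℝ) + 1) ^ 2) := by
    have := (summable_nat_add_iff 1).2 (Real.summable_one_div_nat_pow.2 (by norm_num : 1 < 2))
    simpa using this
  set Z := ∑' m : ℕ, 1 / ((m : ℝ) + 1) ^ 2 with hZ
  have hZ0 : 0 < Z := hsumm.tsum_pos (fun _ => by positivity) 0 (by norm_num)
  have hS1 : ∀ n : ℕ, C + 2 ≤ n → Summable (fun m : ℕ => tm a r n ((n + 1 + m : ℕ) : ℝ)) := fun n hn =>
    Summable.of_nonneg_of_le (fun m => hpos n m (by omega)) (fun m => hub n m hn) (hsumm.mul_left _)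
  have hSu : ∀ n : ℕ, C + 2 ≤ n → S a r n ≤
      Real.exp (n * le + (C + 2) * (Real.log n + Lm) + C * Real.log 3 + C) * Z := by
    intro n hn
    rw [hSeq, hZ, ← tsum_mul_left]
    exact (hS1 n hn).tsum_le_tsum (fun m => hub n m hn) (hsumm.mul_left _)
  have hx1p : 0 < x1 := by linarith
  set tn : ℕ → ℕ := fun n => ⌊x1 * n⌋₊ + 1 with htn
  have hSl : ∀ n : ℕ, C + 2 ≤ n → 0 < tm a r n (tn n) ∧ tm a r n (tn n) ≤ S a r n ∧
      n * phi a r (tn n / n) - C * (Real.log n + Real.log (3 * (x1 + 1)) + 1) ≤ Real.log (tm a r n (tn n)) := by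
    intro n hn
    have hn0 : 0 < n := by omega
    have hnr : (1 : ℝ) ≤ n := by exact_mod_cast hn0
    have hfl : (2 * r + 1) * n ≤ ⌊x1 * n⌋₊ := by
      apply Nat.le_floor
      push_cast
      gcongr
    have hge : n ≤ (2 * r + 1) * n := by nlinarith
    obtain ⟨k, hk⟩ := Nat.exists_eq_add_of_le hfl
    obtain ⟨p, hb⟩ := tm_log a r n k ha hn0 (tn n) (by simp only [htn]; omega)
    refine ⟨p, ?_, ?_⟩
    · rw [hSeq]
      obtain ⟨j, hj⟩ := Nat.exists_eq_add_of_le (show n + 1 ≤ tn n by simp only [htn]; omega)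
      rw [hj]
      exact (hS1 n hn).le_tsum j (fun m _ => hpos n m hn0)
    · rw [hCr, abs_le] at hb
      have hflo : (tn n : ℝ) ≤ (x1 + 1) * n := by
        simp only [htn]; push_cast
        have := Nat.floor_le (show 0 ≤ x1 * n by positivity)
        linarith
      have hT : Real.log (tn n + (2 * r + 1) * n + 1 : ℕ) ≤ Real.log n + Real.log (3 * (x1 + 1)) := by
        rw [← Real.log_mul (by positivity) (by positivity)]
        apply Real.log_le_log (by positivity)
        have : tn n + (2 * r + 1) * n + 1 ≤ 3 * tn n := by simp only [htn]; omega
        have : ((tn n + (2 * r + 1) * n + 1 : ℕ) : ℝ) ≤ 3 * tn n := by exact_mod_cast this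
        linarith
      have h4 : (C : ℝ) * (Real.log (tn n + (2 * r + 1) * n + 1 : ℕ) + 1) ≤ C * (Real.log n + Real.log (3 * (x1 + 1)) + 1) := by
        gcongr
      linarith [hb.1]
  refine ⟨eventually_atTop.2 ⟨C + 2, fun n hn => lt_of_lt_of_le (hSl n hn).1 (hSl n hn).2.1⟩, ?_⟩
  have hlog : Tendsto (fun n : ℕ => Real.log n / n) atTop (𝓝 0) := by
    have := (Real.isLittleO_log_id_atTop).tendsto_div_nhds_zero.comp (tendsto_natCast_atTop_atTop (R := ℝ))
    exact this
  have hone : Tendsto (fun n : ℕ => (1 : ℝ) / n) atTop (𝓝 0) := tendsto_one_div_atTop_nhds_zero_nat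
  have hup : Tendsto (fun n : ℕ => le + (C + 2) * (Real.log n / n) + ((C + 2) * Lm + C * Real.log 3 + C + Real.log Z) * (1 / n)) atTop (𝓝 le) := by
    have := (tendsto_const_nhds (x := le)).add (hlog.const_mul ((C : ℝ) + 2)) |>.add (hone.const_mul ((C + 2) * Lm + C * Real.log 3 + C + Real.log Z))
    simpa using this
  have htnlim : Tendsto (fun n : ℕ => (tn n : ℝ) / n) atTop (𝓝 x1) := by
    have h1 : Tendsto (fun n : ℕ => x1 + 1 * ((1 : ℝ) / n)) atTop (𝓝 x1) := by
      simpa using (tendsto_const_nhds (x := x1)).add (hone.const_mul 1)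
    refine tendsto_of_tendsto_of_tendsto_of_le_of_le' tendsto_const_nhds h1 ?_ ?_
    · filter_upwards [eventually_gt_atTop 0] with n hn
      have hnr : (0 : ℝ) < n := by exact_mod_cast hn
      rw [le_div_iff₀ hnr]
      simp only [htn]; push_cast
      exact (Nat.lt_floor_add_one _).le
    · filter_upwards [eventually_gt_atTop 0] with n hn
      have hnr : (0 : ℝ) < n := by exact_mod_cast hn
      rw [div_le_iff₀ hnr]
      simp only [htn]; push_cast
      have := Nat.floor_le (show 0 ≤ x1 * n by positivity)
      have e : (x1 + 1 * (1 / n)) * n = x1 * n + 1 := by field_simp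
      linarith
  have hlow : Tendsto (fun n : ℕ => phi a r (tn n / n) - (C * (Real.log n / n) + (C * (Real.log (3 * (x1 + 1)) + 1)) * (1 / n))) atTop (𝓝 le) := by
    have h1 := ((phi_cont a r).tendsto x1).comp htnlim
    have := h1.sub ((hlog.const_mul (C : ℝ)).add (hone.const_mul (C * (Real.log (3 * (x1 + 1)) + 1))))
    simpa using this
  refine tendsto_of_tendsto_of_tendsto_of_le_of_le' hlow hup ?_ ?_
  · filter_upwards [eventually_ge_atTop (C + 2)] with n hn
    have hnr : (0 : ℝ) < n := by exact_mod_cast (by omega : 0 < n)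
    obtain ⟨h1, h2, h3⟩ := hSl n hn
    rw [le_div_iff₀ hnr]
    refine le_trans (le_of_eq ?_) (h3.trans (Real.log_le_log h1 h2))
    field_simp
    ring
  · filter_upwards [eventually_ge_atTop (C + 2)] with n hn
    have hnr : (0 : ℝ) < n := by exact_mod_cast (by omega : 0 < n)
    obtain ⟨h1, h2, h3⟩ := hSl n hn
    rw [div_le_iff₀ hnr]
    have h4 := Real.log_le_log (lt_of_lt_of_le h1 h2) (hSu n hn)
    rw [Real.log_mul (Real.exp_ne_zero _) hZ0.ne', Real.log_exp] at h4
    refine h4.trans (le_of_eq ?_)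
    field_simp
    ring

end Z18
end SecP15

section SecP16
namespace Z18
open Complex MeasureTheory Filter Topology Set

lemma Pf_real {w : ℝ} (hw : 0 ≤ w) : Pf (w : ℂ) = (pR w : ℝ) := by
  unfold Pf pR
  push_cast [Complex.ofReal_log hw]
  rfl

lemma Ph_real {a r : ℕ} {x : ℝ} (hx : 2 * (r : ℝ) + 1 ≤ x) : (Ph a r (x : ℂ)).re = phi0 a r x := by
  have hr : (0 : ℝ) ≤ r := Nat.cast_nonneg r
  have e1 : Pf ((x : ℂ) - 1) = (pR (x - 1) : ℝ) := by rw [← Pf_real (by linarith)]; push_cast; rfl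
  have e2 : Pf ((x : ℂ) + 1) = (pR (x + 1) : ℝ) := by rw [← Pf_real (by linarith)]; push_cast; rfl
  have e3 : Pf ((x : ℂ) - (2 * r + 1)) = (pR (x - (2 * r + 1)) : ℝ) := by rw [← Pf_real (by linarith)]; push_cast; rfl
  have e4 : Pf ((x : ℂ) + (2 * r + 1)) = (pR (x + (2 * r + 1)) : ℝ) := by rw [← Pf_real (by linarith)]; push_cast; rfl
  have : Ph a r (x : ℂ) = (phi0 a r x : ℝ) + ((2 * Real.pi * x : ℝ) : ℂ) * I := by
    unfold Ph Phf phi0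
    rw [e1, e2, e3, e4]; push_cast; ring
  rw [this]; simp

lemma log_div_tendsto : Tendsto (fun n : ℕ => Real.log n / n) atTop (𝓝 0) :=
  (Real.isLittleO_log_id_atTop).tendsto_div_nhds_zero.comp (tendsto_natCast_atTop_atTop (R := ℝ))

lemma B_asymp (a r : ℕ) (ha : 6 * r ≤ a) (g c : ℝ) (hc : 0 < c) :
    Tendsto (fun n : ℕ => Real.log (1 / Real.pi * ((2 * n).factorial : ℝ) ^ (a - 6 * r) * (Real.exp (Mn a r n) * Real.sqrt n * Real.exp (n * g) * c)) / n)
      atTop (𝓝 (g + 2 * (a - 6 * r) * (Real.log 2 - 1))) := by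
  have hpi := Real.pi_pos
  set d : ℝ := (a : ℝ) - 6 * r with hd
  have hd0 : 0 ≤ d := by rw [hd]; have : (6 * r : ℝ) ≤ a := by exact_mod_cast ha
                         linarith
  set K : ℝ := d * 2 + a + 1 with hK
  set K2 : ℝ := d * 2 * (Real.log 3 + 1) + |Real.log c - Real.log Real.pi| with hK2
  have hb : Tendsto (fun n : ℕ => K * (Real.log n / n) + K2 * (1 / (n : ℝ))) atTop (𝓝 0) := by
    simpa using (log_div_tendsto.const_mul K).add ((tendsto_one_div_atTop_nhds_zero_nat (𝕜 := ℝ)).const_mul K2)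
  rw [tendsto_iff_norm_sub_tendsto_zero]
  refine squeeze_zero' (Eventually.of_forall fun n => norm_nonneg _) ?_ hb
  filter_upwards [eventually_gt_atTop 0] with n hn
  have hnr : (0 : ℝ) < n := by exact_mod_cast hn
  have hl : 0 ≤ Real.log n := Real.log_natCast_nonneg n
  have hf := abs_log_fact (k := 2 * n) (T := 2 * n + 1) le_rfl
  have hT : Real.log ((2 * n + 1 : ℕ) : ℝ) ≤ Real.log n + Real.log 3 := by
    rw [← Real.log_mul (by positivity) (by norm_num)]
    apply Real.log_le_log (by positivity)
    push_cast
    have : (1 : ℝ) ≤ n := by exact_mod_cast hn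
    linarith
  have hp : pR ((2 * n : ℕ) : ℝ) = 2 * n * (Real.log 2 + Real.log n) - 2 * n := by
    unfold pR; push_cast; rw [Real.log_mul (by norm_num) hnr.ne']
  have hlog : Real.log (1 / Real.pi * ((2 * n).factorial : ℝ) ^ (a - 6 * r) * (Real.exp (Mn a r n) * Real.sqrt n * Real.exp (n * g) * c))
      = -Real.log Real.pi + d * Real.log ((2 * n).factorial) + (Mn a r n + 1 / 2 * Real.log n + n * g + Real.log c) := by
    have hfp : (0 : ℝ) < (2 * n).factorial := by positivity
    have hsq : 0 < Real.sqrt n := Real.sqrt_pos.2 hnr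
    rw [Real.log_mul (by positivity) (by positivity), Real.log_mul (by positivity) (by positivity),
      Real.log_mul (by positivity) (by positivity), Real.log_mul (by positivity) (by positivity),
      Real.log_mul (by positivity) (by positivity), Real.log_exp, Real.log_exp, Real.log_pow, Real.log_sqrt hnr.le,
      one_div, Real.log_inv, Nat.cast_sub ha]
    push_cast
    rw [hd]; ring
  set F := Real.log ((2 * n).factorial : ℝ) with hF
  have hFb : |F - pR ((2 * n : ℕ) : ℝ)| ≤ 2 * (Real.log n + Real.log 3 + 1) := by linarith
  have key : Real.log (1 / Real.pi * ((2 * n).factorial : ℝ) ^ (a - 6 * r) * (Real.exp (Mn a r n) * Real.sqrt n * Real.exp (n * g) * c)) / n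
      - (g + 2 * d * (Real.log 2 - 1)) = (d * (F - pR ((2 * n : ℕ) : ℝ)) + (1 / 2 - a) * Real.log n + (Real.log c - Real.log Real.pi)) / n := by
    rw [hlog, hp, eq_div_iff hnr.ne', sub_mul, div_mul_cancel₀ _ hnr.ne']
    unfold Mn
    rw [hd]; ring
  rw [key, Real.norm_eq_abs, abs_div, abs_of_pos hnr, div_le_iff₀ hnr]
  have e : (K * (Real.log n / n) + K2 * (1 / (n : ℝ))) * n = K * Real.log n + K2 := by field_simp
  rw [e]
  have b1 : |d * (F - pR ((2 * n : ℕ) : ℝ))| ≤ d * (2 * (Real.log n + Real.log 3 + 1)) := by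
    rw [abs_mul, abs_of_nonneg hd0]; gcongr
  have b2 : |(1 / 2 - (a : ℝ)) * Real.log n| ≤ (a + 1) * Real.log n := by
    rw [abs_mul, abs_of_nonneg hl]
    gcongr
    rw [abs_le]; constructor <;> linarith [Nat.cast_nonneg (α := ℝ) a]
  refine (abs_add_le _ _).trans ?_
  have := abs_add_le (d * (F - pR ((2 * n : ℕ) : ℝ))) ((1 / 2 - a) * Real.log n)
  rw [hK, hK2]
  linarith

lemma re_exp_mul (C : ℂ) (θ : ℝ) : (exp (θ * I) * C).re = ‖C‖ * Real.cos (θ + arg C) := by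
  have h : exp (θ * I) * C = (‖C‖ : ℂ) * exp (((θ + arg C : ℝ) : ℂ) * I) := by
    conv_lhs => rw [← norm_mul_exp_arg_mul_I C]
    push_cast
    rw [add_mul, exp_add]; ring
  rw [h, re_ofReal_mul, exp_ofReal_mul_I_re]

lemma cos_form {P C : ℂ} (hC : C ≠ 0) {M : ℕ → ℝ} {J : ℕ → ℂ}
    (h : Tendsto (fun n : ℕ => (Real.sqrt n : ℂ)⁻¹ * exp (-(M n : ℂ)) * exp (-(n * P)) * J n) atTop (𝓝 C)) :
    ∃ w : ℕ → ℝ, Tendsto w atTop (𝓝 0) ∧ ∀ n : ℕ, 0 < n →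
      (J n).re = Real.exp (M n) * Real.sqrt n * Real.exp (n * P.re) * ‖C‖ * (Real.cos (n * P.im + arg C) + w n) := by
  have hC' : 0 < ‖C‖ := norm_pos_iff.2 hC
  set T : ℕ → ℂ := fun n : ℕ => (Real.sqrt n : ℂ)⁻¹ * exp (-(M n : ℂ)) * exp (-(n * P)) * J n with hT
  refine ⟨fun n => (exp (((n * P.im : ℝ) : ℂ) * I) * (T n - C)).re / ‖C‖, ?_, ?_⟩
  · have h1 : Tendsto (fun n => ‖T n - C‖ / ‖C‖) atTop (𝓝 0) := by
      simpa using (tendsto_iff_norm_sub_tendsto_zero.1 h).div_const ‖C‖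
    refine squeeze_zero_norm (fun n => ?_) h1
    rw [norm_div, norm_norm]
    gcongr
    refine (abs_re_le_norm _).trans ?_
    rw [norm_mul, norm_exp_ofReal_mul_I, one_mul]
  · intro n hn
    have hnr : (0 : ℝ) < n := by exact_mod_cast hn
    have hsq : (Real.sqrt n : ℂ) ≠ 0 := by exact_mod_cast (Real.sqrt_pos.2 hnr).ne'
    have hJ : J n = ((Real.exp (M n) * Real.sqrt n * Real.exp (n * P.re) : ℝ) : ℂ) * (exp (((n * P.im : ℝ) : ℂ) * I) * C + exp (((n * P.im : ℝ) : ℂ) * I) * (T n - C)) := by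
      have e : exp (n * P) = exp ((n * P.re : ℝ) : ℂ) * exp (((n * P.im : ℝ) : ℂ) * I) := by
        rw [← exp_add]; congr 1
        conv_lhs => rw [← re_add_im P]
        push_cast; ring
      have h2 : J n = Real.sqrt n * exp (M n : ℂ) * exp (n * P) * T n := by
        simp only [hT]
        rw [exp_neg, exp_neg]
        field_simp [exp_ne_zero]
      rw [h2, e]; push_cast; ring
    rw [hJ, re_ofReal_mul, add_re, re_exp_mul]
    field_simp

lemma rpow_form {e X : ℝ} {n : ℕ} (he : 0 < e) (hX : 0 < X) (hl : Real.log e ≠ 0) (hn : 0 < n) :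
    X = e ^ ((n : ℝ) * (1 + (Real.log X / n / Real.log e - 1))) := by
  have hnr : (n : ℝ) ≠ 0 := by exact_mod_cast hn.ne'
  rw [Real.rpow_def_of_pos he]
  have : Real.log e * ((n : ℝ) * (1 + (Real.log X / n / Real.log e - 1))) = Real.log X := by
    field_simp; ring
  rw [this, Real.exp_log hX]

lemma eps_bound {a r : ℕ} (hp : Par a r) {x1 : ℝ} (hx : 2 * (r : ℝ) + 1 ≤ x1) :
    Real.exp (phi a r x1) ≤ (2 : ℝ) ^ (6 * (r + 1)) / (r : ℝ) ^ (2 * (a - 6 * r)) ∧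
    (2 : ℝ) ^ (6 * (r + 1)) / (r : ℝ) ^ (2 * (a - 6 * r)) < 1 := by
  have hr : (100 : ℝ) ≤ r := by exact_mod_cast hp.hr
  have h1 : (100 * r : ℝ) ≤ a := by exact_mod_cast hp.h1
  have ha : 6 * r ≤ a := by have := hp.h1; omega
  have hr0 : (0 : ℝ) < r := by linarith
  constructor
  · rw [← Real.le_log_iff_exp_le (by positivity), Real.log_div (by positivity) (by positivity), Real.log_pow, Real.log_pow]
    push_cast [Nat.cast_sub ha]
    have hb := phi_ub hp hx
    have hl : Real.log 2 + Real.log r ≤ Real.log (x1 - 1) := by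
      rw [← Real.log_mul (by norm_num) hr0.ne']
      exact Real.log_le_log (by positivity) (by linarith)
    have h2 : 2 * ((a : ℝ) - 6 * r) * (Real.log 2 + Real.log r) ≤ 2 * (a - 6 * r) * Real.log (x1 - 1) := by
      gcongr; linarith
    have h3 := Real.log_pos (show (1 : ℝ) < 2 by norm_num)
    nlinarith
  · rw [div_lt_one (by positivity)]
    have h2 : (2 : ℝ) ^ (6 * (r + 1)) < 2 ^ (2 * (a - 6 * r)) := by
      apply pow_lt_pow_right₀ (by norm_num)
      have := hp.h1; have := hp.hr; omega
    exact h2.trans_le (pow_le_pow_left₀ (by norm_num) (by linarith) _)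

lemma main_par {a r : ℕ} (hp : Par a r) :
        ∃ εa εa'' ωa φa : ℝ,
          0 < εa'' ∧ εa'' < εa ∧
          εa ≤ (2 : ℝ) ^ (6 * (r + 1)) / (r : ℝ) ^ (2 * (a - 6 * r)) ∧
          (2 : ℝ) ^ (6 * (r + 1)) / (r : ℝ) ^ (2 * (a - 6 * r)) < 1 ∧
          (∀ m : ℤ, φa ≠ Real.pi / 2 + m * Real.pi) ∧
          ∃ u v w : ℕ → ℝ,
            Filter.Tendsto u Filter.atTop (nhds 0) ∧
            Filter.Tendsto v Filter.atTop (nhds 0) ∧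
            Filter.Tendsto w Filter.atTop (nhds 0) ∧
            ∃ N : ℕ, ∀ n : ℕ, N ≤ n →
              |S a r n| = εa ^ ((n : ℝ) * (1 + u n)) ∧
              |Sder a r n| = εa'' ^ ((n : ℝ) * (1 + v n)) *
                |Real.cos ((n : ℝ) * ωa + φa) + w n| := by
  obtain ⟨x1, hx1, hle, hSpos, hSlim⟩ := S_asymp hp
  obtain ⟨z, hs⟩ := exists_sad hp
  obtain ⟨hc, hx0, hy0, hd0, hκ, η, y2, hη, h02, hy2, hdec⟩ := sad_main hp hs
  have hlt := sad_lt hp hs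
  have hr : (100 : ℝ) ≤ r := by exact_mod_cast hp.hr
  have ha : 6 * r + 2 ≤ a := by have := hp.h1; have := hp.hr; omega
  have hIn := In_asymp a r ha hc hy0 (by rw [hx0]; exact hd0) (by rw [hx0]; exact hκ) hη h02 hy2
    (by rw [hx0]; exact hdec)
  rw [hx0] at hIn
  have hCne := C0_ne hp hs
  have hCre := C0_re hp hs
  obtain ⟨w, hw, hJ⟩ := cos_form (C := C0 a r z) hCne hIn
  set c : ℝ := 2 * r + 1 - z.re with hcd
  set P := Ph a r (2 * r + 1 - z) with hP
  set C := C0 a r z with hC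
  have hCn : 0 < ‖C‖ := norm_pos_iff.2 hCne
  obtain ⟨hb1, hb2⟩ := eps_bound hp hx1
  set L1 := phi a r x1 with hL1
  set L2 := P.re + 2 * ((a : ℝ) - 6 * r) * (Real.log 2 - 1) with hL2
  have hL21 : L2 < L1 := by
    have e := Ph_real (a := a) (r := r) (x := 2 * r + 1) le_rfl
    push_cast at e
    rw [e] at hlt
    refine lt_of_lt_of_le ?_ hle
    unfold phi
    rw [hL2]; linarith
  have hL10 : L1 < 0 := by
    have := hb1.trans_lt hb2
    rwa [Real.exp_lt_one_iff] at this
  have hBlim := B_asymp a r (by omega) P.re ‖C‖ hCn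
  set Bn : ℕ → ℝ := fun n : ℕ => 1 / Real.pi * ((2 * n).factorial : ℝ) ^ (a - 6 * r) * (Real.exp (Mn a r n) * Real.sqrt n * Real.exp (n * P.re) * ‖C‖) with hBn
  have hB0 : ∀ n, 0 < n → 0 < Bn n := by
    intro n hn
    have hnr : (0 : ℝ) < n := by exact_mod_cast hn
    have := Real.sqrt_pos.2 hnr
    have := Real.pi_pos
    simp only [hBn]
    positivity
  have hSder : ∀ n, 0 < n → |Sder a r n| = Bn n * |Real.cos (n * P.im + arg C) + w n| := by
    intro n hn
    have hnr : (1 : ℝ) ≤ n := by exact_mod_cast hn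
    have hR := Sder_repr a r n ⌊c * n⌋₊ ha (Nat.le_floor (by nlinarith)) (by
      apply Nat.floor_le_of_le
      push_cast
      gcongr
      rw [hcd]; linarith [hs.re_pos])
    have hR' : Sder a r n = -(1 / Real.pi) * ((2 * n).factorial : ℝ) ^ (a - 6 * r) * (In a r c n).re := hR
    have e : Sder a r n = -(Bn n * (Real.cos (n * P.im + arg C) + w n)) := by
      rw [hR', hJ n hn]; simp only [hBn]; ring
    rw [e, abs_neg, abs_mul, abs_of_pos (hB0 n hn)]
  refine ⟨Real.exp L1, Real.exp L2, P.im, arg C, Real.exp_pos _, Real.exp_lt_exp.2 hL21, hb1, hb2, ?_, ?_⟩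
  · intro m hm
    apply hCre
    rw [← norm_mul_cos_arg C, hm, Real.cos_add_int_mul_pi, Real.cos_pi_div_two]
    simp
  · refine ⟨fun n => Real.log (S a r n) / n / Real.log (Real.exp L1) - 1,
      fun n => Real.log (Bn n) / n / Real.log (Real.exp L2) - 1, w, ?_, ?_, hw, ?_⟩
    · have := (hSlim.div_const L1).sub_const 1
      rw [div_self hL10.ne, sub_self] at this
      simpa only [Real.log_exp] using this
    · have := (hBlim.div_const L2).sub_const 1
      rw [div_self (hL21.trans hL10).ne, sub_self] at this
      simpa only [Real.log_exp] using this
    · obtain ⟨N, hN⟩ := eventually_atTop.1 hSpos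
      refine ⟨max N 1, fun n hn => ?_⟩
      have hn0 : 0 < n := lt_of_lt_of_le (by norm_num) ((le_max_right _ _).trans hn)
      have hSn := hN n ((le_max_left _ _).trans hn)
      constructor
      · rw [abs_of_pos hSn]
        exact rpow_form (Real.exp_pos _) hSn (by rw [Real.log_exp]; exact hL10.ne) hn0
      · rw [hSder n hn0]
        congr 1
        exact rpow_form (Real.exp_pos _) (hB0 n hn0) (by rw [Real.log_exp]; exact (hL21.trans hL10).ne) hn0

end Z18
end SecP16

/-- Asymptotics of |S_n| and |S″_n|: for all sufficiently large odd a, with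
r = ⌊a·exp(−√(log a))⌋, there are ε_a, ε″_a, ω_a, φ_a with
0 < ε″_a < ε_a ≤ 2^{6(r+1)}/r^{2(a−6r)} < 1 and φ_a ≢ π/2 (mod π) such that
|S_n| = ε_a^{n(1+o(1))} and |S″_n| = ε″_a^{n(1+o(1))}·|cos(nω_a+φ_a)+o(1)|. -/
theorem stmt18 :
    ∃ A : ℕ, ∀ a : ℕ, Odd a → A ≤ a →
      ∀ r : ℕ, r = ⌊(a : ℝ) * Real.exp (-Real.sqrt (Real.log a))⌋₊ →
        ∃ εa εa'' ωa φa : ℝ,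
          0 < εa'' ∧ εa'' < εa ∧
          εa ≤ (2 : ℝ) ^ (6 * (r + 1)) / (r : ℝ) ^ (2 * (a - 6 * r)) ∧
          (2 : ℝ) ^ (6 * (r + 1)) / (r : ℝ) ^ (2 * (a - 6 * r)) < 1 ∧
          (∀ m : ℤ, φa ≠ Real.pi / 2 + m * Real.pi) ∧
          ∃ u v w : ℕ → ℝ,
            Filter.Tendsto u Filter.atTop (nhds 0) ∧
            Filter.Tendsto v Filter.atTop (nhds 0) ∧
            Filter.Tendsto w Filter.atTop (nhds 0) ∧
            ∃ N : ℕ, ∀ n : ℕ, N ≤ n →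
              |S a r n| = εa ^ ((n : ℝ) * (1 + u n)) ∧
              |Sder a r n| = εa'' ^ ((n : ℝ) * (1 + v n)) *
                |Real.cos ((n : ℝ) * ωa + φa) + w n| := by
  obtain ⟨A, hA⟩ := Z18.par_exists
  exact ⟨A, fun a _ hAa r hr => Z18.main_par (hA a hAa r hr)⟩
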